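/- arXiv:math/0403438 — 7 statements merged into one kernel-verified Lean document; each statement's English description precedes it below -/
import Mathlib

section
/- Let ℓ : (0,∞) → (0,∞) be slowly varying at ∞ (i.e., for every c > 0, ℓ(ct)/ℓ(t) → 1 as t → ∞), let 0 < α ≤ 1, and set ν̄(y) = y^{-α} ℓ(1/y) for y > 0. Let S : [0,∞) → [0,∞) be a nondecreasing right-continuous function with left limits, and for 0 ≤ s < t and y > 0 let N_y(s,t) be the number of points u ∈ (s,t] with S(u) − S(u−) ≥ y. Assume that for all 0 ≤ s < t one has N_y(s,t)/ν̄(y) → t − s as y ↓ 0. Let φ : [0,∞) → [0,1) be a continuously differentiable, strictly increasing surjection with φ(0) = 0 and φ'(y) > 0 for all y. For x > 0 and t > 0 let Ñ_x(t) be the number of points u ∈ (0,t] with φ(S(u)) − φ(S(u−)) ≥ x. Then for every t > 0, Ñ_x(t)/ν̄(x) → ∫₀^t (φ'(S(u)))^α du as x ↓ 0. -/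
open Filter MeasureTheory Real Set

lemma gc_modulus (G : ℝ → ℝ) (B ε : ℝ) (hε : 0 < ε) (hG : ContinuousOn G (Icc 0 B)) :
    ∃ C : ℝ, 0 ≤ C ∧ ∀ x ∈ Icc 0 B, ∀ y ∈ Icc 0 B, |G x - G y| ≤ ε + C * |x - y| := by
  have huc := isCompact_Icc.uniformContinuousOn_of_continuous hG
  obtain ⟨K, hK⟩ := isCompact_Icc.exists_bound_of_continuousOn hG
  rw [Metric.uniformContinuousOn_iff] at huc
  obtain ⟨δ, hδ, h⟩ := huc ε hε
  refine ⟨2 * |K| / δ, by positivity, fun x hx y hy => ?_⟩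
  by_cases hd : dist x y < δ
  · have := h x hx y hy hd
    rw [Real.dist_eq] at this
    have h2 : 0 ≤ 2 * |K| / δ * |x - y| := by positivity
    linarith
  · rw [Real.dist_eq, not_lt] at hd
    have h1 := hK x hx
    have h2 := hK y hy
    rw [Real.norm_eq_abs] at h1 h2
    have h3 : |G x - G y| ≤ |G x| + |G y| := abs_sub _ _
    have h4 : 2 * |K| ≤ 2 * |K| / δ * |x - y| := by
      rw [div_mul_eq_mul_div, le_div_iff₀ hδ]
      exact mul_le_mul_of_nonneg_left hd (by positivity)
    have := le_abs_self K
    linarith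

lemma gc_leftLim (S : ℝ → ℝ) (hS : MonotoneOn S (Ici 0)) (a u : ℝ) (ha : 0 ≤ a) (hau : a < u) :
    S a ≤ Function.leftLim S u ∧ Function.leftLim S u ≤ S u := by
  have hT : Monotone (fun v => S (max v 0)) := fun v w hvw =>
    hS (mem_Ici.2 (le_max_right _ _)) (mem_Ici.2 (le_max_right _ _)) (max_le_max_right _ hvw)
  have h1 := hT.tendsto_leftLim u
  have he : (fun v => S (max v 0)) =ᶠ[nhdsWithin u (Iio u)] S := by
    have : Ioi a ∈ nhdsWithin u (Iio u) := mem_nhdsWithin_of_mem_nhds (Ioi_mem_nhds hau)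
    filter_upwards [this] with v hv
    rw [max_eq_left (ha.trans (le_of_lt hv))]
  have h2 := h1.congr' he
  have h3 := leftLim_eq_of_tendsto h2
  rw [h3]
  have h4 := hT.le_leftLim hau
  have h5 := hT.leftLim_le (le_refl u)
  simp only [max_eq_left ha, max_eq_left (ha.trans hau.le)] at h4 h5
  exact ⟨h4, h5⟩

lemma gc_mvt (φ φ' : ℝ → ℝ)
    (hφd : ∀ y : ℝ, 0 ≤ y → HasDerivWithinAt φ (φ' y) (Set.Ici 0) y)
    (p q : ℝ) (hp : 0 ≤ p) (hpq : p ≤ q) :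
    ∃ c ∈ Icc p q, φ q - φ p = φ' c * (q - p) := by
  rcases hpq.eq_or_lt with rfl | h
  · exact ⟨p, by simp, by simp⟩
  · obtain ⟨c, hc, h2⟩ := exists_hasDerivAt_eq_slope φ φ' h
      (fun x hx => ((hφd x (hp.trans hx.1)).continuousWithinAt).mono
        (fun y hy => hp.trans hy.1))
      (fun x hx => (hφd x (hp.trans hx.1.le)).hasDerivAt (Ici_mem_nhds (hp.trans_lt hx.1)))
    refine ⟨c, Ioo_subset_Icc_self hc, ?_⟩
    rw [h2]
    have : q - p ≠ 0 := by linarith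
    field_simp

lemma gc_scale (ℓ : ℝ → ℝ)
    (hℓpos : ∀ t : ℝ, 0 < t → 0 < ℓ t)
    (hℓsv : ∀ c : ℝ, 0 < c → Tendsto (fun t : ℝ => ℓ (c * t) / ℓ t) atTop (nhds 1))
    (α : ℝ) (N : ℝ → ℝ) (d : ℝ)
    (hN : Tendsto (fun y => N y / (y ^ (-α) * ℓ (1 / y))) (nhdsWithin 0 (Ioi 0)) (nhds d))
    (M : ℝ) (hM : 0 < M) :
    Tendsto (fun x => N (x / M) / (x ^ (-α) * ℓ (1 / x))) (nhdsWithin 0 (Ioi 0))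
      (nhds (M ^ α * d)) := by
  have h0 : Tendsto (fun x : ℝ => x / M) (nhdsWithin 0 (Ioi 0)) (nhdsWithin 0 (Ioi 0)) := by
    apply tendsto_nhdsWithin_of_tendsto_nhds_of_eventually_within
    · have : Tendsto (fun x : ℝ => x / M) (nhds 0) (nhds (0 / M)) :=
        (continuous_id.div_const M).tendsto 0
      rw [zero_div] at this
      exact this.mono_left nhdsWithin_le_nhds
    · filter_upwards [self_mem_nhdsWithin] with x hx
      exact div_pos hx hM
  have h1 := hN.comp h0
  have h2 := (hℓsv M hM).comp (tendsto_inv_nhdsGT_zero (𝕜 := ℝ))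
  have h3 := (h2.const_mul (M ^ α)).mul h1
  rw [mul_one] at h3
  refine h3.congr' ?_
  filter_upwards [self_mem_nhdsWithin] with x hx
  have hx : 0 < x := hx
  simp only [Function.comp]
  have e1 : 1 / (x / M) = M * x⁻¹ := by field_simp
  have e2 : (x / M) ^ (-α) = x ^ (-α) * M ^ α := by
    rw [Real.div_rpow hx.le hM.le, Real.rpow_neg hM.le]
    field_simp
  rw [e1, e2, one_div]
  have p1 := hℓpos (M * x⁻¹) (by positivity)
  have p2 := hℓpos (x⁻¹) (by positivity)
  have p3 : 0 < x ^ (-α) := Real.rpow_pos_of_pos hx _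
  have p4 : 0 < M ^ α := Real.rpow_pos_of_pos hM _
  generalize ℓ (M * x⁻¹) = A at *
  generalize ℓ x⁻¹ = B at *
  field_simp

lemma gc_finite (ν : ℝ → ℝ) (S L : ℝ → ℝ) (s t : ℝ) (hst : s < t)
    (hN : Tendsto (fun y : ℝ =>
          (Set.ncard {u : ℝ | u ∈ Set.Ioc s t ∧ y ≤ S u - L u} : ℝ) / ν y)
        (nhdsWithin 0 (Set.Ioi 0)) (nhds (t - s))) (y : ℝ) (hy : 0 < y) :
    {u : ℝ | u ∈ Set.Ioc s t ∧ y ≤ S u - L u}.Finite := by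
  have h1 := hN.eventually_ne (sub_pos.2 hst).ne'
  have h2 : Iio y ∈ nhdsWithin (0:ℝ) (Ioi 0) := mem_nhdsWithin_of_mem_nhds (Iio_mem_nhds hy)
  obtain ⟨z, hz, hzy⟩ := (h1.and h2).exists
  have hne : Set.ncard {u : ℝ | u ∈ Set.Ioc s t ∧ z ≤ S u - L u} ≠ 0 := by
    intro h
    apply hz
    rw [h, Nat.cast_zero, zero_div]
  refine (Set.finite_of_ncard_ne_zero hne).subset ?_
  rintro u ⟨hu, hu2⟩
  exact ⟨hu, (le_of_lt hzy).trans hu2⟩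

lemma gc_piece (ℓ : ℝ → ℝ)
    (hℓpos : ∀ t : ℝ, 0 < t → 0 < ℓ t)
    (hℓsv : ∀ c : ℝ, 0 < c → Tendsto (fun t : ℝ => ℓ (c * t) / ℓ t) atTop (nhds 1))
    (α : ℝ) (S L : ℝ → ℝ) (hSmono : MonotoneOn S (Set.Ici 0))
    (hSnonneg : ∀ u : ℝ, 0 ≤ u → 0 ≤ S u)
    (hL : ∀ a u : ℝ, 0 ≤ a → a < u → S a ≤ L u ∧ L u ≤ S u)
    (hN : ∀ s t : ℝ, 0 ≤ s → s < t →
      Tendsto (fun y : ℝ =>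
          (Set.ncard {u : ℝ | u ∈ Set.Ioc s t ∧ y ≤ S u - L u} : ℝ) /
            (y ^ (-α) * ℓ (1 / y)))
        (nhdsWithin 0 (Set.Ioi 0)) (nhds (t - s)))
    (φ φ' : ℝ → ℝ)
    (hφd : ∀ y : ℝ, 0 ≤ y → HasDerivWithinAt φ (φ' y) (Set.Ici 0) y)
    (hφ'cont : ContinuousOn φ' (Set.Ici 0))
    (hφ'pos : ∀ y : ℝ, 0 ≤ y → 0 < φ' y)
    (t ε C : ℝ) (hε : 0 < ε) (hC0 : 0 ≤ C)
    (hC : ∀ x ∈ Icc 0 (S t), ∀ y ∈ Icc 0 (S t), |(φ' x) ^ α - (φ' y) ^ α| ≤ ε + C * |x - y|)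
    (a b : ℝ) (ha : 0 ≤ a) (hab : a < b) (hbt : b ≤ t)
    (hint : IntervalIntegrable (fun u => (φ' (S u)) ^ α) volume a b) :
    (∀ x : ℝ, 0 < x → {u : ℝ | u ∈ Set.Ioc a b ∧ x ≤ φ (S u) - φ (L u)}.Finite) ∧
    ∀ᶠ x in nhdsWithin (0:ℝ) (Ioi 0),
      |(Set.ncard {u : ℝ | u ∈ Set.Ioc a b ∧ x ≤ φ (S u) - φ (L u)} : ℝ) /
            (x ^ (-α) * ℓ (1 / x)) - ∫ u in a..b, (φ' (S u)) ^ α| ≤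
        (b - a) * (2 * ε + C * (S b - S a)) := by
  have hb : 0 ≤ b := ha.trans hab.le
  have hSab : S a ≤ S b := hSmono ha hb hab.le
  have hSbt : S b ≤ S t := hSmono hb (hb.trans hbt) hbt
  have hSa := hSnonneg a ha
  have hcont : ContinuousOn φ' (Icc (S a) (S b)) := hφ'cont.mono fun y hy => hSa.trans hy.1
  obtain ⟨ξ, hξ, hmax⟩ := isCompact_Icc.exists_isMaxOn (nonempty_Icc.2 hSab) hcont
  obtain ⟨ζ, hζ, hmin⟩ := isCompact_Icc.exists_isMinOn (nonempty_Icc.2 hSab) hcont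
  have hM : 0 < φ' ξ := hφ'pos _ (hSa.trans hξ.1)
  have hm : 0 < φ' ζ := hφ'pos _ (hSa.trans hζ.1)
  have key : ∀ u ∈ Ioc a b, φ' ζ * (S u - L u) ≤ φ (S u) - φ (L u) ∧
      φ (S u) - φ (L u) ≤ φ' ξ * (S u - L u) := by
    intro u hu
    obtain ⟨h1, h2⟩ := hL a u ha hu.1
    have h3 : S u ≤ S b := hSmono (ha.trans hu.1.le) hb hu.2
    obtain ⟨c, hc, h⟩ := gc_mvt φ φ' hφd (L u) (S u) (hSa.trans h1) h2
    have hc' : c ∈ Icc (S a) (S b) := ⟨h1.trans hc.1, hc.2.trans h3⟩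
    rw [h]
    exact ⟨mul_le_mul_of_nonneg_right (hmin hc') (by linarith),
      mul_le_mul_of_nonneg_right (hmax hc') (by linarith)⟩
  have sub1 : ∀ x : ℝ, {u : ℝ | u ∈ Set.Ioc a b ∧ x ≤ φ (S u) - φ (L u)} ⊆
      {u : ℝ | u ∈ Set.Ioc a b ∧ x / φ' ξ ≤ S u - L u} := by
    rintro x u ⟨hu, hx⟩
    refine ⟨hu, ?_⟩
    rw [div_le_iff₀' hM]
    exact hx.trans (key u hu).2
  have sub2 : ∀ x : ℝ, {u : ℝ | u ∈ Set.Ioc a b ∧ x / φ' ζ ≤ S u - L u} ⊆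
      {u : ℝ | u ∈ Set.Ioc a b ∧ x ≤ φ (S u) - φ (L u)} := by
    rintro x u ⟨hu, hx⟩
    refine ⟨hu, ?_⟩
    rw [div_le_iff₀' hm] at hx
    exact hx.trans (key u hu).1
  have fin1 : ∀ y : ℝ, 0 < y → {u : ℝ | u ∈ Set.Ioc a b ∧ y ≤ S u - L u}.Finite :=
    gc_finite _ S L a b hab (hN a b ha hab)
  have fin2 : ∀ x : ℝ, 0 < x → {u : ℝ | u ∈ Set.Ioc a b ∧ x ≤ φ (S u) - φ (L u)}.Finite :=
    fun x hx => (fin1 _ (div_pos hx hM)).subset (sub1 x)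
  refine ⟨fin2, ?_⟩
  have t1 := gc_scale ℓ hℓpos hℓsv α _ _ (hN a b ha hab) (φ' ξ) hM
  have t2 := gc_scale ℓ hℓpos hℓsv α _ _ (hN a b ha hab) (φ' ζ) hm
  have hη : 0 < (b - a) * ε := mul_pos (sub_pos.2 hab) hε
  have e1 := t1.eventually_le_const (show φ' ξ ^ α * (b - a) < φ' ξ ^ α * (b - a) + (b - a) * ε by linarith)
  have e2 := t2.eventually_const_le (show φ' ζ ^ α * (b - a) - (b - a) * ε < φ' ζ ^ α * (b - a) by linarith)
  have hdiff : ∀ u ∈ Icc a b, ∀ z ∈ Icc (S a) (S b),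
      |(φ' z) ^ α - (φ' (S u)) ^ α| ≤ ε + C * (S b - S a) := by
    intro u hu z hz
    have h1 : S a ≤ S u := hSmono ha (ha.trans hu.1) hu.1
    have h2 : S u ≤ S b := hSmono (ha.trans hu.1) hb hu.2
    refine (hC z ⟨hSa.trans hz.1, hz.2.trans hSbt⟩ (S u) ⟨hSa.trans h1, h2.trans hSbt⟩).trans ?_
    have : |z - S u| ≤ S b - S a := by
      rw [abs_le]; constructor <;> linarith [hz.1, hz.2]
    have := mul_le_mul_of_nonneg_left this hC0
    linarith
  have i1 : (b - a) * (φ' ξ ^ α - (ε + C * (S b - S a))) ≤ ∫ u in a..b, (φ' (S u)) ^ α := by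
    have := intervalIntegral.integral_mono_on hab.le
      (intervalIntegrable_const (c := φ' ξ ^ α - (ε + C * (S b - S a)))) hint
      (fun u hu => by linarith [(abs_le.1 (hdiff u hu ξ hξ)).2])
    rwa [intervalIntegral.integral_const, smul_eq_mul] at this
  have i2 : ∫ u in a..b, (φ' (S u)) ^ α ≤ (b - a) * (φ' ζ ^ α + (ε + C * (S b - S a))) := by
    have := intervalIntegral.integral_mono_on hab.le hint
      (intervalIntegrable_const (c := φ' ζ ^ α + (ε + C * (S b - S a))))
      (fun u hu => by linarith [(abs_le.1 (hdiff u hu ζ hζ)).1])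
    rwa [intervalIntegral.integral_const, smul_eq_mul] at this
  filter_upwards [e1, e2, self_mem_nhdsWithin] with x h1 h2 hx
  have hx : 0 < x := hx
  have hν : 0 ≤ x ^ (-α) * ℓ (1 / x) :=
    mul_nonneg (Real.rpow_nonneg hx.le _) (hℓpos _ (by positivity)).le
  have c1 : (Set.ncard {u : ℝ | u ∈ Set.Ioc a b ∧ x ≤ φ (S u) - φ (L u)} : ℝ) ≤
      Set.ncard {u : ℝ | u ∈ Set.Ioc a b ∧ x / φ' ξ ≤ S u - L u} := by
    exact_mod_cast Set.ncard_le_ncard (sub1 x) (fin1 _ (div_pos hx hM))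
  have c2 : (Set.ncard {u : ℝ | u ∈ Set.Ioc a b ∧ x / φ' ζ ≤ S u - L u} : ℝ) ≤
      Set.ncard {u : ℝ | u ∈ Set.Ioc a b ∧ x ≤ φ (S u) - φ (L u)} := by
    exact_mod_cast Set.ncard_le_ncard (sub2 x) (fin2 x hx)
  have d1 := (div_le_div_of_nonneg_right c1 hν).trans h1
  have d2 := h2.trans (div_le_div_of_nonneg_right c2 hν)
  rw [abs_le]
  constructor <;> nlinarith

/-- Finite-`t` gap-counting formula: if the jump counts of the nondecreasing
càdlàg function `S` satisfy `N_y(s,t)/ν̄(y) → t-s` as `y ↓ 0` with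
`ν̄(y) = y^{-α} ℓ(1/y)`, `ℓ` slowly varying and `0 < α ≤ 1`, and `φ` is a `C¹`
increasing diffeomorphism of `[0,∞)` onto `[0,1)`, then the number `Ñ_x(t)` of
jumps of `φ ∘ S` on `(0,t]` of size at least `x` satisfies
`Ñ_x(t)/ν̄(x) → ∫₀^t (φ'(S u))^α du` as `x ↓ 0`. -/
theorem gap_count_transformed (ℓ : ℝ → ℝ)
    (hℓpos : ∀ t : ℝ, 0 < t → 0 < ℓ t)
    (hℓsv : ∀ c : ℝ, 0 < c → Tendsto (fun t : ℝ => ℓ (c * t) / ℓ t) atTop (nhds 1))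
    (α : ℝ) (hα0 : 0 < α) (hα1 : α ≤ 1)
    (S : ℝ → ℝ) (hSmono : MonotoneOn S (Set.Ici 0))
    (hSnonneg : ∀ u : ℝ, 0 ≤ u → 0 ≤ S u)
    (hScadlag : ∀ u : ℝ, 0 ≤ u → ContinuousWithinAt S (Set.Ici u) u)
    (hN : ∀ s t : ℝ, 0 ≤ s → s < t →
      Tendsto (fun y : ℝ =>
          (Set.ncard {u : ℝ | u ∈ Set.Ioc s t ∧ y ≤ S u - Function.leftLim S u} : ℝ) /
            (y ^ (-α) * ℓ (1 / y)))
        (nhdsWithin 0 (Set.Ioi 0)) (nhds (t - s)))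
    (φ φ' : ℝ → ℝ)
    (hφ0 : φ 0 = 0)
    (hφ1 : Tendsto φ atTop (nhds 1))
    (hφd : ∀ y : ℝ, 0 ≤ y → HasDerivWithinAt φ (φ' y) (Set.Ici 0) y)
    (hφ'cont : ContinuousOn φ' (Set.Ici 0))
    (hφ'pos : ∀ y : ℝ, 0 ≤ y → 0 < φ' y) :
    ∀ t : ℝ, 0 < t →
      Tendsto (fun x : ℝ =>
          (Set.ncard {u : ℝ | u ∈ Set.Ioc 0 t ∧
              x ≤ φ (S u) - φ (Function.leftLim S u)} : ℝ) /
            (x ^ (-α) * ℓ (1 / x)))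
        (nhdsWithin 0 (Set.Ioi 0))
        (nhds (∫ u in Set.Ioc (0 : ℝ) t, (φ' (S u)) ^ α)) := by
  intro t ht
  have hL : ∀ a u : ℝ, 0 ≤ a → a < u → S a ≤ Function.leftLim S u ∧ Function.leftLim S u ≤ S u :=
    gc_leftLim S hSmono
  have hSt := hSnonneg t ht.le
  have hGc : ContinuousOn (fun y => (φ' y) ^ α) (Icc 0 (S t)) :=
    (hφ'cont.mono fun y hy => hy.1).rpow_const fun y hy => Or.inl (hφ'pos y hy.1).ne'
  -- integrability
  have hint : IntegrableOn (fun u => (φ' (S u)) ^ α) (Ioc 0 t) := by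
    have hT : Monotone (fun v => S (max v 0)) := fun v w hvw =>
      hSmono (mem_Ici.2 (le_max_right _ _)) (mem_Ici.2 (le_max_right _ _)) (max_le_max_right _ hvw)
    have hG : Continuous (fun y => φ' (max y 0)) :=
      hφ'cont.comp_continuous (continuous_id.max continuous_const) fun y => mem_Ici.2 (le_max_right _ _)
    have hmeas : Measurable (fun u => (φ' (max (S (max u 0)) 0)) ^ α) :=
      (hG.measurable.comp hT.measurable).pow_const α
    obtain ⟨K, hK⟩ := isCompact_Icc.exists_bound_of_continuousOn hGc
    have heq : EqOn (fun u => (φ' (max (S (max u 0)) 0)) ^ α) (fun u => (φ' (S u)) ^ α)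
        (Ioc 0 t) := by
      intro u hu
      simp only [max_eq_left hu.1.le, max_eq_left (hSnonneg u hu.1.le)]
    have : IntegrableOn (fun u => (φ' (max (S (max u 0)) 0)) ^ α) (Ioc 0 t) := by
      refine Measure.integrableOn_of_bounded (M := K) (by simp) hmeas.aestronglyMeasurable ?_
      filter_upwards [ae_restrict_mem measurableSet_Ioc] with u hu
      rw [show (φ' (max (S (max u 0)) 0)) ^ α = (φ' (S u)) ^ α from heq hu]
      exact hK (S u) ⟨hSnonneg u hu.1.le, hSmono hu.1.le ht.le hu.2⟩
    exact this.congr_fun heq measurableSet_Ioc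
  have hii : ∀ a b : ℝ, 0 ≤ a → a ≤ b → b ≤ t →
      IntervalIntegrable (fun u => (φ' (S u)) ^ α) volume a b := by
    intro a b ha hab hb
    rw [intervalIntegrable_iff_integrableOn_Ioc_of_le hab]
    exact hint.mono_set (Ioc_subset_Ioc ha hb)
  rw [← intervalIntegral.integral_of_le ht.le, Metric.tendsto_nhds]
  intro e he
  set ε := e / (4 * t) with hεdef
  have hε : 0 < ε := by positivity
  obtain ⟨C, hC0, hC⟩ := gc_modulus _ (S t) ε hε hGc
  have hS0 : S 0 ≤ S t := hSmono (le_refl (0:ℝ)) ht.le ht.le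
  obtain ⟨n, hn⟩ := exists_nat_gt (t * (C * (S t - S 0)) * 4 / e)
  have hn0 : 0 < (n : ℝ) := lt_of_le_of_lt
    (by have := sub_nonneg.2 hS0; positivity) hn
  set h := t / n with hh
  have hhpos : 0 < h := by positivity
  have hnh : (n : ℝ) * h = t := by rw [hh]; field_simp
  have main : ∀ k : ℕ, 1 ≤ k → k ≤ n →
      (∀ x : ℝ, 0 < x → {u : ℝ | u ∈ Set.Ioc 0 (k * h) ∧
        x ≤ φ (S u) - φ (Function.leftLim S u)}.Finite) ∧
      ∀ᶠ x in nhdsWithin (0:ℝ) (Ioi 0),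
      |(Set.ncard {u : ℝ | u ∈ Set.Ioc 0 (k * h) ∧
          x ≤ φ (S u) - φ (Function.leftLim S u)} : ℝ) /
            (x ^ (-α) * ℓ (1 / x)) - ∫ u in (0:ℝ)..(k * h), (φ' (S u)) ^ α| ≤
        h * (2 * k * ε + C * (S (k * h) - S 0)) := by
    intro k hk
    induction k, hk using Nat.le_induction with
    | base =>
      intro h1n
      have h1n' : (1:ℝ) ≤ n := by exact_mod_cast h1n
      have hht : h ≤ t := by rw [← hnh]; nlinarith
      have := gc_piece ℓ hℓpos hℓsv α S _ hSmono hSnonneg hL hN φ φ' hφd hφ'cont hφ'pos t ε C hε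
        hC0 hC 0 h le_rfl hhpos hht (hii 0 h le_rfl hhpos.le hht)
      simpa using this
    | succ k hk ih =>
      intro hkn
      obtain ⟨f1, g1⟩ := ih (by omega)
      have hkn' : (k:ℝ) + 1 ≤ n := by exact_mod_cast hkn
      have hle : ((k:ℝ) + 1) * h ≤ t := by rw [← hnh]; nlinarith
      have hk0 : 0 ≤ (k:ℝ) * h := by positivity
      have hlt : (k:ℝ) * h < ((k:ℝ) + 1) * h := by nlinarith
      obtain ⟨f2, g2⟩ := gc_piece ℓ hℓpos hℓsv α S _ hSmono hSnonneg hL hN φ φ' hφd hφ'cont hφ'pos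
        t ε C hε hC0 hC (k * h) ((k + 1) * h) hk0 hlt hle (hii _ _ hk0 hlt.le hle)
      push_cast
      have hU : ∀ x : ℝ, {u : ℝ | u ∈ Set.Ioc 0 (((k:ℝ) + 1) * h) ∧
          x ≤ φ (S u) - φ (Function.leftLim S u)} =
          {u : ℝ | u ∈ Set.Ioc 0 (k * h) ∧ x ≤ φ (S u) - φ (Function.leftLim S u)} ∪
          {u : ℝ | u ∈ Set.Ioc (k * h) (((k:ℝ) + 1) * h) ∧
            x ≤ φ (S u) - φ (Function.leftLim S u)} := by
        intro x
        ext u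
        have := Ioc_union_Ioc_eq_Ioc hk0 hlt.le
        simp only [mem_union, mem_ofPred_eq, ← this]
        tauto
      constructor
      · intro x hx
        rw [hU]
        exact (f1 x hx).union (f2 x hx)
      · filter_upwards [g1, g2, self_mem_nhdsWithin] with x h1 h2 hx
        have hdis : Disjoint
            {u : ℝ | u ∈ Set.Ioc 0 (k * h) ∧ x ≤ φ (S u) - φ (Function.leftLim S u)}
            {u : ℝ | u ∈ Set.Ioc (k * h) (((k:ℝ) + 1) * h) ∧
              x ≤ φ (S u) - φ (Function.leftLim S u)} := by
          rw [Set.disjoint_left]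
          rintro u ⟨hu, _⟩ ⟨hu', _⟩
          exact absurd hu.2 (not_le.2 hu'.1)
        rw [hU, Set.ncard_union_eq hdis (f1 x hx) (f2 x hx), Nat.cast_add, add_div,
          ← intervalIntegral.integral_add_adjacent_intervals
            (hii 0 (k * h) le_rfl hk0 (hlt.le.trans hle)) (hii _ _ hk0 hlt.le hle),
          add_sub_add_comm]
        refine (abs_add_le _ _).trans ((add_le_add h1 h2).trans (le_of_eq ?_))
        ring
  have hn1 : 1 ≤ n := by exact_mod_cast hn0
  obtain ⟨-, hfin⟩ := main n hn1 le_rfl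
  rw [hnh] at hfin
  filter_upwards [hfin] with x hx
  rw [Real.dist_eq]
  refine hx.trans_lt ?_
  have q1 : h * (2 * n * ε) = e / 2 := by
    rw [hh, hεdef]; field_simp; norm_num
  have q2 : h * (C * (S t - S 0)) < e / 4 := by
    rw [hh, div_mul_eq_mul_div, div_lt_iff₀ hn0]
    rw [div_lt_iff₀ he] at hn
    linarith
  rw [mul_add, q1]
  linarith
end

section
/- Let ℓ : (0,∞) → (0,∞) be slowly varying at ∞ (i.e., for every c > 0, ℓ(ct)/ℓ(t) → 1 as t → ∞), let 0 < α < 1 and L > 0. Let γ be a Borel measure on (0,1] with tail γ̄(x) = γ([x,1]) finite for every x > 0, and assume γ̄(x) x^α / ℓ(1/x) → L as x ↓ 0. Then for every integer r ≥ 1, as n → ∞, binom(n,r) ∫₀¹ x^r (1−x)^{n−r} γ(dx) / (n^α ℓ(n)) → (α Γ(r−α) / r!) · L, where Γ is the Gamma function. -/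
open Filter MeasureTheory Real

lemma aux_sfinite (γ : Measure ℝ) (hsupp : γ (Set.Ioc (0 : ℝ) 1)ᶜ = 0)
    (hfin : ∀ x : ℝ, 0 < x → γ (Set.Icc x 1) ≠ ⊤) : SigmaFinite γ := by
  refine ⟨⟨{ set := fun k : ℕ => (Set.Ioc (0 : ℝ) 1)ᶜ ∪ Set.Icc (1 / ((k : ℝ) + 1)) 1
             set_mem := fun _ => trivial
             finite := ?_
             spanning := ?_ }⟩⟩
  · intro k
    refine (measure_union_le _ _).trans_lt ?_
    rw [hsupp, zero_add]
    exact (hfin _ (by positivity)).lt_top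
  · rw [Set.eq_univ_iff_forall]
    intro x
    rw [Set.mem_iUnion]
    by_cases hx : x ∈ Set.Ioc (0 : ℝ) 1
    · obtain ⟨k, hk⟩ := exists_nat_one_div_lt hx.1
      exact ⟨k, Or.inr ⟨hk.le, hx.2⟩⟩
    · exact ⟨0, Or.inl hx⟩

lemma aux_fubini (γ : Measure ℝ) [SigmaFinite γ]
    (hfin : ∀ x : ℝ, 0 < x → γ (Set.Icc x 1) ≠ ⊤)
    (f g : ℝ → ℝ) (hg : Continuous g) (hf : ∀ x, HasDerivAt f (g x) x) (hf0 : f 0 = 0)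
    (hIntg : IntegrableOn (fun y => g y * (γ (Set.Icc y 1)).toReal) (Set.Ioc 0 1)) :
    ∫ x in Set.Ioc (0 : ℝ) 1, f x ∂γ
      = ∫ y in Set.Ioc (0 : ℝ) 1, g y * (γ (Set.Icc y 1)).toReal := by
  have hS : MeasurableSet {p : ℝ × ℝ | p.2 ≤ p.1} := measurableSet_le measurable_snd measurable_fst
  let F : ℝ → ℝ → ℝ := fun x y => Set.indicator {p : ℝ × ℝ | p.2 ≤ p.1} (fun p => g p.2) (x, y)
  have hFm : Measurable (Function.uncurry F) :=
    (hg.measurable.comp measurable_snd).indicator hS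
  have hFy : ∀ y, (fun x => F x y) = (Set.Ici y).indicator (fun _ => g y) := by
    intro y; ext x; simp [F, Set.indicator]
  have hFx : ∀ x, F x = (Set.Iic x).indicator g := by
    intro x; ext y; simp [F, Set.indicator]
  have hset : ∀ y ∈ Set.Ioc (0 : ℝ) 1, Set.Ici y ∩ Set.Ioc 0 1 = Set.Icc y 1 := by
    intro y hy; ext x
    simp only [Set.mem_inter_iff, Set.mem_Ici, Set.mem_Ioc, Set.mem_Icc]
    exact ⟨fun h => ⟨h.1, h.2.2⟩, fun h => ⟨h.1, hy.1.trans_le h.1, h.2⟩⟩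
  have hIntC : ∀ y ∈ Set.Ioc (0 : ℝ) 1, ∀ c : ℝ,
      ∫ x in Set.Ioc (0 : ℝ) 1, (Set.Ici y).indicator (fun _ => c) x ∂γ
        = c * (γ (Set.Icc y 1)).toReal := by
    intro y hy c
    rw [integral_indicator measurableSet_Ici, Measure.restrict_restrict measurableSet_Ici,
      hset y hy]
    simp [Measure.real, mul_comm]
  have hI : Integrable (Function.uncurry F)
      ((γ.restrict (Set.Ioc 0 1)).prod (volume.restrict (Set.Ioc 0 1))) := by
    rw [integrable_prod_iff' hFm.aestronglyMeasurable]
    constructor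
    · filter_upwards [ae_restrict_mem measurableSet_Ioc] with y hy
      change Integrable (fun x => F x y) _
      rw [hFy y, integrable_indicator_iff measurableSet_Ici]
      rw [IntegrableOn, Measure.restrict_restrict measurableSet_Ici, hset y hy]
      exact integrableOn_const (hfin y hy.1)
    · refine (hIntg.norm).congr ?_
      filter_upwards [ae_restrict_mem measurableSet_Ioc] with y hy
      have : ∀ x, ‖Function.uncurry F (x, y)‖ = (Set.Ici y).indicator (fun _ => ‖g y‖) x := by
        intro x
        change ‖(fun x => F x y) x‖ = _
        rw [hFy y, norm_indicator_eq_indicator_norm]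
      simp_rw [this]
      rw [hIntC y hy, norm_mul, Real.norm_of_nonneg ENNReal.toReal_nonneg]
  have hsw := integral_integral_swap hI
  calc ∫ x in Set.Ioc (0 : ℝ) 1, f x ∂γ
      = ∫ x in Set.Ioc (0 : ℝ) 1, (∫ y in Set.Ioc (0 : ℝ) 1, F x y) ∂γ := by
        refine setIntegral_congr_fun measurableSet_Ioc fun x hx => ?_
        rw [hFx x, integral_indicator measurableSet_Iic,
          Measure.restrict_restrict measurableSet_Iic]
        have : Set.Iic x ∩ Set.Ioc 0 1 = Set.Ioc 0 x := by
          ext y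
          simp only [Set.mem_inter_iff, Set.mem_Iic, Set.mem_Ioc]
          exact ⟨fun h => ⟨h.2.1, h.1⟩, fun h => ⟨h.2, h.1, h.2.trans hx.2⟩⟩
        rw [this, ← intervalIntegral.integral_of_le hx.1.le,
          intervalIntegral.integral_eq_sub_of_hasDerivAt (fun y _ => hf y)
            (hg.intervalIntegrable _ _), hf0, sub_zero]
    _ = _ := hsw
    _ = _ := by
        refine setIntegral_congr_fun measurableSet_Ioc fun y hy => ?_
        rw [hFy y, hIntC y hy]

lemma aux_potter (G : ℝ → ℝ) (hG0 : ∀ x, 0 ≤ G x) (hGa : ∀ x y, 0 < x → x ≤ y → G y ≤ G x)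
    (β x0 : ℝ) (hβ : 0 < β) 
    (h2 : ∀ x, 0 < x → x ≤ x0 → G (x / 2) ≤ 2 ^ β * G x) (x s : ℝ) (hx : 0 < x) (hx0 : x ≤ x0)
    (hs : 0 < s) : G (s * x) ≤ G x * (2 ^ β * s ^ (-β) + 1) := by
  have key : ∀ k : ℕ, ∀ s x : ℝ, 0 < x → x ≤ x0 → (1 / 2) ^ k < s → s ≤ 1 →
      G (s * x) ≤ G x * (2 ^ β * s ^ (-β)) := by
    intro k
    induction k with
    | zero => intro s x _ _ h1 h2; simp at h1; linarith
    | succ k ih =>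
      intro s x hx hx0 hk hs1
      have hs : 0 < s := lt_trans (by positivity) hk
      by_cases h : 1 / 2 < s
      · have h3 : 1 ≤ s ^ (-β) := Real.one_le_rpow_of_pos_of_le_one_of_nonpos hs hs1 (by linarith)
        calc G (s * x) ≤ G (x / 2) := hGa _ _ (by positivity) (by nlinarith)
          _ ≤ 2 ^ β * G x := h2 x hx hx0
          _ = G x * (2 ^ β * 1) := by ring
          _ ≤ _ := by have := hG0 x; gcongr
      · push Not at h
        have := ih (2 * s) (x / 2) (by positivity) (by linarith)
          (by rw [pow_succ] at hk; linarith) (by linarith)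
        have e : (2 * s) ^ (-β) * 2 ^ β = s ^ (-β) := by
          rw [Real.mul_rpow (by norm_num) hs.le, mul_right_comm, ← Real.rpow_add (by norm_num)]
          simp
        calc G (s * x) = G (2 * s * (x / 2)) := by ring_nf
          _ ≤ _ := this
          _ ≤ (2 ^ β * G x) * (2 ^ β * (2 * s) ^ (-β)) := by
              have := h2 x hx hx0
              gcongr
          _ = G x * (2 ^ β * ((2 * s) ^ (-β) * 2 ^ β)) := by ring
          _ = _ := by rw [e]
  have hg := hG0 x
  by_cases h : s ≤ 1
  · obtain ⟨k, hk⟩ := exists_pow_lt_of_lt_one hs (by norm_num : (1 / 2 : ℝ) < 1)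
    refine (key k s x hx hx0 hk h).trans ?_
    gcongr; linarith
  · push Not at h
    have : 0 ≤ G x * (2 ^ β * s ^ (-β)) := by positivity
    have := hGa x (s * x) hx (by nlinarith)
    linarith

lemma aux_choose (r : ℕ) : Tendsto (fun n : ℕ => (n.choose r : ℝ) / (n : ℝ) ^ r) atTop
    (nhds (1 / (r.factorial : ℝ))) := by
  have h := isEquivalent_choose r
  have h2 := h.div (Asymptotics.IsEquivalent.refl (u := fun n : ℕ => (n : ℝ) ^ r))
  refine (h2.symm.tendsto_nhds ?_)
  refine tendsto_const_nhds.congr' ?_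
  filter_upwards [eventually_gt_atTop 0] with n hn
  have : (n : ℝ) ^ r ≠ 0 := by positivity
  simp only [Pi.div_apply]
  field_simp

lemma aux_exp (k : ℕ) (s : ℝ) : Tendsto (fun n : ℕ => (1 - s / n) ^ (n - k)) atTop
    (nhds (Real.exp (-s))) := by
  have h0 : Tendsto (fun n : ℕ => 1 - s / (n : ℝ)) atTop (nhds 1) := by
    simpa using (tendsto_const_div_atTop_nhds_zero_nat s).const_sub 1
  have h1 := (Real.tendsto_one_add_div_pow_exp (-s)).div (h0.pow k) (by simp)
  simp only [one_pow, div_one] at h1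
  refine h1.congr' ?_
  filter_upwards [eventually_ge_atTop k, h0.eventually_ne one_ne_zero] with n hn hne
  simp only [Pi.div_apply]
  rw [neg_div, ← sub_eq_add_neg, div_eq_iff (pow_ne_zero _ hne), ← pow_add, Nat.sub_add_cancel hn]

noncomputable def gAux (q n : ℕ) (y : ℝ) : ℝ :=
  ((q : ℝ) + 1) * y ^ q * (1 - y) ^ (n - (q + 1))
    - y ^ (q + 1) * (((n - (q + 1) : ℕ) : ℝ) * (1 - y) ^ (n - (q + 2)))

lemma gAux_cont (q n : ℕ) : Continuous (gAux q n) := by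
  unfold gAux; fun_prop

lemma gAux_deriv (q n : ℕ) (x : ℝ) :
    HasDerivAt (fun x : ℝ => x ^ (q + 1) * (1 - x) ^ (n - (q + 1))) (gAux q n x) x := by
  have h1 := hasDerivAt_pow (q + 1) x
  have h2 := ((hasDerivAt_id x).const_sub 1).pow (n - (q + 1))
  refine (h1.mul h2).congr_deriv ?_
  simp only [gAux, id, Nat.add_sub_cancel, Nat.sub_sub, Pi.pow_apply]
  push_cast
  ring

lemma gAux_scale (q n : ℕ) (hn : 0 < n) (s : ℝ) :
    (n : ℝ) ^ q * gAux q n (s / n) = ((q : ℝ) + 1) * s ^ q * (1 - s / n) ^ (n - (q + 1))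
    - s ^ (q + 1) * ((((n - (q + 1) : ℕ) : ℝ) / n) * (1 - s / n) ^ (n - (q + 2))) := by
  have : (n : ℝ) ≠ 0 := by positivity
  unfold gAux
  generalize (1 - s / (n : ℝ)) ^ (n - (q + 1)) = A
  generalize (1 - s / (n : ℝ)) ^ (n - (q + 2)) = B
  rw [div_pow, div_pow, pow_succ (n : ℝ) q]
  field_simp

lemma gAux_lim (q : ℕ) (s : ℝ) : Tendsto (fun n : ℕ => (n : ℝ) ^ q * gAux q n (s / n)) atTop
    (nhds (((q : ℝ) + 1) * s ^ q * Real.exp (-s) - s ^ (q + 1) * Real.exp (-s))) := by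
  have h1 := aux_exp (q + 1) s
  have h2 := aux_exp (q + 2) s
  have h3 : Tendsto (fun n : ℕ => ((n - (q + 1) : ℕ) : ℝ) / n) atTop (nhds 1) := by
    have : Tendsto (fun n : ℕ => 1 - ((q : ℝ) + 1) / (n : ℝ)) atTop (nhds 1) := by
      simpa using (tendsto_const_div_atTop_nhds_zero_nat ((q : ℝ) + 1)).const_sub 1
    refine this.congr' ?_
    filter_upwards [eventually_ge_atTop (q + 1)] with n hn
    have : (n : ℝ) ≠ 0 := by
      have : 0 < n := by omega
      positivity
    rw [Nat.cast_sub hn]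
    push_cast
    field_simp
  have h4 := (h1.const_mul (((q : ℝ) + 1) * s ^ q)).sub ((h3.mul h2).const_mul (s ^ (q + 1)))
  rw [one_mul] at h4
  refine h4.congr' ?_
  filter_upwards [eventually_gt_atTop 0] with n hn
  rw [gAux_scale q n hn]

lemma pow_bound (n k : ℕ) (hn : 2 * k ≤ n) (hn0 : 0 < n) (s : ℝ) (hs : 0 ≤ s) (hsn : s ≤ n) :
    (1 - s / n) ^ (n - k) ≤ Real.exp (-(1 / 2) * s) := by
  have hn' : (0 : ℝ) < n := by positivity
  have h0 : 0 ≤ 1 - s / n := by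
    rw [sub_nonneg, div_le_one hn']; exact hsn
  calc (1 - s / n) ^ (n - k) ≤ (Real.exp (-(s / n))) ^ (n - k) := by
        gcongr
        exact Real.one_sub_le_exp_neg _
    _ = Real.exp (((n - k : ℕ) : ℝ) * (-(s / n))) := by rw [Real.exp_nat_mul]
    _ ≤ _ := by
        rw [Real.exp_le_exp, Nat.cast_sub (by omega)]
        have h2 : (2 * k : ℝ) ≤ n := by exact_mod_cast hn
        have h3 : 0 ≤ s / n := by positivity
        have h4 : s = s / n * n := by field_simp
        nlinarith

lemma gAux_bound (q n : ℕ) (hn : 2 * (q + 2) ≤ n) (s : ℝ) (hs : 0 ≤ s) (hsn : s ≤ n) :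
    |(n : ℝ) ^ q * gAux q n (s / n)|
      ≤ (((q : ℝ) + 1) * s ^ q + s ^ (q + 1)) * Real.exp (-(1 / 2) * s) := by
  have hn0 : 0 < n := by omega
  have hn' : (0 : ℝ) < n := by positivity
  have h0 : 0 ≤ 1 - s / n := by
    rw [sub_nonneg, div_le_one hn']; exact hsn
  rw [gAux_scale q n hn0]
  have h1 := pow_bound n (q + 1) (by omega) hn0 s hs hsn
  have h2 := pow_bound n (q + 2) (by omega) hn0 s hs hsn
  have h3 : ((n - (q + 1) : ℕ) : ℝ) / n ≤ 1 := by
    rw [div_le_one hn']; exact_mod_cast Nat.sub_le _ _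
  refine (abs_sub _ _).trans ?_
  rw [abs_of_nonneg (by positivity), abs_of_nonneg (by positivity),
    add_mul (((q : ℝ) + 1) * s ^ q)]
  gcongr
  calc _ ≤ 1 * Real.exp (-(1 / 2) * s) := by gcongr
    _ = _ := one_mul _

lemma aux_int (p : ℝ) (hp : -1 < p) (b : ℝ) (hb : 0 < b) :
    IntegrableOn (fun s : ℝ => s ^ p * Real.exp (-b * s)) (Set.Ioi 0) := by
  simpa using integrableOn_rpow_mul_exp_neg_mul_rpow hp one_pos hb

lemma aux_bint (q : ℕ) (β K M : ℝ) (hβ1 : β < 1) :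
    IntegrableOn (fun s : ℝ => (((q : ℝ) + 1) * s ^ q + s ^ (q + 1)) * Real.exp (-(1 / 2) * s)
      * (M * (K * s ^ (-β) + 1))) (Set.Ioi 0) := by
  have hq : (0 : ℝ) ≤ q := q.cast_nonneg
  have h1 := (aux_int (q - β) (by linarith) (1 / 2) (by norm_num)).const_mul (((q : ℝ) + 1) * M * K)
  have h2 := (aux_int q (by linarith) (1 / 2) (by norm_num)).const_mul (((q : ℝ) + 1) * M)
  have h3 := (aux_int (q + 1 - β) (by linarith) (1 / 2) (by norm_num)).const_mul (M * K)
  have h4 := (aux_int (q + 1) (by linarith) (1 / 2) (by norm_num)).const_mul M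
  refine (((h1.add h2).add h3).add h4).congr ?_
  filter_upwards [ae_restrict_mem measurableSet_Ioi] with s hs
  have hs : 0 < s := hs
  have e1 : s ^ ((q : ℝ) - β) = s ^ q * s ^ (-β) := by
    rw [sub_eq_add_neg, Real.rpow_add hs, Real.rpow_natCast]
  have e2 : s ^ ((q : ℝ) + 1 - β) = s ^ (q + 1) * s ^ (-β) := by
    rw [sub_eq_add_neg, Real.rpow_add hs, Real.rpow_add hs, Real.rpow_natCast, Real.rpow_one,
      pow_succ]
  have e3 : s ^ ((q : ℝ) + 1) = s ^ (q + 1) := by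
    rw [Real.rpow_add hs, Real.rpow_natCast, Real.rpow_one, pow_succ]
  simp only [Pi.add_apply, e1, e2, e3, Real.rpow_natCast]
  ring

lemma aux_limint (q : ℕ) (α L : ℝ) (hα1 : α < 1) :
    ∫ s in Set.Ioi (0 : ℝ), (((q : ℝ) + 1) * s ^ q * Real.exp (-s) - s ^ (q + 1) * Real.exp (-s))
      * (L * s ^ (-α)) = α * Real.Gamma ((q : ℝ) + 1 - α) * L := by
  have hq : (0 : ℝ) ≤ q := q.cast_nonneg
  have p1 : 0 < (q : ℝ) + 1 - α := by linarith
  have h1 := (Real.GammaIntegral_convergent p1).const_mul (((q : ℝ) + 1) * L)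
  have h2 := (Real.GammaIntegral_convergent (by linarith : 0 < (q : ℝ) + 1 - α + 1)).const_mul L
  have e : ∫ s in Set.Ioi (0 : ℝ),
      (((q : ℝ) + 1) * s ^ q * Real.exp (-s) - s ^ (q + 1) * Real.exp (-s)) * (L * s ^ (-α))
      = ∫ s in Set.Ioi (0 : ℝ),
        ((((q : ℝ) + 1) * L) * (Real.exp (-s) * s ^ ((q : ℝ) + 1 - α - 1))
          - L * (Real.exp (-s) * s ^ ((q : ℝ) + 1 - α + 1 - 1))) := by
    refine setIntegral_congr_fun measurableSet_Ioi fun s hs => ?_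
    have hs : 0 < s := hs
    have e1 : s ^ ((q : ℝ) + 1 - α - 1) = s ^ q * s ^ (-α) := by
      rw [show (q : ℝ) + 1 - α - 1 = q + (-α) by ring, Real.rpow_add hs, Real.rpow_natCast]
    have e2 : s ^ ((q : ℝ) + 1 - α + 1 - 1) = s ^ (q + 1) * s ^ (-α) := by
      rw [show (q : ℝ) + 1 - α + 1 - 1 = ((q + 1 : ℕ) : ℝ) + (-α) by push_cast; ring,
        Real.rpow_add hs, Real.rpow_natCast]
    simp only [e1, e2]
    ring
  rw [e, integral_sub h1 h2, integral_const_mul, integral_const_mul,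
    ← Real.Gamma_eq_integral p1, ← Real.Gamma_eq_integral (by linarith),
    Real.Gamma_add_one p1.ne']
  ring

lemma aux_conv (q : ℕ) (G : ℝ → ℝ) (hGm : Measurable G) (a : ℕ → ℝ) (α β K M L : ℝ)
    (hα1 : α < 1) (hβ1 : β < 1)
    (hlim : ∀ s, 0 < s → Tendsto (fun n : ℕ => G (s / n) / a n) atTop (nhds (L * s ^ (-α))))
    (hb : ∀ᶠ n : ℕ in atTop, ∀ s, 0 < s → |G (s / n) / a n| ≤ M * (K * s ^ (-β) + 1)) :
    Tendsto (fun n : ℕ => (n : ℝ) ^ (q + 1) * (∫ y in Set.Ioc (0 : ℝ) 1, gAux q n y * G y) / a n)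
      atTop (nhds (α * Real.Gamma ((q : ℝ) + 1 - α) * L)) := by
  rw [← aux_limint q α L hα1]
  have key : Tendsto (fun n : ℕ => ∫ s in Set.Ioi (0 : ℝ), (Set.Ioc (0 : ℝ) n).indicator
      (fun s => (n : ℝ) ^ q * gAux q n (s / n) * (G (s / n) / a n)) s) atTop
      (nhds (∫ s in Set.Ioi (0 : ℝ),
        (((q : ℝ) + 1) * s ^ q * Real.exp (-s) - s ^ (q + 1) * Real.exp (-s))
          * (L * s ^ (-α)))) := by
    refine tendsto_integral_filter_of_dominated_convergence _ ?_ ?_ (aux_bint q β K M hβ1) ?_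
    · refine Eventually.of_forall fun n => ?_
      have := (gAux_cont q n).measurable
      refine (Measurable.indicator ?_ measurableSet_Ioc).aestronglyMeasurable
      fun_prop
    · filter_upwards [hb, eventually_ge_atTop (2 * (q + 2))] with n hn hq
      filter_upwards [ae_restrict_mem measurableSet_Ioi] with s hs
      have hs : 0 < s := hs
      have h2 := hn s hs
      have h2' := (abs_nonneg _).trans h2
      by_cases hsn : s ≤ n
      · rw [Set.indicator_of_mem (Set.mem_Ioc.mpr ⟨hs, hsn⟩), norm_mul]
        exact mul_le_mul (gAux_bound q n hq s hs.le hsn) h2 (norm_nonneg _) (by positivity)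
      · rw [Set.indicator_of_notMem (fun h => hsn h.2), norm_zero]
        positivity
    · filter_upwards [ae_restrict_mem measurableSet_Ioi] with s hs
      have hs : 0 < s := hs
      refine ((gAux_lim q s).mul (hlim s hs)).congr' ?_
      filter_upwards [eventually_ge_atTop ⌈s⌉₊] with n hn
      rw [Set.indicator_of_mem (Set.mem_Ioc.mpr ⟨hs, Nat.ceil_le.mp hn⟩)]
  refine key.congr' ?_
  filter_upwards [eventually_gt_atTop 0] with n hn
  have hn' : (0 : ℝ) < n := by positivity
  rw [integral_indicator measurableSet_Ioc, Measure.restrict_restrict measurableSet_Ioc,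
    Set.inter_eq_left.mpr Set.Ioc_subset_Ioi_self, ← intervalIntegral.integral_of_le hn'.le,
    ← intervalIntegral.integral_of_le zero_le_one]
  have h := intervalIntegral.integral_comp_div (a := 0) (b := n)
    (fun y => (n : ℝ) ^ q * gAux q n y * (G y / a n)) hn'.ne'
  rw [h, zero_div, div_self hn'.ne', smul_eq_mul]
  have : (fun y => (n : ℝ) ^ q * gAux q n y * (G y / a n))
      = fun y => ((n : ℝ) ^ q / a n) * (gAux q n y * G y) := by ext y; ring
  rw [this, intervalIntegral.integral_const_mul]
  ring

/-- Regular variation of the tail. -/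
lemma aux_rv (ℓ G : ℝ → ℝ)
    (hℓpos : ∀ t : ℝ, 0 < t → 0 < ℓ t)
    (hℓsv : ∀ c : ℝ, 0 < c → Tendsto (fun t : ℝ => ℓ (c * t) / ℓ t) atTop (nhds 1))
    (α L : ℝ)
    (hlim : Tendsto (fun x : ℝ => G x * x ^ α / ℓ (1 / x))
      (nhdsWithin 0 (Set.Ioi 0)) (nhds L)) (s : ℝ) (hs : 0 < s) :
    Tendsto (fun t : ℝ => G (s / t) / (t ^ α * ℓ t)) atTop (nhds (L * s ^ (-α))) := by
  have h0 : Tendsto (fun t : ℝ => s / t) atTop (nhdsWithin 0 (Set.Ioi 0)) := by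
    rw [tendsto_nhdsWithin_iff]
    refine ⟨tendsto_const_nhds.div_atTop tendsto_id, ?_⟩
    filter_upwards [eventually_gt_atTop 0] with t ht
    exact div_pos hs ht
  have h1 := ((hlim.comp h0).mul (hℓsv s⁻¹ (by positivity))).mul_const (s ^ (-α))
  rw [mul_one] at h1
  refine h1.congr' ?_
  filter_upwards [eventually_gt_atTop 0] with t ht
  have e : 1 / (s / t) = s⁻¹ * t := by field_simp
  have p1 := hℓpos t ht
  have p2 := hℓpos (s⁻¹ * t) (by positivity)
  have p3 : 0 < t ^ α := by positivity
  have p4 : 0 < s ^ α := by positivity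
  simp only [Function.comp, e]
  rw [Real.div_rpow hs.le ht.le, Real.rpow_neg hs.le]
  generalize ℓ (s⁻¹ * t) = A at *
  field_simp

/-- If `ℓ` is slowly varying at `∞`, `0 < α < 1`, `L > 0`, and `γ` is a Borel measure
on `(0,1]` with finite tail `γ̄(x) = γ([x,1])` satisfying `γ̄(x) x^α / ℓ(1/x) → L`
as `x ↓ 0`, then for every `r ≥ 1`,
`binom(n,r) ∫₀¹ x^r (1-x)^{n-r} γ(dx) / (n^α ℓ(n)) → (α Γ(r-α)/r!) L`. -/
theorem tauberian_multiplicity (ℓ : ℝ → ℝ)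
    (hℓpos : ∀ t : ℝ, 0 < t → 0 < ℓ t)
    (hℓsv : ∀ c : ℝ, 0 < c → Tendsto (fun t : ℝ => ℓ (c * t) / ℓ t) atTop (nhds 1))
    (α L : ℝ) (hα0 : 0 < α) (hα1 : α < 1) (hL : 0 < L)
    (γ : Measure ℝ) (hsupp : γ (Set.Ioc (0 : ℝ) 1)ᶜ = 0)
    (hfin : ∀ x : ℝ, 0 < x → γ (Set.Icc x 1) ≠ ⊤)
    (hlim : Tendsto (fun x : ℝ => (γ (Set.Icc x 1)).toReal * x ^ α / ℓ (1 / x))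
      (nhdsWithin 0 (Set.Ioi 0)) (nhds L)) :
    ∀ r : ℕ, 1 ≤ r →
      Tendsto (fun n : ℕ =>
          ((n.choose r : ℝ) * ∫ x in Set.Ioc (0 : ℝ) 1, x ^ r * (1 - x) ^ (n - r) ∂γ) /
            ((n : ℝ) ^ α * ℓ n))
        atTop (nhds (α * Real.Gamma ((r : ℝ) - α) / (Nat.factorial r : ℝ) * L)) := by
  intro r hr
  obtain ⟨q, rfl⟩ : ∃ q, r = q + 1 := ⟨r - 1, by omega⟩
  have := aux_sfinite γ hsupp hfin
  set G : ℝ → ℝ := fun x => (γ (Set.Icc x 1)).toReal with hG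
  have hG0 : ∀ x, 0 ≤ G x := fun x => ENNReal.toReal_nonneg
  have hGa : ∀ x y, 0 < x → x ≤ y → G y ≤ G x := fun x y hx hxy =>
    ENNReal.toReal_mono (hfin x hx) (measure_mono (Set.Icc_subset_Icc_left hxy))
  have hGm : Measurable G := by
    have : Antitone (fun x : ℝ => γ (Set.Icc x 1)) := fun x y hxy =>
      measure_mono (Set.Icc_subset_Icc_left hxy)
    exact this.measurable.ennreal_toReal
  have hrv := aux_rv ℓ G hℓpos hℓsv α L hlim
  obtain ⟨β, hαβ, hβ1⟩ := exists_between hα1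
  have hβ0 : 0 < β := hα0.trans hαβ
  -- doubling
  obtain ⟨x0, hx0, h2⟩ : ∃ x0, 0 < x0 ∧ ∀ x, 0 < x → x ≤ x0 → G (x / 2) ≤ 2 ^ β * G x := by
    have h1 := hrv 1 one_pos
    have hh := hrv (1 / 2) (by norm_num)
    rw [Real.one_rpow, mul_one] at h1
    have hd := hh.div h1 hL.ne'
    have hlt : L * (1 / 2) ^ (-α) / L < (2 : ℝ) ^ β := by
      rw [mul_div_cancel_left₀ _ hL.ne', Real.rpow_neg (by norm_num), ← Real.inv_rpow (by norm_num)]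
      norm_num
      exact hαβ
    obtain ⟨T, hT⟩ := eventually_atTop.mp ((hd.eventually_lt_const hlt).and
      ((h1.eventually_const_lt hL).and (eventually_gt_atTop 0)))
    refine ⟨1 / max T 1, by positivity, fun x hx hxx => ?_⟩
    have hTx : T ≤ 1 / x := by
      rw [le_div_iff₀ (by positivity)] at hxx
      rw [le_div_iff₀ hx]
      have := le_max_left T 1
      nlinarith
    obtain ⟨c1, c2, c3⟩ := hT _ hTx
    simp only [Pi.div_apply] at c1
    have hA : 0 < (1 / x) ^ α * ℓ (1 / x) := mul_pos (by positivity) (hℓpos _ c3)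
    rw [div_div_div_cancel_right₀ hA.ne'] at c1
    rw [show (1 : ℝ) / (1 / x) = x by field_simp, show 1 / 2 / (1 / x) = x / 2 by field_simp] at c1
    rw [show (1 : ℝ) / (1 / x) = x by field_simp] at c2
    have hGx : 0 < G x := by
      by_contra h
      have := div_nonpos_of_nonpos_of_nonneg (not_lt.mp h) hA.le
      linarith
    exact ((div_lt_iff₀ hGx).mp c1).le
  have hP := aux_potter G hG0 hGa β x0 hβ0 h2
  have hIntg : IntegrableOn G (Set.Ioc 0 1) := by
    have hi : IntegrableOn (fun y : ℝ => G x0 * (2 ^ β * (x0 ^ β * y ^ (-β)) + 1)) (Set.Ioc 0 1) := by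
      have : IntegrableOn (fun y : ℝ => y ^ (-β)) (Set.Ioc 0 1) := by
        rw [← intervalIntegrable_iff_integrableOn_Ioc_of_le zero_le_one]
        exact intervalIntegral.intervalIntegrable_rpow' (by linarith)
      exact ((((this.const_mul _).const_mul _)).add (integrableOn_const (by simp))).const_mul _
    refine hi.mono' hGm.aestronglyMeasurable ?_
    filter_upwards [ae_restrict_mem measurableSet_Ioc] with y hy
    rw [Real.norm_of_nonneg (hG0 y)]
    have h := hP x0 (y / x0) hx0 le_rfl (div_pos hy.1 hx0)
    rw [div_mul_cancel₀ _ hx0.ne', Real.div_rpow hy.1.le hx0.le, Real.rpow_neg hx0.le,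
      div_inv_eq_mul, mul_comm (y ^ (-β))] at h
    exact h
  have hgi : ∀ n, IntegrableOn (fun y => gAux q n y * G y) (Set.Ioc 0 1) := by
    intro n
    have := IntegrableOn.continuousOn_mul_of_subset (gAux_cont q n).continuousOn hIntg
      isCompact_Icc measurableSet_Ioc Set.Ioc_subset_Icc_self
    exact this
  have hfub := fun n => aux_fubini γ hfin _ _ (gAux_cont q n) (gAux_deriv q n) (by simp) (hgi n)
  have hrvn : ∀ s, 0 < s → Tendsto (fun n : ℕ => G (s / n) / ((n : ℝ) ^ α * ℓ n)) atTop
      (nhds (L * s ^ (-α))) := fun s hs => (hrv s hs).comp tendsto_natCast_atTop_atTop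
  have hconv := aux_conv q G hGm (fun n : ℕ => (n : ℝ) ^ α * ℓ n) α β (2 ^ β) (L + 1) L hα1 hβ1
    hrvn (by
      have h1 := hrvn 1 one_pos
      rw [Real.one_rpow, mul_one] at h1
      have hx := (tendsto_const_div_atTop_nhds_zero_nat (1 : ℝ)).eventually_lt_const hx0
      filter_upwards [h1.eventually_lt_const (lt_add_one L), hx, eventually_gt_atTop 0]
        with n hn hnx hn0 s hs
      have hn' : (0 : ℝ) < n := by positivity
      have hA : 0 < (n : ℝ) ^ α * ℓ n := mul_pos (by positivity) (hℓpos _ hn')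
      rw [abs_of_nonneg (div_nonneg (hG0 _) hA.le)]
      have h := hP (1 / n) s (by positivity) hnx.le hs
      rw [mul_one_div] at h
      calc G (s / n) / ((n : ℝ) ^ α * ℓ n)
          ≤ G (1 / n) * (2 ^ β * s ^ (-β) + 1) / ((n : ℝ) ^ α * ℓ n) := by gcongr
        _ = G (1 / n) / ((n : ℝ) ^ α * ℓ n) * (2 ^ β * s ^ (-β) + 1) := by ring
        _ ≤ _ := by gcongr)
  have hfinal := (aux_choose (q + 1)).mul hconv
  have e : α * Real.Gamma (((q + 1 : ℕ) : ℝ) - α) / ((q + 1).factorial : ℝ) * L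
      = 1 / ((q + 1).factorial : ℝ) * (α * Real.Gamma ((q : ℝ) + 1 - α) * L) := by
    push_cast; ring
  rw [e]
  refine hfinal.congr' ?_
  filter_upwards [eventually_gt_atTop 0] with n hn
  have hn' : (n : ℝ) ^ (q + 1) ≠ 0 := by positivity
  rw [hfub n]
  change _ = _ * (∫ y in Set.Ioc (0 : ℝ) 1, gAux q n y * G y) / _
  generalize (n : ℝ) ^ (q + 1) = N at *
  field_simp
end

section
/- Let ℓ : (0,∞) → (0,∞) be slowly varying at ∞ (i.e., for every c > 0, ℓ(ct)/ℓ(t) → 1 as t → ∞) and let L > 0. Let γ be a Borel measure on (0,1] with ∫₀¹ x γ(dx) < ∞ and tail γ̄(x) = γ([x,1]) satisfying γ̄(x) x / ℓ(1/x) → L as x ↓ 0. Then for every integer r ≥ 2, as n → ∞, binom(n,r) ∫₀¹ x^r (1−x)^{n−r} γ(dx) / (n ℓ(n)) → L / (r(r−1)). -/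
open Filter MeasureTheory Real

lemma aux_ratio (ℓ G : ℝ → ℝ)
    (hℓpos : ∀ t : ℝ, 0 < t → 0 < ℓ t)
    (hℓsv : ∀ c : ℝ, 0 < c → Tendsto (fun t : ℝ => ℓ (c * t) / ℓ t) atTop (nhds 1))
    (L : ℝ) (hL : 0 < L)
    (hlim : Tendsto (fun x : ℝ => G x * x / ℓ (1 / x))
      (nhdsWithin 0 (Set.Ioi 0)) (nhds L)) (c : ℝ) (hc : 0 < c) :
    Tendsto (fun x => G (c * x) / G x) (nhdsWithin 0 (Set.Ioi 0)) (nhds c⁻¹) := by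
  have h1 : Tendsto (fun x : ℝ => c * x) (nhdsWithin 0 (Set.Ioi 0)) (nhdsWithin 0 (Set.Ioi 0)) := by
    refine tendsto_nhdsWithin_iff.2 ⟨?_, ?_⟩
    · have : Tendsto (fun x : ℝ => c * x) (nhds 0) (nhds (c * 0)) := by
        exact (continuous_const.mul continuous_id).tendsto 0
      rw [mul_zero] at this
      exact this.mono_left nhdsWithin_le_nhds
    · filter_upwards [self_mem_nhdsWithin] with x hx
      exact mul_pos hc hx
  have h2 := (hℓsv c⁻¹ (inv_pos.2 hc)).comp (tendsto_inv_nhdsGT_zero (𝕜 := ℝ))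
  have h3 := (((hlim.comp h1).div hlim hL.ne').mul h2).mul_const c⁻¹
  rw [div_self hL.ne', one_mul, one_mul] at h3
  refine h3.congr' ?_
  filter_upwards [self_mem_nhdsWithin] with x hx
  have hx : 0 < x := hx
  have e1 := (hℓpos (1 / x) (by positivity)).ne'
  have e2 := (hℓpos (1 / (c * x)) (by positivity)).ne'
  have e3 : c⁻¹ * x⁻¹ = 1 / (c * x) := by field_simp
  have e4 : x⁻¹ = 1 / x := by field_simp
  simp only [Function.comp, Pi.div_apply]
  rw [e3, e4]
  by_cases hG : G x = 0
  · simp [hG]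
  field_simp

lemma aux_potter_s5 (G : ℝ → ℝ) (hanti : ∀ s t, 0 < s → s ≤ t → G t ≤ G s) (hG0 : ∀ t, 0 ≤ G t)
    (δ : ℝ) (h4 : ∀ y, 0 < y → y < δ → G (4⁻¹ * y) ≤ 8 * G y) (y u : ℝ) (hy : 0 < y) (hyδ : y < δ)
    (hu : 0 < u) : G (u * y) ≤ (1 + 8 * u ^ (-(3 / 2) : ℝ)) * G y := by
  have hp : 0 < u ^ (-(3 / 2) : ℝ) := rpow_pos_of_pos hu _
  rcases le_or_gt 1 u with h | h
  · have := hanti y (u * y) hy (by nlinarith)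
    nlinarith [hG0 y, mul_nonneg hp.le (hG0 y)]
  obtain ⟨k, hk1, hk2⟩ := exists_nat_pow_near_of_lt_one hu h.le (show (0:ℝ) < 4⁻¹ by norm_num)
    (by norm_num)
  have key : ∀ k : ℕ, G ((4⁻¹) ^ k * y) ≤ 8 ^ k * G y := by
    intro k
    induction k with
    | zero => simp
    | succ k ih =>
      have hle : (4⁻¹ : ℝ) ^ k ≤ 1 := pow_le_one₀ (by norm_num) (by norm_num)
      have := h4 ((4⁻¹) ^ k * y) (by positivity) (by nlinarith)
      rw [pow_succ', mul_assoc, pow_succ', mul_assoc]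
      linarith
  have h1 := hanti _ (u * y) (by positivity : (0:ℝ) < (4⁻¹) ^ (k + 1) * y) (by nlinarith)
  have h2 := key (k + 1)
  have h3 : (8 : ℝ) ^ k ≤ u ^ (-(3 / 2) : ℝ) := by
    have : (8 : ℝ) ^ k = ((4⁻¹ : ℝ) ^ k) ^ (-(3 / 2) : ℝ) := by
      rw [← rpow_natCast, ← rpow_natCast, ← rpow_mul (by norm_num), mul_comm, rpow_mul (by norm_num)]
      congr 1
      rw [inv_rpow (by norm_num), ← rpow_neg (by norm_num), show (4:ℝ) = 2 ^ (2:ℝ) by norm_num,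
        ← rpow_mul (by norm_num)]
      norm_num
    rw [this]
    exact rpow_le_rpow_of_nonpos hu hk2 (by norm_num)
  rw [pow_succ (8:ℝ)] at h2
  nlinarith [hG0 y, mul_le_mul_of_nonneg_right h3 (hG0 y)]

lemma aux_fubini_s5 (γ : Measure ℝ)
    (hint : ∫⁻ x in Set.Ioc (0 : ℝ) 1, ENNReal.ofReal x ∂γ < ⊤) (k m : ℕ) :
    ∫ x in Set.Ioc (0 : ℝ) 1, x ^ (k + 2) * (1 - x) ^ (m + 1) ∂γ =
    ∫ t in Set.Ioi (0 : ℝ), (((k + 2 : ℕ) : ℝ) * t ^ (k + 1) * (1 - t) ^ (m + 1)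
      - ((m + 1 : ℕ) : ℝ) * t ^ (k + 2) * (1 - t) ^ m) * (γ (Set.Icc t 1)).toReal := by
  set d : ℝ → ℝ := fun t => ((k + 2 : ℕ) : ℝ) * t ^ (k + 1) * (1 - t) ^ (m + 1)
      - ((m + 1 : ℕ) : ℝ) * t ^ (k + 2) * (1 - t) ^ m with hd
  have hdc : Continuous d := by fun_prop
  set μ := γ.restrict (Set.Ioc (0 : ℝ) 1) with hμ
  have hsf : SFinite μ := by
    have : IsFiniteMeasure (μ.withDensity (fun x => ENNReal.ofReal x)) :=
      isFiniteMeasure_withDensity hint.ne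
    refine sFinite_of_absolutelyContinuous (ν := μ.withDensity (fun x => ENNReal.ofReal x)) ?_
    refine withDensity_absolutelyContinuous' (by fun_prop) ?_
    filter_upwards [ae_restrict_mem measurableSet_Ioc] with x hx
    simpa using hx.1
  set F : ℝ → ℝ → ℝ := fun x t => (Set.Iic x).indicator d t with hF
  have hFm : Measurable (Function.uncurry F) := by
    have : Function.uncurry F = Set.indicator {p : ℝ × ℝ | p.2 ≤ p.1} (fun p => d p.2) := by
      ext ⟨x, t⟩
      simp [F, Set.indicator]
    rw [this]
    exact (hdc.measurable.comp measurable_snd).indicator (measurableSet_le measurable_snd measurable_fst)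
  have hxint : Integrable (fun x : ℝ => x) μ := by
    refine ⟨by fun_prop, ?_⟩
    rw [hasFiniteIntegral_iff_norm]
    refine lt_of_le_of_lt (le_of_eq ?_) hint
    refine setLIntegral_congr_fun measurableSet_Ioc fun x hx => ?_
    simp [abs_of_pos hx.1]
  set C : ℝ := ((k + 2 : ℕ) : ℝ) + ((m + 1 : ℕ) : ℝ)
  have hdb : ∀ t ∈ Set.Ioc (0:ℝ) 1, ‖d t‖ ≤ C := by
    intro t ht
    have a0 : 0 ≤ 1 - t := by linarith [ht.2]
    have a1 : 1 - t ≤ 1 := by linarith [ht.1]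
    have b1 : t ^ (k + 1) * (1 - t) ^ (m + 1) ≤ 1 :=
      mul_le_one₀ (pow_le_one₀ ht.1.le ht.2) (by positivity) (pow_le_one₀ a0 a1)
    have b2 : t ^ (k + 2) * (1 - t) ^ m ≤ 1 :=
      mul_le_one₀ (pow_le_one₀ ht.1.le ht.2) (by positivity) (pow_le_one₀ a0 a1)
    refine (norm_sub_le _ _).trans ?_
    have ht0 := ht.1.le
    rw [Real.norm_of_nonneg (by positivity), Real.norm_of_nonneg (by positivity), mul_assoc, mul_assoc]
    exact add_le_add (mul_le_of_le_one_right (by positivity) b1)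
      (mul_le_of_le_one_right (by positivity) b2)
  have hset : ∀ x ∈ Set.Ioc (0:ℝ) 1, Set.Ioc (0:ℝ) 1 ∩ Set.Iic x = Set.Ioc 0 x := by
    intro x hx
    ext t
    simp only [Set.mem_inter_iff, Set.mem_Ioc, Set.mem_Iic]
    constructor
    · rintro ⟨⟨a, b⟩, c⟩; exact ⟨a, c⟩
    · rintro ⟨a, b⟩; exact ⟨⟨a, b.trans hx.2⟩, b⟩
  have hI : Integrable (Function.uncurry F) (μ.prod (volume.restrict (Set.Ioc (0:ℝ) 1))) := by
    rw [integrable_prod_iff hFm.aestronglyMeasurable]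
    constructor
    · refine ae_of_all _ fun x => ?_
      exact ((hdc.integrableOn_Icc).mono_set Set.Ioc_subset_Icc_self).indicator (measurableSet_Iic (a := x))
    · refine (hxint.const_mul C).mono'
        (hFm.aestronglyMeasurable.norm.integral_prod_right') ?_
      filter_upwards [ae_restrict_mem measurableSet_Ioc] with x hx
      have e : ∀ t, ‖Function.uncurry F (x, t)‖ = (Set.Iic x).indicator (fun t => ‖d t‖) t := by
        intro t
        simp only [Function.uncurry, F, norm_indicator_eq_indicator_norm]
      simp_rw [e]
      rw [setIntegral_indicator measurableSet_Iic, hset x hx]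
      have := norm_setIntegral_le_of_norm_le_const (μ := volume) (s := Set.Ioc (0:ℝ) x)
        (f := fun t => ‖d t‖) (C := C) (by simp) (fun t ht => by
          rw [norm_norm]; exact hdb t ⟨ht.1, ht.2.trans hx.2⟩)
      simpa [Measure.real, hx.1.le] using this
  have hsw := integral_integral_swap hI
  have hleft : ∫ x, (∫ t in Set.Ioc (0:ℝ) 1, F x t) ∂μ =
      ∫ x in Set.Ioc (0 : ℝ) 1, x ^ (k + 2) * (1 - x) ^ (m + 1) ∂γ := by
    refine setIntegral_congr_fun measurableSet_Ioc fun x hx => ?_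
    simp only [F]
    rw [setIntegral_indicator measurableSet_Iic, hset x hx,
      ← intervalIntegral.integral_of_le hx.1.le]
    have hder : ∀ t ∈ Set.uIcc 0 x, HasDerivAt (fun t : ℝ => t ^ (k + 2) * (1 - t) ^ (m + 1)) (d t) t := by
      intro t _
      have h1 := (hasDerivAt_pow (k + 2) t)
      have h2 := ((hasDerivAt_id t).const_sub 1).pow (m + 1)
      refine (h1.mul h2).congr_deriv ?_
      simp [d]
      ring
    rw [intervalIntegral.integral_eq_sub_of_hasDerivAt hder (hdc.intervalIntegrable _ _)]
    simp
  rw [← hleft, hsw]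
  have hz : ∀ t ∈ Set.Ioi (0:ℝ) \ Set.Ioc 0 1, d t * (γ (Set.Icc t 1)).toReal = 0 := by
    intro t ht
    have : ¬ t ≤ 1 := fun h => ht.2 ⟨ht.1, h⟩
    simp [Set.Icc_eq_empty this]
  refine Eq.trans ?_ (setIntegral_eq_of_subset_of_forall_sdiff_eq_zero measurableSet_Ioi
    (fun t ht => ht.1) hz).symm
  refine setIntegral_congr_fun measurableSet_Ioc fun t ht => ?_
  have e : ∀ x, F x t = (Set.Ici t).indicator (fun _ => d t) x := by
    intro x
    simp [F, Set.indicator]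
  simp_rw [e]
  rw [integral_indicator measurableSet_Ici, setIntegral_const, smul_eq_mul, mul_comm]
  congr 1
  rw [measureReal_restrict_apply measurableSet_Ici, Measure.real]
  congr 2
  ext x
  simp only [Set.mem_inter_iff, Set.mem_Ioc, Set.mem_Ici, Set.mem_Icc]
  constructor
  · rintro ⟨a, b, c⟩; exact ⟨a, c⟩
  · rintro ⟨a, b⟩; exact ⟨a, ht.1.trans_le a, b⟩

lemma aux_pow_lim (u : ℝ) (j : ℕ) :
    Tendsto (fun n : ℕ => (1 - (n:ℝ)⁻¹ * u) ^ (n - j)) atTop (nhds (exp (-u))) := by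
  have h1 := Real.tendsto_one_add_div_pow_exp (-u)
  have h0 : Tendsto (fun n : ℕ => 1 - (n:ℝ)⁻¹ * u) atTop (nhds 1) := by
    have := (tendsto_inv_atTop_nhds_zero_nat (𝕜 := ℝ)).mul_const u
    simpa using this.const_sub 1
  have h2 := h1.mul ((h0.pow j).inv₀ (by simp))
  simp only [one_pow, inv_one, mul_one] at h2
  refine h2.congr' ?_
  filter_upwards [h0.eventually (lt_mem_nhds zero_lt_one), eventually_ge_atTop j] with n hn hj
  rw [pow_sub₀ _ hn.ne' hj]
  congr 2
  ring

lemma aux_int_s5 (k : ℕ) :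
    ∫ u in Set.Ioi (0:ℝ), (((k + 2 : ℕ) : ℝ) * u ^ (k + 1) * exp (-u) - u ^ (k + 2) * exp (-u)) * u⁻¹
      = (k.factorial : ℝ) := by
  have i1 := Real.GammaIntegral_convergent (s := (k:ℝ) + 1) (by positivity)
  have i2 := Real.GammaIntegral_convergent (s := ((k + 1 : ℕ):ℝ) + 1) (by positivity)
  have e : ∀ u ∈ Set.Ioi (0:ℝ),
      (((k + 2 : ℕ) : ℝ) * u ^ (k + 1) * exp (-u) - u ^ (k + 2) * exp (-u)) * u⁻¹ =
      ((k + 2 : ℕ) : ℝ) * (exp (-u) * u ^ ((k:ℝ) + 1 - 1)) -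
        exp (-u) * u ^ (((k + 1 : ℕ):ℝ) + 1 - 1) := by
    intro u hu
    have hu : 0 < u := hu
    rw [add_sub_cancel_right, add_sub_cancel_right, rpow_natCast, rpow_natCast]
    field_simp
    ring
  rw [setIntegral_congr_fun measurableSet_Ioi e, integral_sub (i1.const_mul _) i2,
    integral_const_mul, ← Real.Gamma_eq_integral (by positivity),
    ← Real.Gamma_eq_integral (by positivity), Real.Gamma_nat_eq_factorial,
    Real.Gamma_nat_eq_factorial, Nat.factorial_succ]
  push_cast
  ring

lemma aux_bound_int (k : ℕ) : IntegrableOn (fun u : ℝ =>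
    ((((k + 2 : ℕ) : ℝ) * u ^ (k + 1) + u ^ (k + 2)) * exp (-(1/2) * u)) *
      (1 + 8 * u ^ (-(3 / 2) : ℝ))) (Set.Ioi 0) := by
  have hi : ∀ s : ℝ, -1 < s → IntegrableOn (fun x : ℝ => x ^ s * exp (- (1/2) * x ^ (1:ℝ))) (Set.Ioi 0) :=
    fun s hs => integrableOn_rpow_mul_exp_neg_mul_rpow hs one_pos (by norm_num)
  have k0 : (0:ℝ) ≤ k := by positivity
  have h := ((((hi (k + 1 : ℕ) (by push_cast; linarith)).const_mul ((k + 2 : ℕ) : ℝ)).add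
    (hi (k + 2 : ℕ) (by push_cast; linarith))).add
    ((hi ((k + 1 : ℕ) + (-(3/2))) (by push_cast; linarith)).const_mul (8 * ((k + 2 : ℕ) : ℝ)))).add
    ((hi ((k + 2 : ℕ) + (-(3/2))) (by push_cast; linarith)).const_mul 8)
  refine Integrable.congr h ?_
  filter_upwards [ae_restrict_mem measurableSet_Ioi] with u hu
  have hu : 0 < u := hu
  simp only [Pi.add_apply]
  rw [rpow_add hu, rpow_add hu, rpow_natCast, rpow_natCast, rpow_one]
  ring

lemma aux_main (G : ℝ → ℝ) (hGm : Measurable G)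
    (hanti : ∀ s t, 0 < s → s ≤ t → G t ≤ G s) (hG0 : ∀ t, 0 ≤ G t)
    (hG1 : ∀ t, 1 < t → G t = 0)
    (hrat : ∀ c : ℝ, 0 < c →
      Tendsto (fun x => G (c * x) / G x) (nhdsWithin 0 (Set.Ioi 0)) (nhds c⁻¹))
    (δ : ℝ) (hδ : 0 < δ)
    (hpot : ∀ y u, 0 < y → y < δ → 0 < u → G (u * y) ≤ (1 + 8 * u ^ (-(3 / 2) : ℝ)) * G y)
    (k : ℕ) :
    Tendsto (fun n : ℕ => ((n:ℝ) ^ (k + 2) * ∫ t in Set.Ioi (0 : ℝ),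
      (((k + 2 : ℕ) : ℝ) * t ^ (k + 1) * (1 - t) ^ (n - (k + 2))
      - ((n - (k + 2) : ℕ) : ℝ) * t ^ (k + 2) * (1 - t) ^ (n - (k + 3))) * G t) / G ((n:ℝ)⁻¹))
      atTop (nhds (k.factorial : ℝ)) := by
  have hinv : Tendsto (fun n : ℕ => (n:ℝ)⁻¹) atTop (nhdsWithin 0 (Set.Ioi 0)) :=
    tendsto_inv_atTop_nhdsGT_zero.comp tendsto_natCast_atTop_atTop
  rw [← aux_int_s5 k]
  have hD : Tendsto (fun n : ℕ => ∫ u in Set.Ioi (0:ℝ),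
      (((k + 2 : ℕ) : ℝ) * u ^ (k + 1) * (1 - (n:ℝ)⁻¹ * u) ^ (n - (k + 2))
      - (((n - (k + 2) : ℕ) : ℝ) * (n:ℝ)⁻¹) * u ^ (k + 2) * (1 - (n:ℝ)⁻¹ * u) ^ (n - (k + 3)))
      * (G (u * (n:ℝ)⁻¹) / G ((n:ℝ)⁻¹))) atTop (nhds (∫ u in Set.Ioi (0:ℝ),
       (((k + 2 : ℕ) : ℝ) * u ^ (k + 1) * exp (-u) - u ^ (k + 2) * exp (-u)) * u⁻¹)) := by
    refine tendsto_integral_filter_of_dominated_convergence _ ?_ ?_ (aux_bound_int k) ?_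
    · refine Eventually.of_forall fun n => Measurable.aestronglyMeasurable ?_
      have : Measurable (fun u => G (u * (n:ℝ)⁻¹)) := hGm.comp (by fun_prop)
      fun_prop
    · filter_upwards [hinv.eventually (Ioo_mem_nhdsGT hδ), eventually_ge_atTop (2 * (k + 3))]
        with n hn hnk
      filter_upwards [ae_restrict_mem measurableSet_Ioi] with u hu
      have hu : 0 < u := hu
      have hn0 : (0:ℝ) < n := inv_pos.1 hn.1
      have hrp : 0 < u ^ (-(3 / 2) : ℝ) := rpow_pos_of_pos hu _
      rcases lt_or_ge (n:ℝ) u with hnu | hnu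
      · rw [hG1 (u * (n:ℝ)⁻¹) (by rw [← div_eq_mul_inv, one_lt_div hn0]; exact hnu)]
        simp only [zero_div, mul_zero, norm_zero]
        positivity
      have a0 : 0 ≤ 1 - (n:ℝ)⁻¹ * u := by
        rw [sub_nonneg, mul_comm, ← div_eq_mul_inv, div_le_one hn0]; exact hnu
      have hpb : ∀ j : ℕ, n ≤ 2 * j → (1 - (n:ℝ)⁻¹ * u) ^ j ≤ exp (-(1/2) * u) := by
        intro j hj
        have : 1 - (n:ℝ)⁻¹ * u ≤ exp (-((n:ℝ)⁻¹ * u)) := one_sub_le_exp_neg _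
        refine (pow_le_pow_left₀ a0 this j).trans ?_
        rw [← exp_nat_mul, exp_le_exp]
        have hj' : (n:ℝ) ≤ 2 * j := by exact_mod_cast hj
        have : (1/2 : ℝ) ≤ j * (n:ℝ)⁻¹ := by
          rw [← div_eq_mul_inv, le_div_iff₀ hn0]; linarith
        nlinarith
      have b1 := hpb (n - (k + 2)) (by omega)
      have b2 := hpb (n - (k + 3)) (by omega)
      have hm : ((n - (k + 2) : ℕ) : ℝ) * (n:ℝ)⁻¹ ≤ 1 := by
        rw [← div_eq_mul_inv, div_le_one hn0]
        exact_mod_cast Nat.sub_le _ _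
      have hratio : G (u * (n:ℝ)⁻¹) / G ((n:ℝ)⁻¹) ≤ 1 + 8 * u ^ (-(3 / 2) : ℝ) :=
        div_le_of_le_mul₀ (hG0 _) (by positivity) (hpot _ _ hn.1 hn.2 hu)
      rw [norm_mul, Real.norm_of_nonneg (div_nonneg (hG0 _) (hG0 _))]
      refine mul_le_mul ?_ hratio (div_nonneg (hG0 _) (hG0 _)) (by positivity)
      refine (norm_sub_le _ _).trans ?_
      rw [Real.norm_of_nonneg (by positivity), Real.norm_of_nonneg (by positivity), add_mul]
      refine add_le_add (mul_le_mul_of_nonneg_left b1 (by positivity)) ?_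
      refine mul_le_mul ?_ b2 (by positivity) (by positivity)
      exact mul_le_of_le_one_left (by positivity) hm
    · filter_upwards [ae_restrict_mem measurableSet_Ioi] with u hu
      have hm : Tendsto (fun n : ℕ => ((n - (k + 2) : ℕ) : ℝ) * (n:ℝ)⁻¹) atTop (nhds 1) := by
        have := ((tendsto_inv_atTop_nhds_zero_nat (𝕜 := ℝ)).const_mul ((k:ℝ) + 2)).const_sub 1
        simp only [mul_zero, sub_zero] at this
        refine this.congr' ?_
        filter_upwards [eventually_ge_atTop (k + 2)] with n hn
        have : (n:ℝ) ≠ 0 := by norm_cast; omega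
        rw [Nat.cast_sub hn]
        push_cast
        field_simp
      have := ((((aux_pow_lim u (k + 2)).const_mul (((k + 2 : ℕ) : ℝ) * u ^ (k + 1))).sub
        ((hm.mul_const (u ^ (k + 2))).mul (aux_pow_lim u (k + 3)))).mul ((hrat u hu).comp hinv))
      simpa only [one_mul, Function.comp] using this
  refine hD.congr' ?_
  filter_upwards [eventually_gt_atTop 0] with n hn
  have hn0 : (0:ℝ) < n := by exact_mod_cast hn
  have := integral_comp_mul_left_Ioi (fun t : ℝ => (((k + 2 : ℕ) : ℝ) * t ^ (k + 1) * (1 - t) ^ (n - (k + 2))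
      - ((n - (k + 2) : ℕ) : ℝ) * t ^ (k + 2) * (1 - t) ^ (n - (k + 3))) * G t) 0 (inv_pos.2 hn0)
  rw [mul_zero, inv_inv, smul_eq_mul] at this
  rw [pow_succ, mul_assoc, ← this, ← integral_const_mul, ← integral_div]
  congr 1
  ext u
  rw [mul_comm u, mul_pow, mul_pow]
  have e1 : (n:ℝ) ^ (k + 1) * ((n:ℝ)⁻¹) ^ (k + 1) = 1 := by
    rw [← mul_pow, mul_inv_cancel₀ hn0.ne', one_pow]
  rw [pow_succ ((n:ℝ)⁻¹) (k + 1)]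
  generalize ((n:ℝ)⁻¹) ^ (k + 1) = a at e1 ⊢
  generalize (1 - (n:ℝ)⁻¹ * u) ^ (n - (k + 2)) = b
  generalize (1 - (n:ℝ)⁻¹ * u) ^ (n - (k + 3)) = c
  linear_combination (-(((k + 2 : ℕ) : ℝ) * u ^ (k + 1) * b - (((n - (k + 2) : ℕ) : ℝ) * (n:ℝ)⁻¹) * u ^ (k + 2) * c) * (G ((n:ℝ)⁻¹ * u) / G ((n:ℝ)⁻¹))) * e1

theorem tauberian_multiplicity_alpha_one (ℓ : ℝ → ℝ)
    (hℓpos : ∀ t : ℝ, 0 < t → 0 < ℓ t)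
    (hℓsv : ∀ c : ℝ, 0 < c → Tendsto (fun t : ℝ => ℓ (c * t) / ℓ t) atTop (nhds 1))
    (L : ℝ) (hL : 0 < L)
    (γ : Measure ℝ) (hsupp : γ (Set.Ioc (0 : ℝ) 1)ᶜ = 0)
    (hint : ∫⁻ x in Set.Ioc (0 : ℝ) 1, ENNReal.ofReal x ∂γ < ⊤)
    (hlim : Tendsto (fun x : ℝ => (γ (Set.Icc x 1)).toReal * x / ℓ (1 / x))
      (nhdsWithin 0 (Set.Ioi 0)) (nhds L)) :
    ∀ r : ℕ, 2 ≤ r →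
      Tendsto (fun n : ℕ =>
          ((n.choose r : ℝ) * ∫ x in Set.Ioc (0 : ℝ) 1, x ^ r * (1 - x) ^ (n - r) ∂γ) /
            ((n : ℝ) * ℓ n))
        atTop (nhds (L / ((r : ℝ) * ((r : ℝ) - 1)))) := by
  intro r hr
  obtain ⟨k, rfl⟩ : ∃ k, r = k + 2 := ⟨r - 2, by omega⟩
  set G : ℝ → ℝ := fun x => (γ (Set.Icc x 1)).toReal with hG
  have hfin : ∀ s, 0 < s → γ (Set.Icc s 1) ≠ ⊤ := by
    intro s hs htop
    have h1 : ENNReal.ofReal s * γ (Set.Icc s 1) ≤ ∫⁻ x in Set.Ioc (0 : ℝ) 1, ENNReal.ofReal x ∂γ := by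
      rw [← setLIntegral_const]
      refine (setLIntegral_mono (by fun_prop) fun x hx => ENNReal.ofReal_le_ofReal hx.1).trans ?_
      exact lintegral_mono_set fun x hx => ⟨hs.trans_le hx.1, hx.2⟩
    rw [htop, ENNReal.mul_top (by simpa using hs)] at h1
    exact absurd (h1.trans_lt hint) (lt_irrefl _)
  have hanti : ∀ s t, 0 < s → s ≤ t → G t ≤ G s := fun s t hs hst =>
    ENNReal.toReal_mono (hfin s hs) (measure_mono (Set.Icc_subset_Icc_left hst))
  have hG0 : ∀ t, 0 ≤ G t := fun t => ENNReal.toReal_nonneg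
  have hG1 : ∀ t, 1 < t → G t = 0 := fun t ht => by
    simp [G, Set.Icc_eq_empty (not_le.2 ht)]
  have hGm : Measurable G := by
    have : Antitone (fun x : ℝ => γ (Set.Icc x 1)) := fun s t hst =>
      measure_mono (Set.Icc_subset_Icc_left hst)
    exact this.measurable.ennreal_toReal
  have hrat := aux_ratio ℓ G hℓpos hℓsv L hL hlim
  obtain ⟨δ, hδ, h4⟩ : ∃ δ > 0, ∀ y, 0 < y → y < δ → G (4⁻¹ * y) ≤ 8 * G y := by
    have h1 := (hrat 4⁻¹ (by norm_num)).eventually (gt_mem_nhds (show (4⁻¹ : ℝ)⁻¹ < 8 by norm_num))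
    have h2 := hlim.eventually (lt_mem_nhds hL)
    obtain ⟨δ, hδ, h⟩ := mem_nhdsGT_iff_exists_Ioo_subset.1 (h1.and h2)
    refine ⟨δ, hδ, fun y hy hyδ => ?_⟩
    obtain ⟨a, b⟩ := h ⟨hy, hyδ⟩
    have hpos : 0 < G y := by
      rcases (hG0 y).lt_or_eq with h | h
      · exact h
      · exfalso
        have hz : (γ (Set.Icc y 1)).toReal = 0 := h.symm
        simp [hz] at b
    exact ((div_lt_iff₀ hpos).1 a).le
  have hmain := aux_main G hGm hanti hG0 hG1 hrat δ hδ
    (fun y u hy hyδ hu => aux_potter_s5 G hanti hG0 δ h4 y u hy hyδ hu) k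
  have hinv : Tendsto (fun n : ℕ => (n:ℝ)⁻¹) atTop (nhdsWithin 0 (Set.Ioi 0)) :=
    tendsto_inv_atTop_nhdsGT_zero.comp tendsto_natCast_atTop_atTop
  have hl := hlim.comp hinv
  have hch : Tendsto (fun n : ℕ => (n.choose (k + 2) : ℝ) * ((n:ℝ)⁻¹) ^ (k + 2)) atTop
      (nhds (1 ^ (k + 2) / (k + 2).factorial)) := by
    refine ProbabilityTheory.tendsto_choose_mul_pow_atTop (k + 2) ?_
    refine tendsto_const_nhds.congr' ?_
    filter_upwards [eventually_gt_atTop 0] with n hn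
    have : (n:ℝ) ≠ 0 := by norm_cast; omega
    field_simp
  have hfinal := (hch.mul hmain).mul hl
  have hval : (1:ℝ) ^ (k + 2) / (k + 2).factorial * k.factorial * L =
      L / (((k + 2 : ℕ) : ℝ) * (((k + 2 : ℕ) : ℝ) - 1)) := by
    have : (k.factorial : ℝ) ≠ 0 := by positivity
    rw [Nat.factorial_succ, Nat.factorial_succ]
    have h3 : ((k + 2 : ℕ) : ℝ) - 1 = k + 1 := by push_cast; ring
    rw [h3]
    push_cast
    field_simp
    ring
  rw [hval] at hfinal
  refine hfinal.congr' ?_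
  filter_upwards [eventually_ge_atTop (k + 3), hl.eventually (lt_mem_nhds hL)] with n hn hpos
  have hn0 : (0:ℝ) < n := by norm_cast; omega
  have hGn : G ((n:ℝ)⁻¹) ≠ 0 := by
    intro h
    have hz : (γ (Set.Icc (n:ℝ)⁻¹ 1)).toReal = 0 := h
    simp [hz] at hpos
  have hln := (hℓpos n hn0).ne'
  obtain ⟨m, rfl⟩ : ∃ m, n = m + (k + 3) := ⟨n - (k + 3), by omega⟩
  have s1 : m + (k + 3) - (k + 2) = m + 1 := by omega
  have s2 : m + (k + 3) - (k + 3) = m := by omega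
  simp only [Function.comp]
  rw [s1, s2, aux_fubini_s5 γ hint k m]
  have hl1 : 1 / ((m + (k + 3) : ℕ) : ℝ)⁻¹ = ((m + (k + 3) : ℕ) : ℝ) := by simp
  rw [hl1]
  change _ * (_ / _) * (G _ * _ / _) = _
  generalize ((m + (k + 3) : ℕ) : ℝ) = N at *
  rw [inv_pow]
  generalize G N⁻¹ = g at *
  have hN : N ^ (k + 2) ≠ 0 := by positivity
  have hI : (∫ t in Set.Ioi (0 : ℝ), (((k + 2 : ℕ) : ℝ) * t ^ (k + 1) * (1 - t) ^ (m + 1)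
      - ((m + 1 : ℕ) : ℝ) * t ^ (k + 2) * (1 - t) ^ m) * (γ (Set.Icc t 1)).toReal) =
    ∫ t in Set.Ioi (0 : ℝ), (((k + 2 : ℕ) : ℝ) * t ^ (k + 1) * (1 - t) ^ (m + 1)
      - ((m + 1 : ℕ) : ℝ) * t ^ (k + 2) * (1 - t) ^ m) * G t := rfl
  rw [hI]
  field_simp
end

section
/- Let d > 0 and let S : [0,∞) → [0,∞) be a nondecreasing right-continuous function with S(0) = 0, S(t) → ∞ as t → ∞, and such that for every T ≥ 0, S(T) = dT + Σ_{0 < u ≤ T} (S(u) − S(u−)), where the sum is over the (countably many) jump times u in (0,T]. Let R ⊂ [0,∞) be the closure of the range {S(t) : t ≥ 0}. Let φ : [0,∞) → [0,1) be a strictly increasing, locally absolutely continuous function with φ(0) = 0, φ(y) → 1 as y → ∞, and φ(y) = ∫₀^y φ'(u) du for all y, where φ' is its a.e. derivative. Then the Lebesgue measure of φ(R) equals d ∫₀^∞ φ'(S(t)) dt. -/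
open Filter MeasureTheory Real Set

lemma aux_gap (S : ℝ → ℝ) (hS : Monotone S) (hS0 : S 0 = 0)
    (hrc : ∀ u : ℝ, 0 ≤ u → ContinuousWithinAt S (Set.Ici u) u) (T : ℝ) (hT : 0 ≤ T) :
    Icc 0 (S T) \ closure (S '' Ici 0) =
      ⋃ u : Set.Ioc (0 : ℝ) T, Ioo (Function.leftLim S u.1) (S u.1) := by
  ext y
  simp only [Set.mem_sdiff, mem_iUnion, mem_Icc, mem_Ioo]
  constructor
  · rintro ⟨⟨hy0, hyT⟩, hyR⟩
    have hne : ∀ t, 0 ≤ t → S t ≠ y := fun t ht h => hyR (subset_closure ⟨t, ht, h⟩)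
    set A := {t : ℝ | 0 ≤ t ∧ y ≤ S t} with hA
    have hTA : T ∈ A := ⟨hT, hyT⟩
    have hbd : BddBelow A := ⟨0, fun t ht => ht.1⟩
    set u := sInf A with hu
    have hu0 : 0 ≤ u := le_csInf ⟨T, hTA⟩ fun t ht => ht.1
    have huT : u ≤ T := csInf_le hbd hTA
    have hgt : ∀ t, u < t → y ≤ S t := by
      intro t ht
      obtain ⟨s, hs, hst⟩ := exists_lt_of_csInf_lt ⟨T, hTA⟩ ht
      exact hs.2.trans (hS hst.le)
    have hSu : y ≤ S u := by
      have h1 : Tendsto S (nhdsWithin u (Ioi u)) (nhds (S u)) :=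
        (hrc u hu0).mono_left (nhdsWithin_mono _ Ioi_subset_Ici_self)
      exact ge_of_tendsto h1 (by filter_upwards [self_mem_nhdsWithin] with t ht using hgt t ht)
    have hSu' : y < S u := lt_of_le_of_ne hSu (hne u hu0).symm
    have hupos : 0 < u := by
      rcases hu0.eq_or_lt with h | h
      · rw [← h, hS0] at hSu'; linarith
      · exact h
    refine ⟨⟨u, hupos, huT⟩, ?_, hSu'⟩
    have hl := hS.tendsto_leftLim u
    have hev : ∀ᶠ t in nhdsWithin u (Iio u), t ∈ Ioo 0 u := Ioo_mem_nhdsLT hupos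
    have hle : Function.leftLim S u ≤ y := by
      refine le_of_tendsto hl ?_
      filter_upwards [hev] with t ht
      by_contra! h
      exact absurd (csInf_le hbd (⟨ht.1.le, h.le⟩ : t ∈ A)) (not_le.2 ht.2)
    have hmem : Function.leftLim S u ∈ closure (S '' Ici 0) := by
      refine mem_closure_of_tendsto hl ?_
      filter_upwards [hev] with t ht using ⟨t, ht.1.le, rfl⟩
    exact lt_of_le_of_ne hle fun h => hyR (h ▸ hmem)
  · rintro ⟨⟨u, hu0, huT⟩, h1, h2⟩
    simp only at h1 h2
    have h3 := hS.le_leftLim hu0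
    rw [hS0] at h3
    refine ⟨⟨by linarith, h2.le.trans (hS huT)⟩, ?_⟩
    rw [_root_.mem_closure_iff]
    intro h
    obtain ⟨z, hz, t, ht, rfl⟩ := h _ isOpen_Ioo (⟨h1, h2⟩ : y ∈ Ioo _ _)
    rcases lt_or_ge t u with h | h
    · exact absurd (hS.le_leftLim h) (not_le.2 hz.1)
    · exact absurd (hS h) (not_le.2 hz.2)

lemma aux_vol (d : ℝ) (hd : 0 < d) (S : ℝ → ℝ) (hS : Monotone S) (hS0 : S 0 = 0)
    (hrc : ∀ u : ℝ, 0 ≤ u → ContinuousWithinAt S (Set.Ici u) u)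
    (hjump : ∀ T : ℝ, 0 ≤ T →
      S T = d * T + ∑' u : Set.Ioc (0 : ℝ) T, (S u.1 - Function.leftLim S u.1))
    (T : ℝ) (hT : 0 ≤ T) :
    volume (Icc 0 (S T) ∩ closure (S '' Ici 0)) = ENNReal.ofReal (d * T) := by
  have hST : 0 ≤ S T := hS0 ▸ hS hT
  set I : Set.Ioc (0 : ℝ) T → Set ℝ := fun u => Ioo (Function.leftLim S u.1) (S u.1) with hI
  have hdisj : Pairwise (fun i j => Disjoint (I i) (I j)) := by
    have key : ∀ i j : Set.Ioc (0 : ℝ) T, i.1 < j.1 → Disjoint (I i) (I j) := by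
      intro i j hij
      rw [Set.disjoint_left]
      intro x hx hx'
      have := hS.le_leftLim hij
      exact absurd (hx.2.trans_le this) (not_lt.2 hx'.1.le)
    intro i j hij
    rcases lt_or_gt_of_ne (fun h => hij (Subtype.ext h) : i.1 ≠ j.1) with h | h
    · exact key i j h
    · exact (key j i h).symm
  set D : Set (Set.Ioc (0 : ℝ) T) := {u | (I u).Nonempty} with hD
  have hpd : D.PairwiseDisjoint I := fun i _ j _ hij => hdisj hij
  have hDc : D.Countable := hpd.countable_of_isOpen (fun i _ => isOpen_Ioo) (fun i hi => hi)
  have hU : (⋃ u, I u) = ⋃ u ∈ D, I u := by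
    ext x
    simp only [mem_iUnion]
    constructor
    · rintro ⟨u, hu⟩; exact ⟨u, ⟨x, hu⟩, hu⟩
    · rintro ⟨u, _, hu⟩; exact ⟨u, hu⟩
  have hvol : volume (Icc 0 (S T) \ closure (S '' Ici 0)) = ∑' u, volume (I u) := by
    rw [aux_gap S hS hS0 hrc T hT]
    change volume (⋃ u, I u) = _
    rw [hU, measure_biUnion hDc hpd (fun i _ => measurableSet_Ioo)]
    refine tsum_subtype_eq_of_support_subset (f := fun u => volume (I u)) ?_
    intro u hu
    exact nonempty_of_measure_ne_zero hu
  have hreal : (volume (Icc 0 (S T) \ closure (S '' Ici 0))).toReal = S T - d * T := by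
    rw [hvol, ENNReal.tsum_toReal_eq (fun u => by simp [hI])]
    have : ∀ u, (volume (I u)).toReal = S u.1 - Function.leftLim S u.1 := by
      intro u
      simp only [hI, Real.volume_Ioo]
      exact ENNReal.toReal_ofReal (sub_nonneg.2 (hS.leftLim_le le_rfl))
    simp_rw [this]
    linarith [hjump T hT]
  have hadd := measure_inter_add_sdiff (μ := volume) (Icc 0 (S T))
    (isClosed_closure (s := S '' Ici 0)).measurableSet
  have hf : ∀ s ⊆ Icc 0 (S T), volume s ≠ ⊤ := fun s hs =>
    ((measure_mono hs).trans_lt measure_Icc_lt_top).ne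
  have h1 := hf _ (inter_subset_left (t := closure (S '' Ici 0)))
  have h2 := hf _ (sdiff_subset (t := closure (S '' Ici 0)))
  have := congrArg ENNReal.toReal hadd
  rw [ENNReal.toReal_add h1 h2, hreal, Real.volume_Icc, ENNReal.toReal_ofReal (by linarith)] at this
  rw [← ENNReal.ofReal_toReal h1]
  congr 1
  linarith

lemma aux_Iic (d : ℝ) (hd : 0 < d) (S : ℝ → ℝ) (hS : Monotone S) (hS0 : S 0 = 0)
    (hrc : ∀ u : ℝ, 0 ≤ u → ContinuousWithinAt S (Set.Ici u) u)
    (hSinfty : Tendsto S atTop atTop)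
    (hjump : ∀ T : ℝ, 0 ≤ T →
      S T = d * T + ∑' u : Set.Ioc (0 : ℝ) T, (S u.1 - Function.leftLim S u.1))
    (y : ℝ) :
    ENNReal.ofReal d * volume (S ⁻¹' Iic y ∩ Ioi 0) = volume (Iic y ∩ closure (S '' Ici 0)) := by
  have hR0 : closure (S '' Ici 0) ⊆ Ici 0 := by
    refine closure_minimal ?_ isClosed_Ici
    rintro _ ⟨t, ht, rfl⟩
    exact hS0 ▸ hS ht
  rcases lt_or_ge y 0 with hy | hy
  · have h1 : S ⁻¹' Iic y ∩ Ioi 0 = ∅ := by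
      ext t
      simp only [mem_inter_iff, mem_preimage, mem_Iic, mem_Ioi, mem_empty_iff_false, iff_false]
      rintro ⟨h, h'⟩
      have := hS h'.le
      linarith
    have h2 : Iic y ∩ closure (S '' Ici 0) = ∅ := by
      ext t
      simp only [mem_inter_iff, mem_Iic, mem_empty_iff_false, iff_false]
      rintro ⟨h, h'⟩
      have : 0 ≤ t := hR0 h'
      linarith
    simp [h1, h2]
  set A := {t : ℝ | 0 ≤ t ∧ S t ≤ y} with hA
  have h0A : (0 : ℝ) ∈ A := ⟨le_rfl, by rw [hS0]; exact hy⟩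
  have hbd : BddAbove A := by
    obtain ⟨b, hb⟩ := (hSinfty.eventually_gt_atTop y).exists
    refine ⟨b, fun t ht => ?_⟩
    by_contra! h
    have := hS h.le
    linarith [ht.2]
  set T := sSup A with hTdef
  have hT0 : 0 ≤ T := le_csSup hbd h0A
  have hlt : ∀ t, t < T → S t ≤ y := by
    intro t ht
    obtain ⟨s, hs, hst⟩ := exists_lt_of_lt_csSup ⟨0, h0A⟩ ht
    exact (hS hst.le).trans hs.2
  have hgt : ∀ t, T < t → y < S t := by
    intro t ht
    by_contra! h
    exact absurd (le_csSup hbd (⟨hT0.trans ht.le, h⟩ : t ∈ A)) (not_le.2 ht)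
  have hv1 : volume (S ⁻¹' Iic y ∩ Ioi 0) = ENNReal.ofReal T := by
    apply le_antisymm
    · have : S ⁻¹' Iic y ∩ Ioi 0 ⊆ Ioc 0 T := by
        rintro t ⟨h, h'⟩
        exact ⟨h', le_csSup hbd ⟨le_of_lt h', h⟩⟩
      simpa using measure_mono (μ := volume) this
    · have : Ioo 0 T ⊆ S ⁻¹' Iic y ∩ Ioi 0 := by
        rintro t ⟨h, h'⟩
        exact ⟨hlt t h', h⟩
      simpa using measure_mono (μ := volume) this
  rw [hv1, ← ENNReal.ofReal_mul hd.le]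
  have hcont : Continuous fun t : ℝ => ENNReal.ofReal (d * t) :=
    ENNReal.continuous_ofReal.comp (by fun_prop)
  apply le_antisymm
  · refine le_of_tendsto ((hcont.tendsto T).mono_left (nhdsWithin_le_nhds (s := Iio T))) ?_
    filter_upwards [self_mem_nhdsWithin] with t ht
    rcases lt_or_ge t 0 with h | h
    · rw [ENNReal.ofReal_of_nonpos (by nlinarith)]; exact zero_le
    · rw [← aux_vol d hd S hS hS0 hrc hjump t h]
      refine measure_mono (inter_subset_inter_left _ ?_)
      intro x hx
      exact hx.2.trans (hlt t ht)
  · refine ge_of_tendsto ((hcont.tendsto T).mono_left (nhdsWithin_le_nhds (s := Ioi T))) ?_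
    filter_upwards [self_mem_nhdsWithin] with t ht
    rw [← aux_vol d hd S hS hS0 hrc hjump t (hT0.trans (le_of_lt ht))]
    refine measure_mono ?_
    rintro x ⟨hx, hx'⟩
    exact ⟨⟨hR0 hx', le_trans hx (hgt t ht).le⟩, hx'⟩

lemma aux_map (d : ℝ) (hd : 0 < d) (S : ℝ → ℝ) (hS : Monotone S) (hS0 : S 0 = 0)
    (hrc : ∀ u : ℝ, 0 ≤ u → ContinuousWithinAt S (Set.Ici u) u)
    (hSinfty : Tendsto S atTop atTop)
    (hjump : ∀ T : ℝ, 0 ≤ T →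
      S T = d * T + ∑' u : Set.Ioc (0 : ℝ) T, (S u.1 - Function.leftLim S u.1)) :
    ENNReal.ofReal d • Measure.map S (volume.restrict (Ioi 0)) =
      volume.restrict (closure (S '' Ici 0)) := by
  have hiic : ∀ y, (ENNReal.ofReal d • Measure.map S (volume.restrict (Ioi 0))) (Iic y) =
      (volume.restrict (closure (S '' Ici 0))) (Iic y) := by
    intro y
    rw [Measure.smul_apply, Measure.map_apply hS.measurable measurableSet_Iic,
      Measure.restrict_apply (hS.measurable measurableSet_Iic),
      Measure.restrict_apply measurableSet_Iic, smul_eq_mul]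
    exact aux_Iic d hd S hS hS0 hrc hSinfty hjump y
  have hR0 : closure (S '' Ici 0) ⊆ Ici 0 := by
    refine closure_minimal ?_ isClosed_Ici
    rintro _ ⟨t, ht, rfl⟩
    exact hS0 ▸ hS ht
  have hfin : ∀ y, (volume.restrict (closure (S '' Ici 0))) (Iic y) ≠ ⊤ := by
    intro y
    rw [Measure.restrict_apply measurableSet_Iic]
    refine ((measure_mono (?_ : _ ⊆ Icc 0 y)).trans_lt measure_Icc_lt_top).ne
    rintro x ⟨h, h'⟩
    exact ⟨hR0 h', h⟩
  have hIoc : ∀ a b : ℝ, Ioc a b = Iic b \ Iic a := by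
    intro a b; ext x; simp [and_comm]
  refine Measure.ext_of_Ioc' _ _ ?_ ?_
  · intro a b hab
    refine ne_top_of_le_ne_top (hfin b) ?_
    rw [← hiic]
    exact measure_mono Ioc_subset_Iic_self
  · intro a b hab
    have hs : Iic a ⊆ Iic b := Iic_subset_Iic.2 hab.le
    rw [hIoc, measure_sdiff hs measurableSet_Iic.nullMeasurableSet (by rw [hiic]; exact hfin a),
      measure_sdiff hs measurableSet_Iic.nullMeasurableSet (hfin a), hiic, hiic]

lemma aux_nonneg (φ φ' : ℝ → ℝ)
    (hφmono : StrictMonoOn φ (Set.Ici 0))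
    (hφ'int : ∀ y : ℝ, 0 ≤ y → IntegrableOn φ' (Set.Ioc 0 y))
    (hφac : ∀ y : ℝ, 0 ≤ y → φ y = ∫ u in Set.Ioc (0 : ℝ) y, φ' u) :
    ∀ᵐ x ∂(volume.restrict (Ioi (0 : ℝ))), 0 ≤ φ' x := by
  rw [ae_restrict_iff' measurableSet_Ioi]
  have h : ∀ᵐ x : ℝ, ∀ n : ℕ, x ∈ uIcc (0 : ℝ) n → ∀ c ∈ uIcc (0 : ℝ) n,
      HasDerivAt (fun x => ∫ t in c..x, φ' t) (φ' x) x := by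
    rw [ae_all_iff]
    intro n
    refine IntervalIntegrable.ae_hasDerivAt_integral ?_
    rw [intervalIntegrable_iff_integrableOn_Ioc_of_le (Nat.cast_nonneg n)]
    exact hφ'int n (Nat.cast_nonneg n)
  filter_upwards [h] with x hx hx0
  obtain ⟨n, hn⟩ := exists_nat_ge x
  have hx0' : 0 < x := hx0
  have hder := hx n (by rw [uIcc_of_le (Nat.cast_nonneg n)]; exact ⟨hx0'.le, hn⟩) 0 left_mem_uIcc
  refine HasDerivWithinAt.nonneg_of_monotoneOn (s := Ici 0) (x := x) ?_ hder.hasDerivWithinAt ?_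
  · exact uniqueDiffWithinAt_iff_accPt.1 (uniqueDiffOn_Ici 0 x hx0'.le)
  · intro a ha b hb hab
    have h1 : ∀ c : ℝ, 0 ≤ c → ∫ t in (0 : ℝ)..c, φ' t = φ c := fun c hc => by
      rw [intervalIntegral.integral_of_le hc, hφac c hc]
    simp only [h1 a ha, h1 b hb]
    exact hφmono.monotoneOn ha hb hab

lemma aux_cont (φ φ' : ℝ → ℝ)
    (hφ'int : ∀ y : ℝ, 0 ≤ y → IntegrableOn φ' (Set.Ioc 0 y))
    (hφac : ∀ y : ℝ, 0 ≤ y → φ y = ∫ u in Set.Ioc (0 : ℝ) y, φ' u) :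
    ContinuousOn φ (Ici 0) := by
  intro x hx
  have hx' : (0 : ℝ) ≤ x := hx
  have h1 : ContinuousOn φ (Icc 0 (x + 1)) := by
    refine (intervalIntegral.continuousOn_primitive (μ := volume) (f := φ') ?_).congr ?_
    · rw [integrableOn_Icc_iff_integrableOn_Ioc]
      exact hφ'int _ (by linarith)
    · intro y hy
      exact hφac y hy.1
  refine (h1 x ⟨hx', by linarith⟩).mono_of_mem_nhdsWithin ?_
  exact mem_nhdsWithin.2 ⟨Iio (x + 1), isOpen_Iio, by simp, fun y hy => ⟨hy.2, le_of_lt hy.1⟩⟩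

lemma aux_lt_one (φ : ℝ → ℝ) (hφmono : StrictMonoOn φ (Set.Ici 0))
    (hφ1 : Tendsto φ atTop (nhds 1)) (y : ℝ) (hy : 0 ≤ y) : φ y < 1 := by
  have h1 : φ y < φ (y + 1) := hφmono hy (by simp; linarith) (by linarith)
  refine h1.trans_le (ge_of_tendsto hφ1 ?_)
  filter_upwards [eventually_ge_atTop (y + 1)] with t ht
  exact hφmono.monotoneOn (by simp; linarith) (by simp; linarith) ht

lemma aux_phimap (φ φ' : ℝ → ℝ)
    (hφmono : StrictMonoOn φ (Set.Ici 0))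
    (hφ0 : φ 0 = 0)
    (hφ1 : Tendsto φ atTop (nhds 1))
    (hφ'int : ∀ y : ℝ, 0 ≤ y → IntegrableOn φ' (Set.Ioc 0 y))
    (hφac : ∀ y : ℝ, 0 ≤ y → φ y = ∫ u in Set.Ioc (0 : ℝ) y, φ' u) :
    volume.restrict (Ioo (0 : ℝ) 1) = Measure.map φ
      ((volume.withDensity (fun u => ENNReal.ofReal (φ' u))).restrict (Ioi 0)) := by
  set ν := volume.withDensity (fun u => ENNReal.ofReal (φ' u)) with hν
  have hnn := aux_nonneg φ φ' hφmono hφ'int hφac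
  have hc := aux_cont φ φ' hφ'int hφac
  have hpos : ∀ y, 0 < y → 0 < φ y := fun y hy => by
    have := hφmono (mem_Ici.2 le_rfl) hy.le hy
    rwa [hφ0] at this
  have hνI : ∀ y : ℝ, 0 ≤ y → ν (Ioc 0 y) = ENNReal.ofReal (φ y) := by
    intro y hy
    rw [hν, withDensity_apply _ measurableSet_Ioc, hφac y hy,
      ofReal_integral_eq_lintegral_ofReal (hφ'int y hy)]
    exact ae_restrict_of_ae_restrict_of_subset Ioc_subset_Ioi_self hnn
  have hm : AEMeasurable φ (ν.restrict (Ioi 0)) :=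
    aemeasurable_restrict_of_monotoneOn measurableSet_Ioi
      (hφmono.monotoneOn.mono Ioi_subset_Ici_self)
  refine Measure.ext_of_Iic _ _ fun a => ?_
  rw [Measure.map_apply_of_aemeasurable hm measurableSet_Iic,
    Measure.restrict_apply' measurableSet_Ioi, Measure.restrict_apply measurableSet_Iic]
  rcases le_or_gt a 0 with ha | ha
  · have h1 : Iic a ∩ Ioo 0 1 = ∅ := by
      ext t
      simp only [mem_inter_iff, mem_Iic, mem_Ioo, mem_empty_iff_false, iff_false]
      rintro ⟨h, h', _⟩
      linarith
    have h2 : φ ⁻¹' Iic a ∩ Ioi 0 = ∅ := by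
      ext t
      simp only [mem_inter_iff, mem_preimage, mem_Iic, mem_Ioi, mem_empty_iff_false, iff_false]
      rintro ⟨h, h'⟩
      linarith [hpos t h']
    rw [h1, h2]; simp
  rcases lt_or_ge a 1 with ha1 | ha1
  · obtain ⟨b, hb0, hb⟩ : ∃ b, 0 ≤ b ∧ a < φ b :=
      ((eventually_ge_atTop 0).and (hφ1.eventually_const_lt ha1)).exists
    obtain ⟨y, hy, rfl⟩ : a ∈ φ '' Icc 0 b :=
      intermediate_value_Icc hb0 (hc.mono Icc_subset_Ici_self) ⟨by rw [hφ0]; exact ha.le, hb.le⟩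
    have h1 : Iic (φ y) ∩ Ioo 0 1 = Ioc 0 (φ y) := by
      ext t
      simp only [mem_inter_iff, mem_Iic, mem_Ioo, mem_Ioc]
      constructor
      · rintro ⟨h, h', _⟩; exact ⟨h', h⟩
      · rintro ⟨h, h'⟩; exact ⟨h', h, h'.trans_lt ha1⟩
    have h2 : φ ⁻¹' Iic (φ y) ∩ Ioi 0 = Ioc 0 y := by
      ext t
      simp only [mem_inter_iff, mem_preimage, mem_Iic, mem_Ioi, mem_Ioc]
      constructor
      · rintro ⟨h, h'⟩; exact ⟨h', (hφmono.le_iff_le h'.le hy.1).1 h⟩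
      · rintro ⟨h, h'⟩; exact ⟨(hφmono.le_iff_le h.le hy.1).2 h', h⟩
    rw [h1, h2, hνI y hy.1]; simp
  · have h1 : Iic a ∩ Ioo 0 1 = Ioo 0 1 := by
      apply inter_eq_right.2
      intro t ht
      exact (ht.2.trans_le ha1).le
    have h2 : φ ⁻¹' Iic a ∩ Ioi 0 = ⋃ n : ℕ, Ioc (0 : ℝ) n := by
      ext t
      simp only [mem_inter_iff, mem_preimage, mem_Iic, mem_Ioi, mem_Ioc, mem_iUnion]
      constructor
      · rintro ⟨h, h'⟩
        obtain ⟨n, hn⟩ := exists_nat_ge t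
        exact ⟨n, h', hn⟩
      · rintro ⟨n, h, h'⟩
        exact ⟨(aux_lt_one φ hφmono hφ1 t h.le).le.trans ha1, h⟩
    rw [h1, h2]
    have ht : Tendsto (fun n : ℕ => ν (Ioc (0 : ℝ) n)) atTop (nhds (ν (⋃ n : ℕ, Ioc (0 : ℝ) n))) :=
      tendsto_measure_iUnion_atTop (fun i j hij =>
        Ioc_subset_Ioc_right (by exact_mod_cast hij))
    have ht2 : Tendsto (fun n : ℕ => ν (Ioc (0 : ℝ) n)) atTop (nhds (ENNReal.ofReal 1)) := by
      simp_rw [fun n : ℕ => hνI n (Nat.cast_nonneg n)]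
      exact (ENNReal.continuous_ofReal.tendsto 1).comp
        (hφ1.comp tendsto_natCast_atTop_atTop)
    rw [tendsto_nhds_unique ht ht2]; simp

lemma aux_image (φ φ' : ℝ → ℝ)
    (hφmono : StrictMonoOn φ (Set.Ici 0))
    (hφ0 : φ 0 = 0)
    (hφ1 : Tendsto φ atTop (nhds 1))
    (hφ'int : ∀ y : ℝ, 0 ≤ y → IntegrableOn φ' (Set.Ioc 0 y))
    (hφac : ∀ y : ℝ, 0 ≤ y → φ y = ∫ u in Set.Ioc (0 : ℝ) y, φ' u)
    (R : Set ℝ) (hR : MeasurableSet R) (hR0 : R ⊆ Ici 0) :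
    volume (φ '' R) = ∫⁻ u in R, ENNReal.ofReal (φ' u) ∧ volume (φ '' R) ≤ 1 := by
  have hmap := aux_phimap φ φ' hφmono hφ0 hφ1 hφ'int hφac
  set ν := volume.withDensity (fun u => ENNReal.ofReal (φ' u)) with hν
  have hm : AEMeasurable φ (ν.restrict (Ioi 0)) :=
    aemeasurable_restrict_of_monotoneOn measurableSet_Ioi
      (hφmono.monotoneOn.mono Ioi_subset_Ici_self)
  have hc := aux_cont φ φ' hφ'int hφac
  have hmeas : MeasurableSet (φ '' R) :=
    hR.image_of_continuousOn_injOn (hc.mono hR0) (hφmono.injOn.mono hR0)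
  have hsub : φ '' R ⊆ Ico 0 1 := by
    rintro _ ⟨y, hy, rfl⟩
    refine ⟨?_, aux_lt_one φ hφmono hφ1 y (hR0 hy)⟩
    rw [← hφ0]
    exact hφmono.monotoneOn (mem_Ici.2 le_rfl) (hR0 hy) (hR0 hy)
  constructor
  · have e1 : volume (φ '' R) = volume.restrict (Ioo (0 : ℝ) 1) (φ '' R) := by
      rw [restrict_Ioo_eq_restrict_Ico, Measure.restrict_apply hmeas, inter_eq_left.2 hsub]
    have e2 : φ ⁻¹' (φ '' R) ∩ Ioi 0 = R ∩ Ioi 0 := by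
      ext t
      constructor
      · rintro ⟨⟨s, hs, hst⟩, ht⟩
        have := hφmono.injOn (hR0 hs) (mem_Ici.2 (le_of_lt ht)) hst
        exact ⟨this ▸ hs, ht⟩
      · rintro ⟨h, ht⟩
        exact ⟨⟨t, h, rfl⟩, ht⟩
    rw [e1, hmap, Measure.map_apply_of_aemeasurable hm hmeas,
      Measure.restrict_apply' measurableSet_Ioi, e2, hν,
      withDensity_apply _ (hR.inter measurableSet_Ioi)]
    refine setLIntegral_congr ?_
    have : (R ∩ Ioi 0 : Set ℝ) =ᵐ[volume] (R ∩ Ici 0 : Set ℝ) :=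
      (ae_eq_refl R).inter Ioi_ae_eq_Ici
    rwa [inter_eq_left.2 hR0] at this
  · simpa using measure_mono (μ := volume) hsub

lemma aux_main_s6 (d : ℝ) (hd : 0 < d)
    (S : ℝ → ℝ) (hS : Monotone S) (hS0 : S 0 = 0)
    (hrc : ∀ u : ℝ, 0 ≤ u → ContinuousWithinAt S (Set.Ici u) u)
    (hSinfty : Tendsto S atTop atTop)
    (hjump : ∀ T : ℝ, 0 ≤ T →
      S T = d * T + ∑' u : Set.Ioc (0 : ℝ) T, (S u.1 - Function.leftLim S u.1))
    (φ φ' : ℝ → ℝ)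
    (hφmono : StrictMonoOn φ (Set.Ici 0))
    (hφ0 : φ 0 = 0)
    (hφ1 : Tendsto φ atTop (nhds 1))
    (hφ'int : ∀ y : ℝ, 0 ≤ y → IntegrableOn φ' (Set.Ioc 0 y))
    (hφac : ∀ y : ℝ, 0 ≤ y → φ y = ∫ u in Set.Ioc (0 : ℝ) y, φ' u) :
    volume (φ '' closure (S '' Set.Ici 0)) =
      ENNReal.ofReal (d * ∫ t in Set.Ioi (0 : ℝ), φ' (S t)) := by
  have hR0 : closure (S '' Ici 0) ⊆ Ici 0 := by
    refine closure_minimal ?_ isClosed_Ici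
    rintro _ ⟨t, ht, rfl⟩
    exact hS0 ▸ hS ht
  have hmap := aux_map d hd S hS hS0 hrc hSinfty hjump
  obtain ⟨him, hle⟩ := aux_image φ φ' hφmono hφ0 hφ1 hφ'int hφac _
    (isClosed_closure (s := S '' Ici 0)).measurableSet hR0
  have hnn := aux_nonneg φ φ' hφmono hφ'int hφac
  have hd' : ENNReal.ofReal d ≠ 0 := by simpa using hd
  have hac : Measure.map S (volume.restrict (Ioi 0)) ≪ volume.restrict (Ioi 0) := by
    have h1 : Measure.map S (volume.restrict (Ioi 0)) ≪
        volume.restrict (closure (S '' Ici 0)) := by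
      intro s hs
      rw [← hmap, Measure.smul_apply, smul_eq_mul, mul_eq_zero] at hs
      exact hs.resolve_left hd'
    refine h1.trans ?_
    rw [restrict_Ioi_eq_restrict_Ici]
    exact (Measure.restrict_mono hR0 le_rfl).absolutelyContinuous
  have hsm : AEStronglyMeasurable φ' (volume.restrict (Ioi 0)) := by
    have : Ioi (0 : ℝ) = ⋃ n : ℕ, Ioc (0 : ℝ) n := by
      ext t
      simp only [mem_Ioi, mem_Ioc, mem_iUnion]
      constructor
      · intro h'
        obtain ⟨n, hn⟩ := exists_nat_ge t
        exact ⟨n, h', hn⟩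
      · rintro ⟨n, h, _⟩
        exact h
    rw [this, aestronglyMeasurable_iUnion_iff]
    exact fun n => (hφ'int n (Nat.cast_nonneg n)).aestronglyMeasurable
  have hSm : AEMeasurable S (volume.restrict (Ioi 0)) := hS.measurable.aemeasurable
  have hsm' := hsm.mono_ac hac
  have hcomp : AEStronglyMeasurable (fun t => φ' (S t)) (volume.restrict (Ioi 0)) :=
    hsm'.comp_aemeasurable hSm
  have hnn' : ∀ᵐ t ∂(volume.restrict (Ioi (0 : ℝ))), 0 ≤ φ' (S t) :=
    ae_of_ae_map hSm (hac.ae_le hnn)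
  have hL : volume (φ '' closure (S '' Set.Ici 0)) =
      ENNReal.ofReal d * ∫⁻ t in Ioi 0, ENNReal.ofReal (φ' (S t)) := by
    rw [him, ← hmap, lintegral_smul_measure, smul_eq_mul,
      lintegral_map' hsm'.aemeasurable.ennreal_ofReal hSm]
  have hfin : ∫⁻ t in Ioi 0, ENNReal.ofReal (φ' (S t)) ≠ ⊤ := by
    intro h
    rw [hL, h, ENNReal.mul_top hd'] at hle
    simp at hle
  have hint : Integrable (fun t => φ' (S t)) (volume.restrict (Ioi 0)) :=
    ⟨hcomp, (hasFiniteIntegral_iff_ofReal hnn').2 hfin.lt_top⟩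
  rw [hL, ENNReal.ofReal_mul hd.le, ofReal_integral_eq_lintegral_ofReal hint hnn']


/-- If `S` is a nondecreasing right-continuous function on `[0,∞)` with `S 0 = 0`,
`S(t) → ∞`, and pure-jump-plus-drift decomposition
`S(T) = dT + ∑_{0<u≤T} (S(u)-S(u-))` for a drift `d > 0`, `R` is the closure of the
range of `S`, and `φ : [0,∞) → [0,1)` is a strictly increasing locally absolutely
continuous function with `φ(0)=0`, `φ(y)→1` and `φ(y) = ∫₀^y φ'`, then the Lebesgue
measure of `φ(R)` equals `d ∫₀^∞ φ'(S t) dt`. -/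
theorem lebesgue_measure_transformed_range (d : ℝ) (hd : 0 < d)
    (S : ℝ → ℝ) (hSmono : MonotoneOn S (Set.Ici 0)) (hS0 : S 0 = 0)
    (hScadlag : ∀ u : ℝ, 0 ≤ u → ContinuousWithinAt S (Set.Ici u) u)
    (hSinfty : Tendsto S atTop atTop)
    (hjump : ∀ T : ℝ, 0 ≤ T →
      S T = d * T + ∑' u : Set.Ioc (0 : ℝ) T, (S u.1 - Function.leftLim S u.1))
    (φ φ' : ℝ → ℝ)
    (hφmono : StrictMonoOn φ (Set.Ici 0))
    (hφ0 : φ 0 = 0)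
    (hφ1 : Tendsto φ atTop (nhds 1))
    (hφ'int : ∀ y : ℝ, 0 ≤ y → IntegrableOn φ' (Set.Ioc 0 y))
    (hφac : ∀ y : ℝ, 0 ≤ y → φ y = ∫ u in Set.Ioc (0 : ℝ) y, φ' u) :
    volume (φ '' closure (S '' Set.Ici 0)) =
      ENNReal.ofReal (d * ∫ t in Set.Ioi (0 : ℝ), φ' (S t)) := by
  set S' : ℝ → ℝ := fun t => S (max t 0) with hS'
  have heq : ∀ t, 0 ≤ t → S' t = S t := fun t ht => by simp only [hS', max_eq_left ht]
  have hmono : Monotone S' := fun a b hab =>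
    hSmono (le_max_right a 0) (le_max_right b 0) (max_le_max_right 0 hab)
  have hleft : ∀ u, 0 < u → Function.leftLim S u = Function.leftLim S' u := by
    intro u hu
    refine leftLim_eq_of_tendsto ((hmono.tendsto_leftLim u).congr' ?_)
    filter_upwards [Ioo_mem_nhdsLT hu] with t ht using heq t ht.1.le
  have himg : S' '' Ici 0 = S '' Ici 0 := image_congr fun t ht => heq t ht
  have hintg : ∫ t in Set.Ioi (0 : ℝ), φ' (S t) = ∫ t in Set.Ioi (0 : ℝ), φ' (S' t) :=
    setIntegral_congr_fun measurableSet_Ioi fun t ht => by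
      simp only [heq t (le_of_lt ht)]
  rw [← himg, hintg]
  refine aux_main_s6 d hd S' hmono (by rw [heq 0 le_rfl, hS0]) ?_ ?_ ?_ φ φ' hφmono hφ0 hφ1
    hφ'int hφac
  · intro u hu
    exact (hScadlag u hu).congr (fun t ht => heq t (le_trans hu ht)) (heq u hu)
  · refine hSinfty.congr' ?_
    filter_upwards [eventually_ge_atTop 0] with t ht using (heq t ht).symm
  · intro T hT
    rw [heq T hT, hjump T hT]
    congr 1
    refine tsum_congr fun u => ?_
    rw [heq u.1 u.2.1.le, hleft u.1 u.2.1]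
end

section
/- Let (m_k)_{k≥0} and (Φ_k)_{k≥0} be sequences of real numbers with m_0 = 1, Φ_0 = 0, and Φ_k ≠ 0 for all k ≥ 1. If for every integer k ≥ 1 the recursion m_k Φ_k = Σ_{j=0}^{k−1} (k!/j!) (1 − Φ_j) m_j holds, then for every k ≥ 1, m_k = k! / (Φ_1 Φ_2 ⋯ Φ_k). -/
/-- If `m 0 = 1`, `Φ 0 = 0`, `Φ k ≠ 0` for `k ≥ 1`, and the recursion
`m k * Φ k = ∑_{j=0}^{k-1} (k!/j!) (1 - Φ j) m j` holds for every `k ≥ 1`,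
then `m k = k! / (Φ 1 ⋯ Φ k)` for every `k ≥ 1`. -/
theorem moment_recursion_solution (m Φ : ℕ → ℝ) (hm0 : m 0 = 1) (hΦ0 : Φ 0 = 0)
    (hΦ : ∀ k : ℕ, 1 ≤ k → Φ k ≠ 0)
    (hrec : ∀ k : ℕ, 1 ≤ k →
      m k * Φ k = ∑ j ∈ Finset.range k,
        ((Nat.factorial k : ℝ) / (Nat.factorial j : ℝ)) * (1 - Φ j) * m j) :
    ∀ k : ℕ, 1 ≤ k → m k = (Nat.factorial k : ℝ) / ∏ j ∈ Finset.Icc 1 k, Φ j := by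
  have hrec' : ∀ k : ℕ, m k * Φ k = ∑ j ∈ Finset.range k,
      ((Nat.factorial k : ℝ) / (Nat.factorial j : ℝ)) * (1 - Φ j) * m j := by
    intro k
    rcases Nat.eq_zero_or_pos k with rfl | hk
    · simp [hΦ0]
    · exact hrec k hk
  have step : ∀ k : ℕ, m (k + 1) * Φ (k + 1) = ((k : ℝ) + 1) * m k := by
    intro k
    have hf : (Nat.factorial k : ℝ) ≠ 0 := by exact_mod_cast Nat.factorial_ne_zero k
    have h1 : ∑ j ∈ Finset.range k,
        ((Nat.factorial (k + 1) : ℝ) / (Nat.factorial j : ℝ)) * (1 - Φ j) * m j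
        = ((k : ℝ) + 1) * (m k * Φ k) := by
      rw [hrec' k, Finset.mul_sum]
      refine Finset.sum_congr rfl fun j _ => ?_
      rw [Nat.factorial_succ]
      push_cast
      ring
    have h2 : (Nat.factorial (k + 1) : ℝ) / (Nat.factorial k : ℝ) = (k : ℝ) + 1 := by
      rw [Nat.factorial_succ]
      push_cast
      field_simp
    rw [hrec' (k + 1), Finset.sum_range_succ, h1, h2]
    ring
  have main : ∀ k : ℕ, m k = (Nat.factorial k : ℝ) / ∏ j ∈ Finset.Icc 1 k, Φ j := by
    intro k
    induction k with
    | zero => simp [hm0]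
    | succ k ih =>
      have hne := hΦ (k + 1) (by omega)
      rw [Finset.prod_Icc_succ_top (by omega), eq_div_of_mul_eq hne (step k), ih,
        Nat.factorial_succ, ← mul_div_assoc, div_div]
      push_cast
      rfl
  exact fun k _ => main k
end

section
/- Let 0 < α < 1 and θ > 0, and let ν̃ be the measure on (0,1) with Lebesgue density f(x) = α x^{−α−1}(1−x)^θ + θ x^{−α}(1−x)^{θ−1} (so that ν̃([x,1)) = x^{−α}(1−x)^θ for 0 < x < 1). Then for every real s > 0, ∫₀¹ (1 − (1−x)^s) f(x) dx = s Γ(1−α) Γ(s+θ) / Γ(s + 1 − α + θ), where Γ is the Gamma function. -/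
open Real MeasureTheory

lemma real_beta_aux (a b : ℝ) (ha : 0 < a) (hb : 0 < b) :
    IntervalIntegrable (fun x : ℝ => x ^ (a - 1) * (1 - x) ^ (b - 1)) volume 0 1 ∧
    ∫ x in (0 : ℝ)..1, x ^ (a - 1) * (1 - x) ^ (b - 1) =
      Real.Gamma a * Real.Gamma b / Real.Gamma (a + b) := by
  have key : ∀ x ∈ Set.uIcc (0 : ℝ) 1,
      (x : ℂ) ^ ((a : ℂ) - 1) * (1 - (x : ℂ)) ^ ((b : ℂ) - 1) =
      ((x ^ (a - 1) * (1 - x) ^ (b - 1) : ℝ) : ℂ) := by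
    intro x hx
    rw [Set.uIcc_of_le zero_le_one] at hx
    rw [Complex.ofReal_mul, Complex.ofReal_cpow hx.1, Complex.ofReal_cpow (by linarith [hx.2])]
    push_cast
    rfl
  have hint := Complex.betaIntegral_convergent (u := (a : ℂ)) (v := (b : ℂ)) (by simpa) (by simpa)
  have hint2 : IntervalIntegrable
      (fun x : ℝ => ((x ^ (a - 1) * (1 - x) ^ (b - 1) : ℝ) : ℂ)) volume 0 1 :=
    hint.congr (fun x hx => key x (Set.uIoc_subset_uIcc hx))
  constructor
  · rw [intervalIntegrable_iff] at hint2 ⊢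
    simpa [IntegrableOn] using hint2.re
  · have h := ProbabilityTheory.beta_eq_betaIntegralReal a b ha hb
    rw [ProbabilityTheory.beta] at h
    rw [h, Complex.betaIntegral, intervalIntegral.integral_congr key,
      intervalIntegral.integral_ofReal, Complex.ofReal_re]

lemma cont_aux (α θ s : ℝ) (hα0 : 0 < α) (hα1 : α < 1) (hθ : 0 < θ) (hs : 0 < s) :
    ContinuousOn (fun x : ℝ => (1 - (1 - x) ^ s) * x ^ (-α) * (1 - x) ^ θ) (Set.Icc 0 1) := by
  have h1 : ∀ t : ℝ, 0 < t → Continuous (fun x : ℝ => (1 - x) ^ t) := fun t ht =>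
    (continuous_const.sub continuous_id).rpow_const (fun x => Or.inr ht.le)
  apply ContinuousOn.mul _ (h1 θ hθ).continuousOn
  intro x hx
  rcases hx.1.eq_or_lt with h0 | h0
  · subst h0
    have hd : HasDerivAt (fun x : ℝ => 1 - (1 - x) ^ s) (-(-1 * s * (1 - 0) ^ (s - 1))) 0 :=
      (((hasDerivAt_id (0 : ℝ)).const_sub 1).rpow_const (Or.inl (by simp))).const_sub 1
    have ht := (hasDerivAt_iff_tendsto_slope.1 hd).mono_left
      (nhdsWithin_mono (0 : ℝ) (s := Set.Ioi 0) (fun y hy => ne_of_gt hy))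
    have hp : Filter.Tendsto (fun x : ℝ => x ^ (1 - α)) (nhdsWithin 0 (Set.Ioi 0)) (nhds 0) := by
      have := (Real.continuousAt_rpow_const 0 (1 - α) (Or.inr (by linarith))).tendsto
      rw [Real.zero_rpow (by linarith)] at this
      exact this.mono_left nhdsWithin_le_nhds
    have hm := ht.mul hp
    rw [mul_zero] at hm
    have hIoi : ContinuousWithinAt (fun x : ℝ => (1 - (1 - x) ^ s) * x ^ (-α)) (Set.Ioi 0) 0 := by
      unfold ContinuousWithinAt
      simp only [sub_zero, Real.one_rpow, sub_self, zero_mul]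
      refine hm.congr' ?_
      filter_upwards [self_mem_nhdsWithin] with y hy
      have hy : 0 < y := hy
      rw [slope_def_field]
      have : y ^ (1 - α) = y * y ^ (-α) := by
        rw [sub_eq_add_neg, Real.rpow_add hy, Real.rpow_one]
      rw [this]
      simp only [sub_zero, Real.one_rpow, sub_self]
      field_simp
    exact (continuousWithinAt_Ioi_iff_Ici.1 hIoi).mono Set.Icc_subset_Ici_self
  · exact (((continuous_const.sub (h1 s hs)).continuousAt).mul
      (Real.continuousAt_rpow_const x (-α) (Or.inl h0.ne'))).continuousWithinAt

lemma deriv_aux (α θ s x : ℝ) (hx : x ∈ Set.Ioo (0 : ℝ) 1) :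
    HasDerivAt (fun x : ℝ => (1 - (1 - x) ^ s) * x ^ (-α) * (1 - x) ^ θ)
      (s * (x ^ ((1 - α) - 1) * (1 - x) ^ ((s + θ) - 1)) - (1 - (1 - x) ^ s) *
        (α * x ^ (-α - 1) * (1 - x) ^ θ + θ * x ^ (-α) * (1 - x) ^ (θ - 1))) x := by
  have hx1 : 0 < 1 - x := by linarith [hx.2]
  have h1 : ∀ t : ℝ, HasDerivAt (fun x : ℝ => (1 - x) ^ t) (-1 * t * (1 - x) ^ (t - 1)) x :=
    fun t => ((hasDerivAt_id x).const_sub 1).rpow_const (Or.inl hx1.ne')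
  have h2 : HasDerivAt (fun x : ℝ => x ^ (-α)) (-α * x ^ (-α - 1)) x :=
    Real.hasDerivAt_rpow_const (Or.inl hx.1.ne')
  convert! (((h1 s).const_sub 1).mul h2).mul (h1 θ) using 1
  have e1 : (1 - α) - 1 = -α := by ring
  have e2 : (1 - x) ^ ((s + θ) - 1) = (1 - x) ^ (s - 1) * (1 - x) ^ θ := by
    rw [← Real.rpow_add hx1]; ring_nf
  rw [e1, e2]
  simp only [Pi.mul_apply]
  ring

/-- For `0 < α < 1`, `θ > 0` and the density
`f(x) = α x^{-α-1} (1-x)^θ + θ x^{-α} (1-x)^{θ-1}` on `(0,1)`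
(so that `ν̃([x,1)) = x^{-α}(1-x)^θ`), one has for every `s > 0`
`∫₀¹ (1 - (1-x)^s) f(x) dx = s Γ(1-α) Γ(s+θ) / Γ(s+1-α+θ)`. -/
theorem laplace_exponent_two_parameter (α θ : ℝ) (hα0 : 0 < α) (hα1 : α < 1) (hθ : 0 < θ)
    (f : ℝ → ℝ)
    (hf : ∀ x ∈ Set.Ioo (0 : ℝ) 1,
      f x = α * x ^ (-α - 1) * (1 - x) ^ θ + θ * x ^ (-α) * (1 - x) ^ (θ - 1)) :
    ∀ s : ℝ, 0 < s →
      ∫ x in Set.Ioo (0 : ℝ) 1, (1 - (1 - x) ^ s) * f x =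
        s * Real.Gamma (1 - α) * Real.Gamma (s + θ) / Real.Gamma (s + 1 - α + θ) := by
  intro s hs
  obtain ⟨bi, bv⟩ := real_beta_aux (1 - α) (s + θ) (by linarith) (by linarith)
  set h : ℝ → ℝ := fun x => x ^ ((1 - α) - 1) * (1 - x) ^ ((s + θ) - 1) with hh
  set G : ℝ → ℝ := fun x => (1 - (1 - x) ^ s) * x ^ (-α) * (1 - x) ^ θ with hG
  set g : ℝ → ℝ := fun x => (1 - (1 - x) ^ s) *
        (α * x ^ (-α - 1) * (1 - x) ^ θ + θ * x ^ (-α) * (1 - x) ^ (θ - 1)) with hg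
  have hcontF : ContinuousOn (fun x => s * (∫ t in (0 : ℝ)..x, h t) - G x) (Set.Icc 0 1) := by
    refine ContinuousOn.sub (continuousOn_const.mul ?_) (cont_aux α θ s hα0 hα1 hθ hs)
    have := intervalIntegral.continuousOn_primitive_interval' bi (Set.left_mem_uIcc)
    rwa [Set.uIcc_of_le zero_le_one] at this
  have hcont : ContinuousOn h (Set.Ioo 0 1) := by
    intro x hx
    have hx1 : 1 - x ≠ 0 := by linarith [hx.2]
    apply ContinuousAt.continuousWithinAt
    exact (Real.continuousAt_rpow_const x _ (Or.inl hx.1.ne')).mul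
      (ContinuousAt.rpow_const (by fun_prop) (Or.inl hx1))
  have hder : ∀ x ∈ Set.Ioo (0 : ℝ) 1,
      HasDerivAt (fun x => s * (∫ t in (0 : ℝ)..x, h t) - G x) (g x) x := by
    intro x hx
    have h1 : HasDerivAt (fun u => ∫ t in (0 : ℝ)..u, h t) (h x) x := by
      refine intervalIntegral.integral_hasDerivAt_right (bi.mono_set ?_)
        (hcont.stronglyMeasurableAtFilter isOpen_Ioo x hx)
        (hcont.continuousAt (isOpen_Ioo.mem_nhds hx))
      rw [Set.uIcc_of_le zero_le_one, Set.uIcc_of_le hx.1.le]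
      exact Set.Icc_subset_Icc_right hx.2.le
    convert! (h1.const_mul s).sub (deriv_aux α θ s x hx) using 1
    simp only [hh, hg]
    ring
  have hpos : ∀ x ∈ Set.Ioo (0 : ℝ) 1, 0 ≤ g x := by
    intro x hx
    have hx0 := hx.1
    have hx1 : 0 < 1 - x := by linarith [hx.2]
    have : (1 - x) ^ s ≤ 1 := Real.rpow_le_one hx1.le (by linarith) hs.le
    have : 0 ≤ 1 - (1 - x) ^ s := by linarith
    simp only [hg]
    positivity
  have hgi : IntervalIntegrable g volume 0 1 :=
    (intervalIntegrable_iff_integrableOn_Ioc_of_le zero_le_one).2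
      (intervalIntegral.integrableOn_deriv_of_nonneg hcontF hder hpos)
  have hval := intervalIntegral.integral_eq_sub_of_hasDerivAt_of_le zero_le_one hcontF hder hgi
  have hG0 : G 0 = 0 := by simp [hG]
  have hG1 : G 1 = 0 := by simp [hG, Real.zero_rpow hθ.ne']
  rw [hG0, hG1, bv, intervalIntegral.integral_same] at hval
  rw [setIntegral_congr_fun (g := g) measurableSet_Ioo (fun x hx => by simp only [hg, hf x hx]),
    ← integral_Ioc_eq_integral_Ioo, ← intervalIntegral.integral_of_le zero_le_one, hval,
    show 1 - α + (s + θ) = s + 1 - α + θ by ring]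
  ring
end

section
/- Let ℓ : (0,∞) → (0,∞) be slowly varying at ∞ (i.e., for every c > 0, ℓ(ct)/ℓ(t) → 1 as t → ∞), let 0 < α < 1, and let ν̃ be a nonzero Borel measure on (0,1] with ν̃([x,1]) finite for every x > 0 and ν̃([x,1]) x^α / ℓ(1/x) → 1 as x ↓ 0. Define Φ(s) = ∫₀¹ (1 − (1−x)^s) ν̃(dx), which is finite and positive for s > 0. Let M ≥ 1 and let f_0, f_1, …, f_M : (0,∞) → [0,∞) be nondecreasing functions with f_0 ≡ 1, f_m(ρ) → ∞ as ρ → ∞ for each 1 ≤ m ≤ M, and suppose that for each 1 ≤ m ≤ M and every ρ > 0, ∫₀¹ (f_m(ρ) − f_m(ρ(1−x))) ν̃(dx) = m ∫₀¹ (1 − e^{−ρx}) f_{m−1}(ρ(1−x)) ν̃(dx), both integrals being finite. Then f_M(ρ) / (ρ^α ℓ(ρ))^M → Π_{j=1}^{M} (j Γ(1−α) / Φ(αj)) as ρ → ∞. -/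
open Filter MeasureTheory Real

noncomputable def Gf (μ : Measure ℝ) (ρ : ℝ) : ℝ := ∫ x, (1 - Real.exp (-(ρ * x))) ∂μ

section
variable {μ : Measure ℝ}

lemma Gf_int (hμ : ∀ᵐ x ∂μ, x ∈ Set.Ioc (0:ℝ) 1) (hx : Integrable (fun x : ℝ => x) μ)
    {ρ : ℝ} (hρ : 0 ≤ ρ) : Integrable (fun x => 1 - Real.exp (-(ρ * x))) μ := by
  refine (hx.const_mul ρ).mono' (by fun_prop) ?_
  filter_upwards [hμ] with x hx
  have h0 : 0 ≤ ρ * x := mul_nonneg hρ hx.1.le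
  rw [Real.norm_of_nonneg (by simpa using h0)]
  linarith [Real.add_one_le_exp (-(ρ * x))]

lemma Gf_zero : Gf μ 0 = 0 := by simp [Gf]

lemma Gf_mono (hμ : ∀ᵐ x ∂μ, x ∈ Set.Ioc (0:ℝ) 1) (hx : Integrable (fun x : ℝ => x) μ)
    {a b : ℝ} (ha : 0 ≤ a) (hab : a ≤ b) : Gf μ a ≤ Gf μ b := by
  refine integral_mono_ae (Gf_int hμ hx ha) (Gf_int hμ hx (ha.trans hab)) ?_
  filter_upwards [hμ] with x hx
  have : Real.exp (-(b * x)) ≤ Real.exp (-(a * x)) := by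
    apply Real.exp_le_exp.2
    have := mul_le_mul_of_nonneg_right hab hx.1.le
    linarith
  linarith

lemma Gf_nonneg (hμ : ∀ᵐ x ∂μ, x ∈ Set.Ioc (0:ℝ) 1) (hx : Integrable (fun x : ℝ => x) μ)
    {a : ℝ} (ha : 0 ≤ a) : 0 ≤ Gf μ a := by
  have := Gf_mono hμ hx le_rfl ha
  rwa [Gf_zero] at this

lemma Gf_concave (hμ : ∀ᵐ x ∂μ, x ∈ Set.Ioc (0:ℝ) 1) (hx : Integrable (fun x : ℝ => x) μ)
    {c ρ : ℝ} (hc : 0 ≤ c) (hc1 : c ≤ 1) (hρ : 0 ≤ ρ) : c * Gf μ ρ ≤ Gf μ (ρ * c) := by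
  unfold Gf
  rw [← integral_const_mul]
  refine integral_mono_ae ((Gf_int hμ hx hρ).const_mul c) (Gf_int hμ hx (by positivity)) ?_
  filter_upwards with x
  have := convexOn_exp.2 (Set.mem_univ (0:ℝ)) (Set.mem_univ (-(ρ * x)))
    (sub_nonneg.2 hc1) hc (by ring)
  simp only [smul_eq_mul, mul_zero, zero_add, Real.exp_zero, mul_one] at this
  rw [show c * -(ρ * x) = -(ρ * c * x) by ring] at this
  linarith

/-- bounds for `h = G^m` -/
lemma h_bd (hμ : ∀ᵐ x ∂μ, x ∈ Set.Ioc (0:ℝ) 1) (hx : Integrable (fun x : ℝ => x) μ)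
    (m : ℕ) {ρ x : ℝ} (hρ : 0 ≤ ρ) (h0 : 0 ≤ x) (h1 : x ≤ 1) :
    0 ≤ Gf μ ρ ^ m - Gf μ (ρ * (1 - x)) ^ m ∧
    Gf μ ρ ^ m - Gf μ (ρ * (1 - x)) ^ m ≤ m * x * Gf μ ρ ^ m := by
  have hG0 := Gf_nonneg hμ hx hρ
  have hr : 0 ≤ ρ * (1 - x) := mul_nonneg hρ (by linarith)
  constructor
  · have : Gf μ (ρ * (1 - x)) ≤ Gf μ ρ := Gf_mono hμ hx hr (by nlinarith)
    have := pow_le_pow_left₀ (Gf_nonneg hμ hx hr) this m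
    linarith
  · have h2 := Gf_concave hμ hx (c := 1 - x) (by linarith) (by linarith) hρ
    have h3 := pow_le_pow_left₀ (mul_nonneg (by linarith) hG0) h2 m
    rw [mul_pow] at h3
    have h4 := one_add_mul_le_pow (a := -x) (by linarith) m
    have h5 : (1 + (m:ℝ) * -x) * Gf μ ρ ^ m ≤ (1 - x) ^ m * Gf μ ρ ^ m :=
      mul_le_mul_of_nonneg_right (by simpa [sub_eq_add_neg] using h4) (by positivity)
    linarith

lemma Gf_meas (hμ : ∀ᵐ x ∂μ, x ∈ Set.Ioc (0:ℝ) 1) (hx : Integrable (fun x : ℝ => x) μ)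
    (ρ : ℝ) (hρ : 0 ≤ ρ) :
    AEStronglyMeasurable (fun x => Gf μ (ρ * (1 - x))) μ := by
  have hm : Monotone (fun y => Gf μ (max y 0)) := fun a b hab =>
    Gf_mono hμ hx (le_max_right _ _) (max_le_max_right 0 hab)
  have h1 : Measurable (fun x : ℝ => Gf μ (max (ρ * (1 - x)) 0)) :=
    hm.measurable.comp (by fun_prop : Measurable fun x : ℝ => ρ * (1 - x))
  refine h1.aestronglyMeasurable.congr ?_
  filter_upwards [hμ] with x hx
  rw [max_eq_left (mul_nonneg hρ (by linarith [hx.2]))]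

lemma h_int (hμ : ∀ᵐ x ∂μ, x ∈ Set.Ioc (0:ℝ) 1) (hx : Integrable (fun x : ℝ => x) μ)
    (m : ℕ) {ρ : ℝ} (hρ : 0 ≤ ρ) :
    Integrable (fun x => Gf μ ρ ^ m - Gf μ (ρ * (1 - x)) ^ m) μ := by
  refine (hx.const_mul (m * Gf μ ρ ^ m)).mono'
    (aestronglyMeasurable_const.sub ((Gf_meas hμ hx ρ hρ).pow m)) ?_
  filter_upwards [hμ] with x hx1
  obtain ⟨h1, h2⟩ := h_bd hμ hx m hρ hx1.1.le hx1.2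
  rw [Real.norm_of_nonneg h1]
  linarith

lemma Lh_lim (hμ : ∀ᵐ x ∂μ, x ∈ Set.Ioc (0:ℝ) 1) (hx : Integrable (fun x : ℝ => x) μ)
    {α : ℝ} (hα : 0 < α) (hGinf : Tendsto (Gf μ) atTop atTop)
    (hreg : ∀ c : ℝ, 0 < c → Tendsto (fun ρ => Gf μ (ρ * c) / Gf μ ρ) atTop (nhds (c ^ α)))
    (m : ℕ) (hm : 1 ≤ m) :
    Tendsto (fun ρ => (∫ x, (Gf μ ρ ^ m - Gf μ (ρ * (1 - x)) ^ m) ∂μ) / Gf μ ρ ^ m) atTop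
      (nhds (∫ x, (1 - (1 - x) ^ (α * (m:ℝ))) ∂μ)) := by
  simp_rw [← integral_div]
  refine tendsto_integral_filter_of_dominated_convergence (fun x => m * x) ?_ ?_
    (hx.const_mul _) ?_
  · filter_upwards [eventually_ge_atTop 0] with ρ hρ
    exact (h_int hμ hx m hρ).aestronglyMeasurable.mul aestronglyMeasurable_const
  · filter_upwards [eventually_ge_atTop 0, hGinf.eventually_gt_atTop 0] with ρ hρ hG
    filter_upwards [hμ] with x hx1
    obtain ⟨h1, h2⟩ := h_bd hμ hx m hρ hx1.1.le hx1.2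
    rw [Real.norm_of_nonneg (by positivity), div_le_iff₀ (by positivity)]
    exact h2
  · filter_upwards [hμ] with x hx1
    have key : Tendsto (fun ρ => Gf μ (ρ * (1 - x)) / Gf μ ρ) atTop (nhds ((1 - x) ^ α)) := by
      rcases hx1.2.eq_or_lt with h | h
      · subst h
        simp [Gf_zero, Real.zero_rpow hα.ne']
      · exact hreg _ (by linarith)
    have := (key.pow m).const_sub 1
    rw [Real.rpow_mul (by linarith [hx1.2]), Real.rpow_natCast]
    refine this.congr' ?_
    filter_upwards [hGinf.eventually_gt_atTop 0] with ρ hG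
    rw [div_pow]
    field_simp

lemma small_int (hμ : ∀ᵐ x ∂μ, x ∈ Set.Ioc (0:ℝ) 1) (hx : Integrable (fun x : ℝ => x) μ)
    {η : ℝ} (hη : 0 < η) : ∃ ε : ℝ, 0 < ε ∧ ε < 1 ∧
      Integrable (fun x : ℝ => if x < ε then x else 0) μ ∧
      ∫ x, (if x < ε then x else 0) ∂μ < η := by
  have hI : ∀ ε : ℝ, Integrable (fun x : ℝ => if x < ε then x else 0) μ := by
    intro ε
    have := hx.indicator (measurableSet_Iio (a := ε))
    refine this.congr (ae_of_all _ fun x => ?_)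
    simp [Set.indicator]
  have hT : Tendsto (fun n : ℕ => ∫ x, (if x < 1 / ((n:ℝ) + 1) then x else 0) ∂μ) atTop
      (nhds (∫ x, (0:ℝ) ∂μ)) := by
    refine tendsto_integral_of_dominated_convergence (fun x => |x|)
      (fun n => (hI _).aestronglyMeasurable) hx.abs ?_ ?_
    · intro n
      filter_upwards with x
      split_ifs <;> simp
    · filter_upwards [hμ] with x hx1
      refine tendsto_const_nhds.congr' ?_
      have := tendsto_one_div_add_atTop_nhds_zero_nat (𝕜 := ℝ)
      filter_upwards [this.eventually_lt_const hx1.1] with n hn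
      rw [if_neg (by linarith)]
  rw [integral_zero] at hT
  obtain ⟨n, hn, hn1⟩ := ((hT.eventually_lt_const hη).and (eventually_ge_atTop 1)).exists
  refine ⟨1 / ((n:ℝ) + 1), by positivity, ?_, hI _, hn⟩
  rw [div_lt_one (by positivity)]
  have : (1:ℝ) ≤ n := by exact_mod_cast hn1
  linarith

lemma upper_cmp (hμ : ∀ᵐ x ∂μ, x ∈ Set.Ioc (0:ℝ) 1) (hx : Integrable (fun x : ℝ => x) μ)
    (m : ℕ) (hm : 1 ≤ m) (F : ℝ → ℝ) (hF : Monotone F) (hF0 : F 0 = 0)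
    (hI : ∀ ρ, 0 < ρ → Integrable (fun x => F ρ - F (ρ * (1 - x))) μ)
    (c δ ρ0 : ℝ) (hc : 0 ≤ c) (hδ : 0 < δ) (hρ0 : 0 < ρ0)
    (hL : ∀ ρ, ρ0 ≤ ρ → 0 < Gf μ ρ ∧ ∫ x, (F ρ - F (ρ * (1 - x))) ∂μ ≤
      c * ∫ x, (Gf μ ρ ^ m - Gf μ (ρ * (1 - x)) ^ m) ∂μ - δ * Gf μ ρ ^ m) :
    ∃ T, ∀ ρ, 0 < ρ → F ρ ≤ c * Gf μ ρ ^ m + T := by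
  refine ⟨F ρ0, ?_⟩
  by_contra! hcon
  obtain ⟨r, hr, hrT⟩ := hcon
  set T := F ρ0 with hT
  have hT0 : 0 ≤ T := by rw [hT, ← hF0]; exact hF hρ0.le
  set A : Set ℝ := {ρ | 0 < ρ ∧ c * Gf μ ρ ^ m + T < F ρ} with hA
  have hAne : A.Nonempty := ⟨r, hr, hrT⟩
  have hAlow : ∀ ρ ∈ A, ρ0 ≤ ρ := by
    rintro ρ ⟨h1, h2⟩
    by_contra! h
    have := hF h.le
    have h3 : 0 ≤ c * Gf μ ρ ^ m := mul_nonneg hc (pow_nonneg (Gf_nonneg hμ hx h1.le) m)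
    linarith
  have hbdd : BddBelow A := ⟨ρ0, hAlow⟩
  set s := sInf A with hs
  have hs0 : ρ0 ≤ s := le_csInf hAne hAlow
  have hspos : 0 < s := by linarith
  obtain ⟨ε, hε0, hε1, hεI, hε⟩ := small_int hμ hx (η := δ / (c * m + 1)) (by positivity)
  obtain ⟨ρ, hρA, hρs⟩ : ∃ ρ ∈ A, ρ < s / (1 - ε) := by
    apply exists_lt_of_csInf_lt hAne
    rw [← hs, lt_div_iff₀ (by linarith)]
    nlinarith
  have hρpos : 0 < ρ := hρA.1
  obtain ⟨hGpos, hLρ⟩ := hL ρ (hAlow ρ hρA)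
  have hρs' : ρ * (1 - ε) < s := by rwa [lt_div_iff₀ (by linarith)] at hρs
  have hint := integral_mono_ae (μ := μ)
    (f := fun x => -(c * m * Gf μ ρ ^ m) * (if x < ε then x else 0))
    (g := fun x => (F ρ - F (ρ * (1 - x))) - c * (Gf μ ρ ^ m - Gf μ (ρ * (1 - x)) ^ m))
    (hεI.const_mul _) ((hI ρ hρpos).sub ((h_int hμ hx m hρpos.le).const_mul c)) (by
      filter_upwards [hμ] with x hx1
      obtain ⟨hb1, hb2⟩ := h_bd hμ hx m hρpos.le hx1.1.le hx1.2
      split_ifs with hxε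
      · have : F (ρ * (1 - x)) ≤ F ρ := hF (by nlinarith [hx1.1])
        have := mul_le_mul_of_nonneg_left hb2 hc
        linarith
      · push Not at hxε
        have hlt : ρ * (1 - x) < s := by nlinarith
        have hD : F (ρ * (1 - x)) ≤ c * Gf μ (ρ * (1 - x)) ^ m + T := by
          rcases hx1.2.eq_or_lt with h | h
          · subst h
            simp [hF0, Gf_zero, show m ≠ 0 by omega, hT0]
          · by_contra! hcon
            have hmem : ρ * (1 - x) ∈ A := ⟨mul_pos hρpos (by linarith), hcon⟩
            linarith [csInf_le hbdd hmem]
        have := hρA.2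
        linarith)
  rw [integral_const_mul, integral_sub (hI ρ hρpos) ((h_int hμ hx m hρpos.le).const_mul c),
    integral_const_mul] at hint
  have hP : 0 < Gf μ ρ ^ m := by positivity
  rw [lt_div_iff₀ (by positivity)] at hε
  set J := ∫ x, (if x < ε then x else 0) ∂μ
  have hJ : 0 ≤ J := by
    apply integral_nonneg_of_ae
    filter_upwards [hμ] with x hx1
    simp only [Pi.zero_apply]
    split_ifs
    · exact hx1.1.le
    · exact le_rfl
  nlinarith

lemma lower_cmp (hμ : ∀ᵐ x ∂μ, x ∈ Set.Ioc (0:ℝ) 1) (hx : Integrable (fun x : ℝ => x) μ)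
    (m : ℕ) (hm : 1 ≤ m) (F : ℝ → ℝ) (hF : Monotone F) (hF0 : F 0 = 0)
    (hI : ∀ ρ, 0 < ρ → Integrable (fun x => F ρ - F (ρ * (1 - x))) μ)
    (c ρ0 : ℝ) (hc : 0 ≤ c) (hρ0 : 0 < ρ0)
    (hL : ∀ ρ, ρ0 ≤ ρ →
      c * ∫ x, (Gf μ ρ ^ m - Gf μ (ρ * (1 - x)) ^ m) ∂μ < ∫ x, (F ρ - F (ρ * (1 - x))) ∂μ) :
    ∃ T, ∀ ρ, 0 < ρ → c * Gf μ ρ ^ m ≤ F ρ + T := by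
  refine ⟨c * Gf μ ρ0 ^ m, ?_⟩
  by_contra! hcon
  obtain ⟨r, hr, hrT⟩ := hcon
  set T := c * Gf μ ρ0 ^ m with hT
  have hT0 : 0 ≤ T := mul_nonneg hc (pow_nonneg (Gf_nonneg hμ hx hρ0.le) m)
  set A : Set ℝ := {ρ | 0 < ρ ∧ F ρ + T < c * Gf μ ρ ^ m} with hA
  have hAne : A.Nonempty := ⟨r, hr, hrT⟩
  have hAlow : ∀ ρ ∈ A, ρ0 ≤ ρ := by
    rintro ρ ⟨h1, h2⟩
    by_contra! h
    have h3 := hF h1.le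
    have h4 : c * Gf μ ρ ^ m ≤ c * Gf μ ρ0 ^ m := mul_le_mul_of_nonneg_left
      (pow_le_pow_left₀ (Gf_nonneg hμ hx h1.le) (Gf_mono hμ hx h1.le h.le) m) hc
    linarith
  have hbdd : BddBelow A := ⟨ρ0, hAlow⟩
  set s := sInf A with hs
  have hs0 : ρ0 ≤ s := le_csInf hAne hAlow
  have hspos : 0 < s := by linarith
  have hsT : F s + T ≤ c * Gf μ s ^ m := by
    have hlim : Tendsto (fun t : ℝ => c * ((t / s) ^ m * Gf μ s ^ m)) (nhdsWithin s (Set.Ioi s))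
        (nhds (c * ((s / s) ^ m * Gf μ s ^ m))) :=
      (Continuous.tendsto (by fun_prop) s).mono_left nhdsWithin_le_nhds
    rw [div_self hspos.ne', one_pow, one_mul] at hlim
    refine ge_of_tendsto hlim ?_
    filter_upwards [self_mem_nhdsWithin] with t ht
    obtain ⟨ρ, hρA, hρt⟩ := exists_lt_of_csInf_lt hAne (show sInf A < t from ht)
    have hsρ : s ≤ ρ := csInf_le hbdd hρA
    have hρpos := hρA.1
    have h1 := Gf_concave hμ hx (c := s / ρ) (ρ := ρ) (by positivity)
      ((div_le_one hρpos).2 hsρ) hρpos.le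
    rw [mul_div_cancel₀ _ hρpos.ne', div_mul_eq_mul_div, div_le_iff₀ hρpos] at h1
    have hGs := Gf_nonneg hμ hx hspos.le
    have h2 : Gf μ ρ ≤ t / s * Gf μ s := by
      rw [div_mul_eq_mul_div, le_div_iff₀ hspos]
      nlinarith
    have h3 := pow_le_pow_left₀ (Gf_nonneg hμ hx hρpos.le) h2 m
    rw [mul_pow] at h3
    have h4 := mul_le_mul_of_nonneg_left h3 hc
    have h5 := hρA.2
    have h6 := hF hsρ
    linarith
  have hLs := hL s hs0
  have hint : 0 ≤ ∫ x, (c * (Gf μ s ^ m - Gf μ (s * (1 - x)) ^ m) - (F s - F (s * (1 - x)))) ∂μ := by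
    apply integral_nonneg_of_ae
    filter_upwards [hμ] with x hx1
    have hlt : s * (1 - x) < s := by nlinarith [hx1.1]
    have hD : c * Gf μ (s * (1 - x)) ^ m ≤ F (s * (1 - x)) + T := by
      rcases hx1.2.eq_or_lt with h | h
      · subst h
        simp [hF0, Gf_zero, show m ≠ 0 by omega, hT0]
      · by_contra! hcon
        have hmem : s * (1 - x) ∈ A := ⟨mul_pos hspos (by linarith), hcon⟩
        linarith [csInf_le hbdd hmem]
    simp only [Pi.zero_apply]
    linarith
  rw [integral_sub ((h_int hμ hx m hspos.le).const_mul c) (hI s hspos),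
    integral_const_mul] at hint
  linarith

lemma taub (hμ : ∀ᵐ x ∂μ, x ∈ Set.Ioc (0:ℝ) 1) (hx : Integrable (fun x : ℝ => x) μ)
    {α : ℝ} (hα : 0 < α) (hGinf : Tendsto (Gf μ) atTop atTop)
    (hreg : ∀ c : ℝ, 0 < c → Tendsto (fun ρ => Gf μ (ρ * c) / Gf μ ρ) atTop (nhds (c ^ α)))
    (m : ℕ) (hm : 1 ≤ m) (F : ℝ → ℝ) (hF : Monotone F) (hF0 : F 0 = 0)
    (hI : ∀ ρ, 0 < ρ → Integrable (fun x => F ρ - F (ρ * (1 - x))) μ)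
    (hΦ : 0 < ∫ x, (1 - (1 - x) ^ (α * (m:ℝ))) ∂μ) (K : ℝ) (hK : 0 ≤ K)
    (hR : Tendsto (fun ρ => (∫ x, (F ρ - F (ρ * (1 - x))) ∂μ) / Gf μ ρ ^ m) atTop (nhds K)) :
    Tendsto (fun ρ => F ρ / Gf μ ρ ^ m) atTop
      (nhds (K / ∫ x, (1 - (1 - x) ^ (α * (m:ℝ))) ∂μ)) := by
  have hLh := Lh_lim hμ hx hα hGinf hreg m hm
  set Φ := ∫ x, (1 - (1 - x) ^ (α * (m:ℝ))) ∂μ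
  have hhinf : Tendsto (fun ρ => Gf μ ρ ^ m) atTop atTop :=
    (tendsto_pow_atTop (by omega)).comp hGinf
  have hev := hGinf.eventually_gt_atTop 0
  rw [tendsto_order]
  constructor
  · intro a ha
    rcases lt_or_ge a 0 with ha0 | ha0
    · filter_upwards [hev, eventually_gt_atTop 0] with ρ h1 h2
      have : 0 ≤ F ρ := by rw [← hF0]; exact hF h2.le
      exact ha0.trans_le (by positivity)
    · obtain ⟨c, hac, hcK⟩ := exists_between ha
      have hc0 : 0 ≤ c := by linarith
      rw [lt_div_iff₀ hΦ] at hcK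
      have h1 := (hLh.const_mul c).eventually_lt hR hcK
      obtain ⟨ρ1, hρ1⟩ := eventually_atTop.1 (h1.and hev)
      obtain ⟨T, hT⟩ := lower_cmp hμ hx m hm F hF hF0 hI c (max ρ1 1) hc0 (by positivity) (by
        intro ρ hρ
        obtain ⟨h2, h3⟩ := hρ1 ρ ((le_max_left _ _).trans hρ)
        have : 0 < Gf μ ρ ^ m := by positivity
        rw [← mul_div_assoc, div_lt_div_iff_of_pos_right this] at h2
        exact h2)
      have hTl : Tendsto (fun ρ => c - T / Gf μ ρ ^ m) atTop (nhds (c - 0)) :=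
        (hhinf.const_div_atTop T).const_sub c
      rw [sub_zero] at hTl
      filter_upwards [hTl.eventually_const_lt hac, hev, eventually_gt_atTop 0] with ρ h1 h2 h3
      refine h1.trans_le ?_
      have : 0 < Gf μ ρ ^ m := by positivity
      rw [le_div_iff₀ this, sub_mul, div_mul_cancel₀ _ this.ne']
      linarith [hT ρ h3]
  · intro a ha
    obtain ⟨c, hKc, hca⟩ := exists_between ha
    have hc0 : 0 ≤ c := (div_nonneg hK hΦ.le).trans hKc.le
    rw [div_lt_iff₀ hΦ] at hKc
    set δ := (c * Φ - K) / 2 with hδ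
    have hδ0 : 0 < δ := by rw [hδ]; linarith
    have h1 := hR.eventually_lt ((hLh.const_mul c).sub_const δ) (by rw [hδ]; linarith)
    obtain ⟨ρ1, hρ1⟩ := eventually_atTop.1 (h1.and hev)
    obtain ⟨T, hT⟩ := upper_cmp hμ hx m hm F hF hF0 hI c δ (max ρ1 1) hc0 hδ0 (by positivity) (by
      intro ρ hρ
      obtain ⟨h2, h3⟩ := hρ1 ρ ((le_max_left _ _).trans hρ)
      have : 0 < Gf μ ρ ^ m := by positivity
      refine ⟨h3, ?_⟩
      rw [div_lt_iff₀ this, sub_mul, mul_assoc, div_mul_cancel₀ _ this.ne'] at h2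
      exact h2.le)
    have hTl : Tendsto (fun ρ => c + T / Gf μ ρ ^ m) atTop (nhds (c + 0)) :=
      (hhinf.const_div_atTop T).const_add c
    rw [add_zero] at hTl
    filter_upwards [hTl.eventually_lt_const hca, hev, eventually_gt_atTop 0] with ρ h1 h2 h3
    refine lt_of_le_of_lt ?_ h1
    have : 0 < Gf μ ρ ^ m := by positivity
    rw [div_le_iff₀ this, add_mul, div_mul_cancel₀ _ this.ne']
    exact hT ρ h3

lemma abel_step (hμ : ∀ᵐ x ∂μ, x ∈ Set.Ioc (0:ℝ) 1) (hx : Integrable (fun x : ℝ => x) μ)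
    {α : ℝ} (hGinf : Tendsto (Gf μ) atTop atTop)
    (hreg : ∀ c : ℝ, 0 < c → Tendsto (fun ρ => Gf μ (ρ * c) / Gf μ ρ) atTop (nhds (c ^ α)))
    (k : ℕ) (F : ℝ → ℝ) (hF : Monotone F) (hF0 : ∀ x, 0 ≤ F x)
    (hI : ∀ ρ, 0 < ρ → Integrable (fun x => (1 - Real.exp (-(ρ * x))) * F (ρ * (1 - x))) μ)
    (C : ℝ) (hC : Tendsto (fun ρ => F ρ / Gf μ ρ ^ k) atTop (nhds C)) :
    Tendsto (fun ρ => (∫ x, (1 - Real.exp (-(ρ * x))) * F (ρ * (1 - x)) ∂μ) / Gf μ ρ ^ (k + 1))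
      atTop (nhds C) := by
  have hev := hGinf.eventually_gt_atTop 0
  rw [tendsto_order]
  constructor
  · intro a ha
    have hcont : Tendsto (fun ε : ℝ => C * ((1 - ε) ^ α) ^ k) (nhdsWithin 0 (Set.Ioi 0))
        (nhds (C * ((1 - 0) ^ α) ^ k)) := by
      apply Tendsto.mono_left _ nhdsWithin_le_nhds
      have h : ContinuousAt (fun ε : ℝ => (1 - ε) ^ α) 0 :=
        ContinuousAt.rpow_const (by fun_prop) (Or.inl (by norm_num))
      exact (h.pow k).const_mul C
    rw [sub_zero, Real.one_rpow, one_pow, mul_one] at hcont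
    obtain ⟨ε, hεa, hε0, hε1⟩ := ((hcont.eventually_const_lt ha).and
      (Ioo_mem_nhdsGT (show (0:ℝ) < 1 by norm_num))).exists
    have h1ε : 0 < 1 - ε := by linarith
    set X := ∫ x, x ∂μ
    have hlim : Tendsto (fun ρ => F (ρ * (1 - ε)) / Gf μ (ρ * (1 - ε)) ^ k *
        (Gf μ (ρ * (1 - ε)) / Gf μ ρ) ^ k * (1 - X / ε / Gf μ ρ)) atTop
        (nhds (C * ((1 - ε) ^ α) ^ k * (1 - 0))) := by
      have hm : Tendsto (fun ρ : ℝ => ρ * (1 - ε)) atTop atTop :=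
        tendsto_id.atTop_mul_const h1ε
      exact ((hC.comp hm).mul ((hreg _ h1ε).pow k)).mul
        ((hGinf.const_div_atTop _).const_sub 1)
    rw [sub_zero, mul_one] at hlim
    have hm : Tendsto (fun ρ : ℝ => ρ * (1 - ε)) atTop atTop :=
      tendsto_id.atTop_mul_const h1ε
    filter_upwards [hlim.eventually_const_lt hεa, hev, eventually_gt_atTop 0,
      hm.eventually hev] with ρ h1 h2 h3 h4
    refine h1.trans_le ?_
    have hint := integral_mono_ae (μ := μ)
      (f := fun x => F (ρ * (1 - ε)) * ((1 - Real.exp (-(ρ * x))) - x / ε))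
      (g := fun x => (1 - Real.exp (-(ρ * x))) * F (ρ * (1 - x)))
      (((Gf_int hμ hx h3.le).sub (hx.div_const ε)).const_mul _) (hI ρ h3) (by
        filter_upwards [hμ] with x hx1
        have hx0 := hx1.1
        have hρx : 0 < ρ * x := by positivity
        have he : 0 ≤ 1 - Real.exp (-(ρ * x)) := by simpa using hρx.le
        have he1 : 1 - Real.exp (-(ρ * x)) ≤ 1 := by linarith [Real.exp_pos (-(ρ * x))]
        rcases lt_or_ge x ε with h | h
        · have h5 : F (ρ * (1 - ε)) ≤ F (ρ * (1 - x)) := hF (by nlinarith)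
          have h6 : 0 ≤ x / ε := by positivity
          nlinarith [hF0 (ρ * (1 - ε)), mul_le_mul_of_nonneg_left h5 he,
            mul_nonneg (hF0 (ρ * (1 - ε))) h6]
        · have h6 : 1 ≤ x / ε := (one_le_div hε0).2 h
          have h7 : 0 ≤ (1 - Real.exp (-(ρ * x))) * F (ρ * (1 - x)) := mul_nonneg he (hF0 _)
          have h8 : F (ρ * (1 - ε)) * ((1 - Real.exp (-(ρ * x))) - x / ε) ≤ 0 :=
            mul_nonpos_of_nonneg_of_nonpos (hF0 _) (by linarith)
          linarith)
    rw [integral_const_mul, integral_sub (Gf_int hμ hx h3.le) (hx.div_const ε),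
      integral_div] at hint
    change F (ρ * (1 - ε)) * (Gf μ ρ - X / ε) ≤ _ at hint
    rw [le_div_iff₀ (by positivity)]
    refine le_trans (le_of_eq ?_) hint
    rw [div_pow]
    field_simp
    ring
  · intro a ha
    filter_upwards [hC.eventually_lt_const ha, hev, eventually_gt_atTop 0] with ρ h1 h2 h3
    refine lt_of_le_of_lt ?_ h1
    have hint := integral_mono_ae (μ := μ)
      (f := fun x => (1 - Real.exp (-(ρ * x))) * F (ρ * (1 - x)))
      (g := fun x => (1 - Real.exp (-(ρ * x))) * F ρ)
      (hI ρ h3) ((Gf_int hμ hx h3.le).mul_const _) (by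
        filter_upwards [hμ] with x hx1
        have hx0 := hx1.1
        have hρx : 0 < ρ * x := by positivity
        have he : 0 ≤ 1 - Real.exp (-(ρ * x)) := by simpa using hρx.le
        exact mul_le_mul_of_nonneg_left (hF (by nlinarith)) he)
    rw [integral_mul_const] at hint
    change _ ≤ Gf μ ρ * F ρ at hint
    rw [div_le_div_iff₀ (by positivity) (by positivity), pow_succ]
    have : 0 < Gf μ ρ ^ k := by positivity
    nlinarith
end

lemma N_lim (ℓ : ℝ → ℝ) (hℓpos : ∀ t : ℝ, 0 < t → 0 < ℓ t)
    (hℓsv : ∀ c : ℝ, 0 < c → Tendsto (fun t : ℝ => ℓ (c * t) / ℓ t) atTop (nhds 1))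
    (α : ℝ) (N : ℝ → ℝ)
    (hlim : Tendsto (fun x : ℝ => N x * x ^ α / ℓ (1 / x))
      (nhdsWithin 0 (Set.Ioi 0)) (nhds 1)) (u : ℝ) (hu : 0 < u) :
    Tendsto (fun ρ : ℝ => N (u / ρ) / (ρ ^ α * ℓ ρ)) atTop (nhds (u ^ (-α))) := by
  have h1 : Tendsto (fun ρ : ℝ => u / ρ) atTop (nhdsWithin 0 (Set.Ioi 0)) := by
    refine tendsto_nhdsWithin_iff.2 ⟨tendsto_id.const_div_atTop u, ?_⟩
    filter_upwards [eventually_gt_atTop 0] with ρ hρ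
    exact div_pos hu hρ
  have h2 := ((hlim.comp h1).mul (hℓsv u⁻¹ (inv_pos.2 hu))).mul_const (u ^ (-α))
  rw [one_mul, one_mul] at h2
  refine h2.congr' ?_
  filter_upwards [eventually_gt_atTop 0] with ρ hρ
  simp only [Function.comp]
  have e1 : 1 / (u / ρ) = u⁻¹ * ρ := by field_simp
  rw [e1, Real.div_rpow hu.le hρ.le, Real.rpow_neg hu.le]
  have h3 := hℓpos ρ hρ
  have h4 := hℓpos (u⁻¹ * ρ) (by positivity)
  have h5 : 0 < u ^ α := by positivity
  have h6 : 0 < ρ ^ α := by positivity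
  generalize ℓ (u⁻¹ * ρ) = w at h4 ⊢
  field_simp

lemma potter (N : ℝ → ℝ) (hN0 : ∀ x, 0 ≤ N x) (hNm : ∀ x y, 0 < x → x ≤ y → N y ≤ N x)
    (β ρ0 : ℝ) (hβ : 0 < β) (hρ0 : 0 < ρ0)
    (hd : ∀ ρ, ρ0 ≤ ρ → N (1 / 2 / ρ) ≤ 2 ^ β * N (1 / ρ)) (ρ : ℝ) (hρ : ρ0 ≤ ρ)
    (u : ℝ) (hu : 0 < u) : N (u / ρ) ≤ 2 ^ β * (u ^ (-β) + 1) * N (1 / ρ) := by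
  have hρp : 0 < ρ := by linarith
  have hind : ∀ k : ℕ, N (1 / (2 ^ k * ρ)) ≤ (2 ^ β) ^ k * N (1 / ρ) := by
    intro k
    induction k with
    | zero => simp
    | succ k ih =>
      have h2k : (1:ℝ) ≤ 2 ^ k := one_le_pow₀ (by norm_num)
      have := hd (2 ^ k * ρ) (by nlinarith)
      have e : (1:ℝ) / 2 / (2 ^ k * ρ) = 1 / (2 ^ (k + 1) * ρ) := by
        rw [pow_succ]; field_simp
      rw [e] at this
      have h3 : (0:ℝ) < 2 ^ β := by positivity
      calc _ ≤ _ := this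
        _ ≤ 2 ^ β * ((2 ^ β) ^ k * N (1 / ρ)) := mul_le_mul_of_nonneg_left ih h3.le
        _ = _ := by ring
  have h2b : (1:ℝ) ≤ 2 ^ β := Real.one_le_rpow (by norm_num) hβ.le
  have hub : 0 < u ^ (-β) := by positivity
  have hNρ := hN0 (1 / ρ)
  rcases le_or_gt 1 u with h | h
  · have h1 : N (u / ρ) ≤ N (1 / ρ) := hNm _ _ (by positivity) (by gcongr)
    have h2 : 1 ≤ 2 ^ β * (u ^ (-β) + 1) := by nlinarith
    nlinarith
  · obtain ⟨k, hk1, hk2⟩ := exists_nat_pow_near (x := 1 / u) (y := (2:ℝ))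
      ((one_le_div hu).2 h.le) (by norm_num)
    have h1 : N (u / ρ) ≤ N (1 / (2 ^ (k + 1) * ρ)) := by
      apply hNm _ _ (by positivity)
      rw [← div_div]
      apply div_le_div_of_nonneg_right _ hρp.le
      rw [div_le_iff₀ (by positivity)]
      rw [div_lt_iff₀ hu] at hk2
      linarith
    have h2 := hind (k + 1)
    have h3 : ((2:ℝ) ^ β) ^ k ≤ u ^ (-β) := by
      rw [← Real.rpow_natCast, ← Real.rpow_mul (by norm_num), mul_comm, Real.rpow_mul (by norm_num),
        Real.rpow_natCast]
      calc ((2:ℝ) ^ k) ^ β ≤ (1 / u) ^ β := by gcongr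
        _ = u ^ (-β) := by rw [one_div, Real.inv_rpow hu.le, Real.rpow_neg hu.le]
    have h4 : ((2:ℝ) ^ β) ^ (k + 1) ≤ 2 ^ β * (u ^ (-β) + 1) := by
      rw [pow_succ]; nlinarith
    exact h1.trans (h2.trans (mul_le_mul_of_nonneg_right h4 hNρ))

lemma layer (ν : Measure ℝ) (ρ : ℝ) (hρ : 0 < ρ) :
    ∫⁻ x in Set.Ioc (0:ℝ) 1, ENNReal.ofReal (1 - Real.exp (-(ρ * x))) ∂ν =
    ∫⁻ t in Set.Ioi (0:ℝ), ν (Set.Icc (t / ρ) 1) * ENNReal.ofReal (Real.exp (-t)) := by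
  have h := lintegral_comp_eq_lintegral_meas_le_mul (ν.restrict (Set.Ioc (0:ℝ) 1))
    (f := fun x => ρ * x) (g := fun t => Real.exp (-t)) (by
      filter_upwards [ae_restrict_mem measurableSet_Ioc] with x hx
      exact mul_nonneg hρ.le hx.1.le) (by fun_prop)
    (fun t _ => (Continuous.intervalIntegrable (by fun_prop) _ _))
    (ae_of_all _ fun t => (Real.exp_pos _).le)
  have e : ∀ x : ℝ, ∫ t in (0:ℝ)..x, Real.exp (-t) = 1 - Real.exp (-x) := by
    intro x
    rw [intervalIntegral.integral_comp_neg (fun t => Real.exp t), integral_exp]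
    simp
  simp_rw [e] at h
  rw [h]
  refine setLIntegral_congr_fun measurableSet_Ioi ?_
  intro t ht
  have ht0 : 0 < t := ht
  simp only
  congr 1
  rw [Measure.restrict_apply (measurableSet_le (by fun_prop) (by fun_prop))]
  congr 1
  ext x
  simp only [Set.mem_inter_iff, Set.mem_ofPred_eq, Set.mem_Ioc, Set.mem_Icc]
  rw [div_le_iff₀ hρ]
  constructor
  · rintro ⟨h1, h2, h3⟩; exact ⟨by linarith, h3⟩
  · rintro ⟨h1, h3⟩
    refine ⟨by linarith, ?_, h3⟩
    by_contra! hc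
    nlinarith

lemma abel (ℓ : ℝ → ℝ)
    (hℓpos : ∀ t : ℝ, 0 < t → 0 < ℓ t)
    (hℓsv : ∀ c : ℝ, 0 < c → Tendsto (fun t : ℝ => ℓ (c * t) / ℓ t) atTop (nhds 1))
    (α : ℝ) (hα0 : 0 < α) (hα1 : α < 1)
    (ν : Measure ℝ)
    (hfin : ∀ x : ℝ, 0 < x → ν (Set.Icc x 1) ≠ ⊤)
    (hlim : Tendsto (fun x : ℝ => (ν (Set.Icc x 1)).toReal * x ^ α / ℓ (1 / x))
      (nhdsWithin 0 (Set.Ioi 0)) (nhds 1)) :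
    Integrable (fun x : ℝ => x) (ν.restrict (Set.Ioc (0:ℝ) 1)) ∧
    Tendsto (fun ρ => Gf (ν.restrict (Set.Ioc (0:ℝ) 1)) ρ / (ρ ^ α * ℓ ρ)) atTop
      (nhds (Real.Gamma (1 - α))) := by
  set N : ℝ → ℝ := fun x => (ν (Set.Icc x 1)).toReal with hNdef
  have hN0 : ∀ x, 0 ≤ N x := fun x => ENNReal.toReal_nonneg
  have hNm : ∀ x y, 0 < x → x ≤ y → N y ≤ N x := fun x y hx hxy =>
    ENNReal.toReal_mono (hfin x hx) (measure_mono (Set.Icc_subset_Icc_left hxy))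
  have hNl := N_lim ℓ hℓpos hℓsv α N hlim
  obtain ⟨β, hαβ, hβ1⟩ := exists_between hα1
  have hβ0 : 0 < β := by linarith
  have hev : ∀ᶠ ρ in atTop, N (1 / 2 / ρ) ≤ 2 ^ β * N (1 / ρ) ∧
      N (1 / ρ) ≤ 2 * (ρ ^ α * ℓ ρ) := by
    have h1 := hNl (1 / 2) (by norm_num)
    have h2 := hNl 1 (by norm_num)
    have e : ((1:ℝ) / 2) ^ (-α) = 2 ^ α := by
      rw [one_div, Real.inv_rpow (by norm_num), Real.rpow_neg (by norm_num), inv_inv]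
    rw [e] at h1
    rw [Real.one_rpow] at h2
    have hlt : (2:ℝ) ^ α < 2 ^ β * 1 := by
      rw [mul_one]; exact Real.rpow_lt_rpow_of_exponent_lt (by norm_num) hαβ
    filter_upwards [h1.eventually_lt (h2.const_mul (2 ^ β)) hlt,
      h2.eventually_lt_const (show (1:ℝ) < 2 by norm_num), eventually_gt_atTop 0] with ρ h3 h4 h5
    have hg : 0 < ρ ^ α * ℓ ρ := mul_pos (by positivity) (hℓpos ρ h5)
    rw [← mul_div_assoc, div_lt_div_iff_of_pos_right hg] at h3
    rw [div_lt_iff₀ hg] at h4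
    exact ⟨h3.le, h4.le⟩
  obtain ⟨ρ1, hρ1⟩ := eventually_atTop.1 hev
  set ρ0 := max ρ1 1 with hρ0
  have hρ01 : 1 ≤ ρ0 := le_max_right _ _
  have hbd : ∀ ρ, ρ0 ≤ ρ → ∀ u, 0 < u →
      N (u / ρ) ≤ 2 ^ β * (u ^ (-β) + 1) * N (1 / ρ) := fun ρ hρ u hu =>
    potter N hN0 hNm β ρ0 hβ0 (by linarith)
      (fun r hr => (hρ1 r ((le_max_left _ _).trans hr)).1) ρ hρ u hu
  -- dominating function
  have hdom : IntegrableOn (fun u : ℝ => (u ^ (-β) + 1) * Real.exp (-u)) (Set.Ioi 0) := by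
    have h1 := Real.GammaIntegral_convergent (s := 1 - β) (by linarith)
    have h2 := Real.GammaIntegral_convergent (s := 1) (by norm_num)
    refine (h1.add h2).congr_fun ?_ measurableSet_Ioi
    intro u hu
    simp only [Pi.add_apply]
    rw [show 1 - β - 1 = -β by ring, show (1:ℝ) - 1 = 0 by ring, Real.rpow_zero]
    ring
  have hmeas : ∀ ρ, 0 < ρ → AEStronglyMeasurable (fun u => N (u / ρ) * Real.exp (-u))
      (volume.restrict (Set.Ioi 0)) := by
    intro ρ hρ
    have hanti : AntitoneOn (fun u => N (u / ρ)) (Set.Ioi 0) := by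
      intro a ha b hb hab
      have ha0 : 0 < a := ha
      exact hNm _ _ (by positivity) (by gcongr)
    have := aemeasurable_restrict_of_antitoneOn (μ := volume) measurableSet_Ioi hanti
    exact this.aestronglyMeasurable.mul (by fun_prop)
  have hNint : ∀ ρ, ρ0 ≤ ρ → IntegrableOn (fun u => N (u / ρ) * Real.exp (-u)) (Set.Ioi 0) := by
    intro ρ hρ
    refine (hdom.const_mul (2 ^ β * N (1 / ρ))).mono' (hmeas ρ (by linarith)) ?_
    filter_upwards [ae_restrict_mem measurableSet_Ioi] with u hu
    rw [Real.norm_of_nonneg (mul_nonneg (hN0 _) (Real.exp_pos _).le)]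
    have := mul_le_mul_of_nonneg_right (hbd ρ hρ u hu) (Real.exp_pos (-u)).le
    refine this.trans (le_of_eq ?_)
    ring
  have hlay : ∀ ρ, 0 < ρ →
      ∫⁻ x in Set.Ioc (0:ℝ) 1, ENNReal.ofReal (1 - Real.exp (-(ρ * x))) ∂ν =
      ∫⁻ u in Set.Ioi (0:ℝ), ENNReal.ofReal (N (u / ρ) * Real.exp (-u)) := by
    intro ρ hρ
    rw [layer ν ρ hρ]
    refine setLIntegral_congr_fun measurableSet_Ioi ?_
    intro t ht
    have ht0 : 0 < t := ht
    simp only [hNdef]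
    rw [ENNReal.ofReal_mul ENNReal.toReal_nonneg, ENNReal.ofReal_toReal (hfin _ (by positivity))]
  have hnn : ∀ ρ, 0 ≤ ρ → 0 ≤ᵐ[ν.restrict (Set.Ioc (0:ℝ) 1)]
      fun x => 1 - Real.exp (-(ρ * x)) := by
    intro ρ hρ
    filter_upwards [ae_restrict_mem measurableSet_Ioc] with x hx
    have : 0 ≤ ρ * x := mul_nonneg hρ hx.1.le
    simpa using this
  have hG : ∀ ρ, 0 < ρ → Gf (ν.restrict (Set.Ioc (0:ℝ) 1)) ρ =
      ∫ u in Set.Ioi (0:ℝ), N (u / ρ) * Real.exp (-u) := by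
    intro ρ hρ
    unfold Gf
    rw [integral_eq_lintegral_of_nonneg_ae (hnn ρ hρ.le) (by fun_prop), hlay ρ hρ,
      integral_eq_lintegral_of_nonneg_ae _ (hmeas ρ hρ)]
    exact ae_of_all _ fun u => mul_nonneg (hN0 _) (Real.exp_pos _).le
  constructor
  · have hi : Integrable (fun x => 1 - Real.exp (-(ρ0 * x))) (ν.restrict (Set.Ioc (0:ℝ) 1)) := by
      refine ⟨by fun_prop, ?_⟩
      rw [hasFiniteIntegral_iff_ofReal (hnn ρ0 (by linarith)), hlay ρ0 (by linarith)]
      have := (hNint ρ0 le_rfl).2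
      rwa [hasFiniteIntegral_iff_ofReal
        (ae_of_all _ fun u => mul_nonneg (hN0 _) (Real.exp_pos _).le)] at this
    refine (hi.const_mul 2).mono' (by fun_prop) ?_
    filter_upwards [ae_restrict_mem measurableSet_Ioc] with x hx
    rw [Real.norm_of_nonneg hx.1.le]
    have h1 : Real.exp (-(ρ0 * x)) ≤ Real.exp (-x) := by
      apply Real.exp_le_exp.2
      nlinarith [hx.1]
    have h2 : Real.exp (-x) ≤ 1 / (1 + x) := by
      rw [Real.exp_neg, one_div]
      apply inv_anti₀ (by linarith [hx.1])
      linarith [Real.add_one_le_exp x]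
    have h3 : 1 / (1 + x) ≤ 1 - x / 2 := by
      rw [div_le_iff₀ (by linarith [hx.1])]
      nlinarith [hx.1, hx.2]
    linarith
  · have hD : Tendsto (fun ρ => ∫ u in Set.Ioi (0:ℝ), N (u / ρ) * Real.exp (-u) / (ρ ^ α * ℓ ρ))
        atTop (nhds (∫ u in Set.Ioi (0:ℝ), Real.exp (-u) * u ^ ((1 - α) - 1))) := by
      refine tendsto_integral_filter_of_dominated_convergence
        (fun u => 2 ^ β * 2 * ((u ^ (-β) + 1) * Real.exp (-u))) ?_ ?_ (hdom.const_mul _) ?_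
      · filter_upwards [eventually_gt_atTop 0] with ρ hρ
        exact (hmeas ρ hρ).mul aestronglyMeasurable_const
      · filter_upwards [eventually_ge_atTop ρ0] with ρ hρ
        have hρp : 0 < ρ := by linarith
        have hg : 0 < ρ ^ α * ℓ ρ := mul_pos (by positivity) (hℓpos ρ hρp)
        have h2 := (hρ1 ρ ((le_max_left _ _).trans hρ)).2
        filter_upwards [ae_restrict_mem measurableSet_Ioi] with u hu
        have hu0 : 0 < u := hu
        have he := Real.exp_pos (-u)
        rw [Real.norm_of_nonneg (div_nonneg (mul_nonneg (hN0 _) he.le) hg.le), div_le_iff₀ hg]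
        have h3 : 0 < 2 ^ β * (u ^ (-β) + 1) := by positivity
        calc N (u / ρ) * Real.exp (-u)
            ≤ (2 ^ β * (u ^ (-β) + 1) * (2 * (ρ ^ α * ℓ ρ))) * Real.exp (-u) :=
              mul_le_mul_of_nonneg_right ((hbd ρ hρ u hu).trans
                (mul_le_mul_of_nonneg_left h2 h3.le)) he.le
          _ = _ := by ring
      · filter_upwards [ae_restrict_mem measurableSet_Ioi] with u hu
        have := (hNl u hu).const_mul (Real.exp (-u))
        rw [show 1 - α - 1 = -α by ring]
        refine this.congr fun ρ => ?_
        ring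
    rw [← Real.Gamma_eq_integral (by linarith)] at hD
    refine hD.congr' ?_
    filter_upwards [eventually_gt_atTop 0] with ρ hρ
    rw [hG ρ hρ, integral_div]

lemma G_facts (ℓ : ℝ → ℝ)
    (hℓpos : ∀ t : ℝ, 0 < t → 0 < ℓ t)
    (hℓsv : ∀ c : ℝ, 0 < c → Tendsto (fun t : ℝ => ℓ (c * t) / ℓ t) atTop (nhds 1))
    (α : ℝ) (hα0 : 0 < α) {γ : ℝ} (hγ : 0 < γ)
    {μ : Measure ℝ} (hμ : ∀ᵐ x ∂μ, x ∈ Set.Ioc (0:ℝ) 1) (hx : Integrable (fun x : ℝ => x) μ)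
    (hG : Tendsto (fun ρ => Gf μ ρ / (ρ ^ α * ℓ ρ)) atTop (nhds γ)) :
    (∀ c : ℝ, 0 < c → Tendsto (fun ρ => Gf μ (ρ * c) / Gf μ ρ) atTop (nhds (c ^ α))) ∧
    Tendsto (Gf μ) atTop atTop := by
  have hpos : ∀ᶠ ρ in atTop, 0 < Gf μ ρ := by
    filter_upwards [hG.eventually_const_lt hγ, eventually_gt_atTop 0] with ρ h1 h2
    have hg : 0 < ρ ^ α * ℓ ρ := mul_pos (by positivity) (hℓpos ρ h2)
    exact (div_pos_iff_of_pos_right hg).1 h1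
  have hreg : ∀ c : ℝ, 0 < c →
      Tendsto (fun ρ => Gf μ (ρ * c) / Gf μ ρ) atTop (nhds (c ^ α)) := by
    intro c hc
    have hm : Tendsto (fun ρ : ℝ => ρ * c) atTop atTop := tendsto_id.atTop_mul_const hc
    have h := (((hG.comp hm).div hG hγ.ne').mul (hℓsv c hc)).mul_const (c ^ α)
    rw [div_self hγ.ne', one_mul, one_mul] at h
    refine h.congr' ?_
    filter_upwards [hpos, eventually_gt_atTop 0] with ρ h1 h2
    have h3 := hℓpos ρ h2
    have h4 := hℓpos (c * ρ) (by positivity)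
    have h5 : 0 < c ^ α := by positivity
    have h6 : 0 < ρ ^ α := by positivity
    simp only [Function.comp, Pi.div_apply]
    rw [Real.mul_rpow h2.le hc.le, mul_comm ρ c]
    generalize ℓ (c * ρ) = w at h4 ⊢
    generalize Gf μ (c * ρ) = v
    field_simp
  refine ⟨hreg, ?_⟩
  have hm : Monotone (fun y => Gf μ (max y 0)) := fun a b hab =>
    Gf_mono hμ hx (le_max_right _ _) (max_le_max_right 0 hab)
  have heq : (fun y => Gf μ (max y 0)) =ᶠ[atTop] Gf μ := by
    filter_upwards [eventually_ge_atTop 0] with y hy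
    rw [max_eq_left hy]
  rcases tendsto_of_monotone hm with h | ⟨l, hl⟩
  · exact h.congr' heq
  · exfalso
    have hl' := hl.congr' heq
    obtain ⟨r, hr, hr0⟩ := (hpos.and (eventually_ge_atTop 0)).exists
    have hlpos : 0 < l := by
      refine hr.trans_le (ge_of_tendsto hl' ?_)
      filter_upwards [eventually_ge_atTop r] with y hy
      exact Gf_mono hμ hx hr0 hy
    have hm2 : Tendsto (fun ρ : ℝ => ρ * 2) atTop atTop := tendsto_id.atTop_mul_const (by norm_num)
    have h1 := (hl'.comp hm2).div hl' hlpos.ne'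
    have h2 := tendsto_nhds_unique h1 (hreg 2 (by norm_num))
    rw [div_self hlpos.ne'] at h2
    have := Real.one_lt_rpow (show (1:ℝ) < 2 by norm_num) hα0
    linarith

lemma Phi_pos {μ : Measure ℝ} (hμ : ∀ᵐ x ∂μ, x ∈ Set.Ioc (0:ℝ) 1) (hμ0 : μ ≠ 0)
    (hx : Integrable (fun x : ℝ => x) μ) {s : ℝ} (hs : 0 < s) :
    0 < ∫ x, (1 - (1 - x) ^ s) ∂μ := by
  have hb : ∀ x : ℝ, x ∈ Set.Ioc (0:ℝ) 1 → 0 < 1 - (1 - x) ^ s := fun x h => by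
    have := Real.rpow_lt_one (x := 1 - x) (by linarith [h.2]) (by linarith [h.1]) hs
    linarith
  obtain ⟨n, hn⟩ := exists_nat_ge (max s 1)
  have hn1 : (1:ℝ) ≤ n := (le_max_right _ _).trans hn
  have hint : Integrable (fun x => 1 - (1 - x) ^ s) μ := by
    refine (hx.const_mul (n:ℝ)).mono' (Measurable.aestronglyMeasurable (by fun_prop)) ?_
    filter_upwards [hμ] with x h
    rw [Real.norm_of_nonneg (hb x h).le]
    have h4 := one_add_mul_le_pow (a := -x) (by linarith [h.2]) n
    have h5 : (1 - x) ^ n ≤ (1 - x) ^ s := by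
      rcases h.2.eq_or_lt with h1 | h1
      · subst h1
        have : n ≠ 0 := by rintro rfl; norm_num at hn1
        simp [this, Real.zero_rpow hs.ne']
      · rw [← Real.rpow_natCast]
        exact Real.rpow_le_rpow_of_exponent_ge (by linarith) (by linarith [h.1])
          ((le_max_left _ _).trans hn)
    rw [← sub_eq_add_neg] at h4
    linarith
  rw [integral_pos_iff_support_of_nonneg_ae _ hint]
  · rw [pos_iff_ne_zero]
    intro h
    apply hμ0
    rw [← ae_eq_bot, ← empty_mem_iff_bot]
    have h' : ∀ᵐ x ∂μ, x ∉ Function.support (fun x : ℝ => 1 - (1 - x) ^ s) :=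
      measure_eq_zero_iff_ae_notMem.1 h
    filter_upwards [hμ, h'] with x h1 h2
    exact h2 (hb x h1).ne'
  · filter_upwards [hμ] with x h
    exact (hb x h).le

/-- Asymptotics of the factorial moments of the poissonized composition: if `ℓ` is
slowly varying at `∞`, `0 < α < 1`, `ν̃` is a nonzero measure on `(0,1]` with finite
tails and `ν̃([x,1]) x^α / ℓ(1/x) → 1` as `x ↓ 0`, `Φ(s) = ∫₀¹ (1-(1-x)^s) ν̃(dx)`,
and `f_0 ≡ 1, f_1, …, f_M` are nondecreasing nonnegative functions tending to `∞`
satisfying the integral recursion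
`∫₀¹ (f_m(ρ) - f_m(ρ(1-x))) ν̃(dx) = m ∫₀¹ (1-e^{-ρx}) f_{m-1}(ρ(1-x)) ν̃(dx)`,
then `f_M(ρ)/(ρ^α ℓ(ρ))^M → ∏_{j=1}^M (j Γ(1-α)/Φ(αj))`. -/
theorem factorial_moment_asymptotics (ℓ : ℝ → ℝ)
    (hℓpos : ∀ t : ℝ, 0 < t → 0 < ℓ t)
    (hℓsv : ∀ c : ℝ, 0 < c → Tendsto (fun t : ℝ => ℓ (c * t) / ℓ t) atTop (nhds 1))
    (α : ℝ) (hα0 : 0 < α) (hα1 : α < 1)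
    (ν : Measure ℝ) (hν : ν ≠ 0) (hsupp : ν (Set.Ioc (0 : ℝ) 1)ᶜ = 0)
    (hfin : ∀ x : ℝ, 0 < x → ν (Set.Icc x 1) ≠ ⊤)
    (hlim : Tendsto (fun x : ℝ => (ν (Set.Icc x 1)).toReal * x ^ α / ℓ (1 / x))
      (nhdsWithin 0 (Set.Ioi 0)) (nhds 1))
    (M : ℕ) (hM : 1 ≤ M) (f : ℕ → ℝ → ℝ)
    (hf0 : ∀ ρ : ℝ, 0 < ρ → f 0 ρ = 1)
    (hnonneg : ∀ m : ℕ, m ≤ M → ∀ ρ : ℝ, 0 < ρ → 0 ≤ f m ρ)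
    (hmono : ∀ m : ℕ, m ≤ M → MonotoneOn (f m) (Set.Ioi (0 : ℝ)))
    (hinfty : ∀ m : ℕ, 1 ≤ m → m ≤ M → Tendsto (f m) atTop atTop)
    (hrec : ∀ m : ℕ, 1 ≤ m → m ≤ M → ∀ ρ : ℝ, 0 < ρ →
      IntegrableOn (fun x : ℝ => f m ρ - f m (ρ * (1 - x))) (Set.Ioc (0 : ℝ) 1) ν ∧
      IntegrableOn (fun x : ℝ => (1 - Real.exp (-(ρ * x))) * f (m - 1) (ρ * (1 - x)))
        (Set.Ioc (0 : ℝ) 1) ν ∧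
      ∫ x in Set.Ioc (0 : ℝ) 1, (f m ρ - f m (ρ * (1 - x))) ∂ν =
        m * ∫ x in Set.Ioc (0 : ℝ) 1,
          (1 - Real.exp (-(ρ * x))) * f (m - 1) (ρ * (1 - x)) ∂ν) :
    Tendsto (fun ρ : ℝ => f M ρ / (ρ ^ α * ℓ ρ) ^ M) atTop
      (nhds (∏ j ∈ Finset.Icc 1 M,
        ((j : ℝ) * Real.Gamma (1 - α) /
          ∫ x in Set.Ioc (0 : ℝ) 1, (1 - (1 - x) ^ (α * (j : ℝ))) ∂ν))) := by
  set μ := ν.restrict (Set.Ioc (0:ℝ) 1) with hμdef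
  have hμ : ∀ᵐ x ∂μ, x ∈ Set.Ioc (0:ℝ) 1 := ae_restrict_mem measurableSet_Ioc
  have hμ0 : μ ≠ 0 := by
    intro h
    rw [hμdef, Measure.restrict_eq_zero] at h
    apply hν
    rw [← Measure.measure_univ_eq_zero, ← Set.union_compl_self (Set.Ioc (0:ℝ) 1)]
    exact measure_union_null h hsupp
  obtain ⟨hx, hG⟩ := abel ℓ hℓpos hℓsv α hα0 hα1 ν hfin hlim
  have hΓ : 0 < Real.Gamma (1 - α) := Real.Gamma_pos_of_pos (by linarith)
  obtain ⟨hreg, hGinf⟩ := G_facts ℓ hℓpos hℓsv α hα0 hΓ hμ hx hG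
  have hev := hGinf.eventually_gt_atTop 0
  set F : ℕ → ℝ → ℝ := fun m ρ => if 0 < ρ then f m ρ else 0 with hFdef
  have hFpos : ∀ m ρ, 0 < ρ → F m ρ = f m ρ := fun m ρ h => if_pos h
  have hFz : ∀ m, F m 0 = 0 := fun m => if_neg (lt_irrefl _)
  have hF0 : ∀ m ≤ M, ∀ ρ, 0 ≤ F m ρ := by
    intro m hm ρ
    simp only [hFdef]
    split_ifs with h
    · exact hnonneg m hm ρ h
    · exact le_rfl
  have hFm : ∀ m ≤ M, Monotone (F m) := by
    intro m hm a b hab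
    rcases le_or_gt a 0 with ha | ha
    · have : F m a = 0 := if_neg (not_lt.2 ha)
      rw [this]
      exact hF0 m hm b
    · rw [hFpos m a ha, hFpos m b (ha.trans_le hab)]
      exact hmono m hm ha (ha.trans_le hab : 0 < b) hab
  set I1 : ℝ → ℝ := Set.indicator {1} 1 with hI1
  have hI1int : Integrable I1 μ := by
    rw [hI1, integrable_indicator_iff (measurableSet_singleton 1)]
    refine integrableOn_const (C := (1:ℝ)) ?_
    refine ne_top_of_le_ne_top (hfin 1 one_pos) ((Measure.restrict_apply_le _ _).trans ?_)
    simp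
  set q := ∫ x, I1 x ∂μ with hq
  have hconvF : ∀ m ρ, 0 < ρ → ∀ x ∈ Set.Ioc (0:ℝ) 1,
      F m (ρ * (1 - x)) = f m (ρ * (1 - x)) - f m 0 * I1 x := by
    intro m ρ hρ x hx1
    rcases hx1.2.eq_or_lt with h | h
    · subst h
      simp [hFz, hI1]
    · rw [hFpos m _ (mul_pos hρ (by linarith))]
      simp [hI1, h.ne]
  have key : ∀ m, m ≤ M → Tendsto (fun ρ => F m ρ / Gf μ ρ ^ m) atTop
      (nhds (∏ j ∈ Finset.Icc 1 m, ((j : ℝ) / ∫ x, (1 - (1 - x) ^ (α * (j : ℝ))) ∂μ))) := by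
    intro m
    induction m with
    | zero =>
      intro _
      simp only [pow_zero, div_one]
      rw [Finset.Icc_eq_empty (by norm_num), Finset.prod_empty]
      refine tendsto_const_nhds.congr' ?_
      filter_upwards [eventually_gt_atTop 0] with ρ hρ
      rw [hFpos 0 ρ hρ, hf0 ρ hρ]
    | succ m ih =>
      intro hm
      have hm' : m ≤ M := by omega
      have ih := ih hm'
      rw [Finset.prod_Icc_succ_top (by omega)]
      set C := ∏ j ∈ Finset.Icc 1 m, ((j : ℝ) / ∫ x, (1 - (1 - x) ^ (α * (j : ℝ))) ∂μ) with hCdef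
      have hC : 0 ≤ C := by
        refine ge_of_tendsto ih ?_
        filter_upwards [hev] with ρ h
        exact div_nonneg (hF0 m hm' ρ) (by positivity)
      have hΦ : 0 < ∫ x, (1 - (1 - x) ^ (α * ((m + 1 : ℕ) : ℝ))) ∂μ :=
        Phi_pos hμ hμ0 hx (by positivity)
      have hA : ∀ ρ, 0 < ρ → Integrable (fun x => F (m + 1) ρ - F (m + 1) (ρ * (1 - x))) μ ∧
          ∫ x, (F (m + 1) ρ - F (m + 1) (ρ * (1 - x))) ∂μ =
            ∫ x, (f (m + 1) ρ - f (m + 1) (ρ * (1 - x))) ∂μ + f (m + 1) 0 * q := by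
        intro ρ hρ
        have h1 := (hrec (m + 1) (by omega) hm ρ hρ).1
        have h2 : (fun x => F (m + 1) ρ - F (m + 1) (ρ * (1 - x))) =ᵐ[μ]
            fun x => (f (m + 1) ρ - f (m + 1) (ρ * (1 - x))) + f (m + 1) 0 * I1 x := by
          filter_upwards [hμ] with x hx1
          rw [hconvF _ ρ hρ x hx1, hFpos _ ρ hρ]
          ring
        constructor
        · exact (Integrable.add h1 (hI1int.const_mul _)).congr h2.symm
        · rw [integral_congr_ae h2, integral_add h1 (hI1int.const_mul _), integral_const_mul]
      have hB : ∀ ρ, 0 < ρ →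
          Integrable (fun x => (1 - Real.exp (-(ρ * x))) * F m (ρ * (1 - x))) μ ∧
          ∫ x, (1 - Real.exp (-(ρ * x))) * F m (ρ * (1 - x)) ∂μ =
            ∫ x, (1 - Real.exp (-(ρ * x))) * f m (ρ * (1 - x)) ∂μ
              - (1 - Real.exp (-ρ)) * f m 0 * q := by
        intro ρ hρ
        have h1 := (hrec (m + 1) (by omega) hm ρ hρ).2.1
        rw [Nat.add_sub_cancel] at h1
        have h2 : (fun x => (1 - Real.exp (-(ρ * x))) * F m (ρ * (1 - x))) =ᵐ[μ]
            fun x => (1 - Real.exp (-(ρ * x))) * f m (ρ * (1 - x))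
              - (1 - Real.exp (-ρ)) * f m 0 * I1 x := by
          filter_upwards [hμ] with x hx1
          rw [hconvF _ ρ hρ x hx1]
          rcases hx1.2.eq_or_lt with h | h
          · subst h
            rw [mul_one]
            ring
          · have : I1 x = 0 := by simp [hI1, h.ne]
            rw [this]
            ring
        constructor
        · exact (Integrable.sub h1 (hI1int.const_mul _)).congr h2.symm
        · rw [integral_congr_ae h2, integral_sub h1 (hI1int.const_mul _), integral_const_mul]
      have hstep := abel_step hμ hx hGinf hreg m (F m) (hFm m hm') (hF0 m hm')
        (fun ρ hρ => (hB ρ hρ).1) C ih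
      have hhinf : Tendsto (fun ρ => Gf μ ρ ^ (m + 1)) atTop atTop :=
        (tendsto_pow_atTop (by omega)).comp hGinf
      have hexp : Tendsto (fun ρ : ℝ => 1 - Real.exp (-ρ)) atTop (nhds (1 - 0)) :=
        (Real.tendsto_exp_neg_atTop_nhds_zero).const_sub 1
      have hrem : Tendsto (fun ρ : ℝ => ((m + 1 : ℕ) : ℝ) * (1 - Real.exp (-ρ)) *
          (f m 0 * q / Gf μ ρ ^ (m + 1)) + f (m + 1) 0 * q / Gf μ ρ ^ (m + 1)) atTop
          (nhds (((m + 1 : ℕ) : ℝ) * (1 - 0) * 0 + 0)) :=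
        ((hexp.const_mul _).mul (hhinf.const_div_atTop _)).add (hhinf.const_div_atTop _)
      have hR : Tendsto (fun ρ => (∫ x, (F (m + 1) ρ - F (m + 1) (ρ * (1 - x))) ∂μ)
          / Gf μ ρ ^ (m + 1)) atTop (nhds (((m + 1 : ℕ) : ℝ) * C)) := by
        have h := (hstep.const_mul ((m + 1 : ℕ) : ℝ)).add hrem
        rw [mul_zero, add_zero, add_zero] at h
        refine h.congr' ?_
        filter_upwards [eventually_gt_atTop 0] with ρ hρ
        have h3 := (hrec (m + 1) (by omega) hm ρ hρ).2.2
        rw [Nat.add_sub_cancel] at h3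
        rw [(hA ρ hρ).2, h3, (hB ρ hρ).2]
        ring
      have := taub hμ hx hα0 hGinf hreg (m + 1) (by omega) (F (m + 1)) (hFm _ hm) (hFz _)
        (fun ρ hρ => (hA ρ hρ).1) hΦ _ (by positivity) hR
      rwa [mul_comm, mul_div_assoc] at this
  have hfinal := (key M le_rfl).mul (hG.pow M)
  have hprod : (∏ j ∈ Finset.Icc 1 M, ((j : ℝ) / ∫ x, (1 - (1 - x) ^ (α * (j : ℝ))) ∂μ)) *
      Real.Gamma (1 - α) ^ M = ∏ j ∈ Finset.Icc 1 M,
        ((j : ℝ) * Real.Gamma (1 - α) / ∫ x, (1 - (1 - x) ^ (α * (j : ℝ))) ∂μ) := by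
    have : Real.Gamma (1 - α) ^ M = ∏ j ∈ Finset.Icc 1 M, Real.Gamma (1 - α) := by simp
    rw [this, ← Finset.prod_mul_distrib]
    refine Finset.prod_congr rfl fun j _ => ?_
    ring
  rw [hprod] at hfinal
  refine hfinal.congr' ?_
  filter_upwards [hev, eventually_gt_atTop 0] with ρ h1 h2
  rw [hFpos M ρ h2, div_pow]
  have h3 : 0 < Gf μ ρ ^ M := by positivity
  rw [div_mul_div_comm, mul_comm (f M ρ), mul_div_mul_left _ _ h3.ne']
end
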